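/- Let d > 1 and let α be a faithful, strongly irreducible ℤ^d-action by automorphisms of 𝕋^n. Let μ be an α-invariant and α-ergodic Borel probability measure on 𝕋^n, and suppose that for some 𝐧 ∈ ℤ^d the entropy h_μ(α_𝐧) is positive. Then μ is Lebesgue measure on 𝕋^n. -/

import Mathlib

/-!
Suppose `μ` is not Lebesgue measure, so that some Fourier coefficient of `μ` at a frequency `ξ ≠ 0`
is nonzero; then every `α v` has entropy zero. Over `ℂ` the action is diagonalised by characters
`χ i`, and `v ↦ log₂ ‖χ i v‖` extends to a linear map `lyapunov χ : ℝ ^ d → ℝ ^ N`. Let `G ρ` be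
the entropy of the partition of the torus into cells of size `2 ^ (-ρ i)` in the `i`-th
eigencoordinate. It is monotone and submodular, and invariance of `μ` makes it invariant, up to a
bounded error, under translation by `lyapunov χ t`. Hence `p t = lim G (lyapunov χ (n t)) / n`
exists, and `p v` controls the entropy of `α v`.

By ergodicity, for most points the average of the character `ξ` along long stretches of an orbit is
close to its mean, hence far from `0`. Along a direction in which the coordinates neutral for `w`
and expanded by `u` move slowly, the large sieve shows that a non-vanishing average leaves only few
possibilities for these coordinates at the finer scale: refining `G` in the directions
`neutralUnstable (lyapunov χ) w u` costs arbitrarily little. Together with submodularity this makes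
`s ↦ p (t + s • u)` locally concave on every line that avoids the origin. Being nonnegative, it is
constant, and since `d ≥ 2` such lines exist in every direction, which forces `p = 0`.
-/

open MeasureTheory ENNReal

section Entropy

variable {α : Type*} [MeasurableSpace α]

/-- `P : Fin m → Set α` is a finite measurable partition of `α` modulo `μ`-null sets. -/
def IsFinMeasPartition (μ : Measure α) {m : ℕ} (P : Fin m → Set α) : Prop :=
  (∀ i, MeasurableSet (P i)) ∧ Pairwise (Function.onFun Disjoint P) ∧ μ (⋃ i, P i)ᶜ = 0

/-- Shannon entropy (information) of a finite family of sets with respect to `μ`. -/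
noncomputable def finPartitionEntropy (μ : Measure α) {ι : Type*} [Fintype ι]
    (P : ι → Set α) : ℝ≥0∞ :=
  ENNReal.ofReal (∑ i, Real.negMulLog ((μ (P i)).toReal))

/-- The common refinement `P ∨ T⁻¹ P ∨ ⋯ ∨ T^{-(n-1)} P`, indexed by `Fin n → Fin m`. -/
def refinedPartition (T : α → α) {m : ℕ} (P : Fin m → Set α) (n : ℕ) :
    (Fin n → Fin m) → Set α :=
  fun f => ⋂ i : Fin n, T^[(i : ℕ)] ⁻¹' P (f i)

/-- The measure-theoretic (Kolmogorov–Sinai) entropy `h_μ(T)` of a transformation `T`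
preserving `μ`, defined as the supremum over all finite measurable partitions `P` of
`inf_n H_μ(P ∨ T⁻¹P ∨ ⋯ ∨ T^{-n}P)/(n+1)` (by subadditivity this infimum equals the
usual limit). -/
noncomputable def ksEntropy (T : α → α) (μ : Measure α) : ℝ≥0∞ :=
  ⨆ (m : ℕ) (P : Fin m → Set α) (_ : IsFinMeasPartition μ P),
    ⨅ n : ℕ, finPartitionEntropy μ (refinedPartition T P (n + 1)) / (n + 1 : ℝ≥0∞)

end Entropy

open MeasureTheory

/-- The endomorphism of the torus `𝕋^n = (ℝ/ℤ)^n` induced by an integer matrix `A`. -/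
noncomputable def toralMap {N : ℕ} (A : Matrix (Fin N) (Fin N) ℤ)
    (x : Fin N → UnitAddCircle) : Fin N → UnitAddCircle :=
  fun i => ∑ j, A i j • x j

/-- A `ℤ^d`-action `α` by toral automorphisms is irreducible when restricted to a
subgroup `Λ ≤ ℤ^d` if every closed `Λ`-invariant proper subgroup of the torus is
finite. -/
def IsIrreducibleOn {d N : ℕ} (α : (Fin d → ℤ) → Matrix (Fin N) (Fin N) ℤ)
    (Λ : AddSubgroup (Fin d → ℤ)) : Prop :=
  ∀ S : AddSubgroup (Fin N → UnitAddCircle), IsClosed (S : Set (Fin N → UnitAddCircle)) →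
    (∀ v ∈ Λ, ∀ x ∈ S, toralMap (α v) x ∈ S) → S ≠ ⊤ →
    (S : Set (Fin N → UnitAddCircle)).Finite

section Entropy

variable {Ω β γ δ : Type*} [MeasurableSpace Ω] {μ : Measure Ω}

/-- The Shannon entropy of an observable with finitely many values: the entropy of its partition
into level sets. -/
noncomputable def entropy (μ : Measure Ω) (X : SimpleFunc Ω β) : ℝ :=
  ∑ b ∈ X.range, Real.negMulLog (μ.real (X ⁻¹' {b}))

/-- The conditional entropy `H(X | Y)`, in nats. -/
noncomputable def condEntropy (μ : Measure Ω) (X : SimpleFunc Ω β) (Y : SimpleFunc Ω γ) : ℝ :=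
  entropy μ (X.pair Y) - entropy μ Y

theorem measureReal_fiber_eq_zero {X : SimpleFunc Ω β} {b : β} (hb : b ∉ X.range) :
    μ.real (X ⁻¹' {b}) = 0 := by
  rw [SimpleFunc.preimage_eq_empty_iff X b |>.2 hb, measureReal_empty]

theorem entropy_eq_sum_of_range_subset {X : SimpleFunc Ω β} {s : Finset β} (hs : X.range ⊆ s) :
    entropy μ X = ∑ b ∈ s, Real.negMulLog (μ.real (X ⁻¹' {b})) :=
  Finset.sum_subset hs fun b _ hb => by rw [measureReal_fiber_eq_zero hb, Real.negMulLog_zero]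

variable [IsProbabilityMeasure μ]

theorem integrable_simpleFunc_comp (X : SimpleFunc Ω β) (φ : β → ℝ) :
    Integrable (fun x => φ (X x)) μ :=
  (X.map φ).integrable_of_isFiniteMeasure

theorem integral_simpleFunc_comp (X : SimpleFunc Ω β) (φ : β → ℝ) :
    ∫ x, φ (X x) ∂μ = ∑ b ∈ X.range, μ.real (X ⁻¹' {b}) * φ b := by
  classical
  have hφ : (fun x => φ (X x)) =
      fun x => ∑ b ∈ X.range, (X ⁻¹' {b}).indicator (fun _ => φ b) x := by
    ext x
    rw [Finset.sum_eq_single (X x)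
      (fun b _ hb => Set.indicator_of_notMem (s := X ⁻¹' {b}) hb.symm _)
      (fun hx => absurd (X.mem_range_self x) hx)]
    exact (Set.indicator_of_mem (s := X ⁻¹' {X x}) rfl fun _ => φ (X x)).symm
  rw [hφ, integral_finsetSum]
  · exact Finset.sum_congr rfl fun b _ => integral_indicator_const _ (X.measurableSet_preimage _)
  · exact fun b _ => (integrable_const _).indicator (X.measurableSet_preimage _)

theorem sum_measureReal_fiber (X : SimpleFunc Ω β) : ∑ b ∈ X.range, μ.real (X ⁻¹' {b}) = 1 := by
  simpa using (integral_simpleFunc_comp (μ := μ) X fun _ => 1).symm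

theorem entropy_eq_integral (X : SimpleFunc Ω β) :
    entropy μ X = ∫ x, -Real.log (μ.real (X ⁻¹' {X x})) ∂μ := by
  rw [integral_simpleFunc_comp X fun b => -Real.log (μ.real (X ⁻¹' {b}))]
  exact Finset.sum_congr rfl fun b _ => by rw [Real.negMulLog]; ring

theorem entropy_nonneg (X : SimpleFunc Ω β) : 0 ≤ entropy μ X :=
  Finset.sum_nonneg fun _ _ => Real.negMulLog_nonneg measureReal_nonneg measureReal_le_one

theorem ae_measureReal_fiber_pos (X : SimpleFunc Ω β) : ∀ᵐ x ∂μ, 0 < μ.real (X ⁻¹' {X x}) := by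
  have hsub : {x | ¬ 0 < μ.real (X ⁻¹' {X x})} ⊆
      ⋃ b ∈ {b ∈ X.range | ¬ 0 < μ.real (X ⁻¹' {b})}, X ⁻¹' {b} := fun x hx => by
    simpa using hx
  refine measure_mono_null hsub ((measure_biUnion_null_iff (Finset.countable_toSet _)).2 ?_)
  intro b hb
  have hb0 := (Finset.mem_filter.1 hb).2
  exact (measureReal_eq_zero_iff).1 (le_antisymm (not_lt.1 hb0) measureReal_nonneg)

/-- Gibbs' inequality. -/
theorem entropy_le_integral_neg_log (X : SimpleFunc Ω β) {q : β → ℝ} (hq0 : ∀ b, 0 ≤ q b)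
    (hq : ∀ᵐ x ∂μ, 0 < q (X x)) (hsum : ∑ b ∈ X.range, q b ≤ 1) :
    entropy μ X ≤ ∫ x, -Real.log (q (X x)) ∂μ := by
  let p : β → ℝ := fun b => μ.real (X ⁻¹' {b})
  have hip := integrable_simpleFunc_comp (μ := μ) X fun b => -Real.log (p b)
  have hiq := integrable_simpleFunc_comp (μ := μ) X fun b => -Real.log (q b)
  have hiqp := integrable_simpleFunc_comp (μ := μ) X fun b => q b / p b
  have hlog : ∀ᵐ x ∂μ, -Real.log (p (X x)) - -Real.log (q (X x)) ≤ q (X x) / p (X x) - 1 := by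
    filter_upwards [hq, ae_measureReal_fiber_pos X] with x hqx hpx
    have := Real.log_le_sub_one_of_pos (div_pos hqx hpx)
    rw [Real.log_div hqx.ne' hpx.ne'] at this
    linarith
  have hratio : ∫ x, q (X x) / p (X x) ∂μ ≤ 1 := by
    rw [integral_simpleFunc_comp X fun b => q b / p b]
    refine (Finset.sum_le_sum fun b _ => ?_).trans hsum
    change p b * (q b / p b) ≤ q b
    by_cases hb : p b = 0
    · rw [hb, zero_mul]; exact hq0 b
    · rw [mul_div_cancel₀ _ hb]
  have hint := integral_mono_ae (hip.sub hiq) (hiqp.sub (integrable_const _)) hlog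
  rw [integral_sub' hip hiq, integral_sub' hiqp (integrable_const _)] at hint
  have hentropy : entropy μ X = ∫ x, -Real.log (p (X x)) ∂μ := entropy_eq_integral X
  simp only [integral_const, probReal_univ, one_smul] at hint
  linarith

theorem entropy_map_le (X : SimpleFunc Ω β) (f : β → γ) : entropy μ (X.map f) ≤ entropy μ X := by
  rw [entropy_eq_integral, entropy_eq_integral]
  refine integral_mono_ae
    (integrable_simpleFunc_comp (X.map f) fun b => -Real.log (μ.real (X.map f ⁻¹' {b})))
    (integrable_simpleFunc_comp X fun b => -Real.log (μ.real (X ⁻¹' {b}))) ?_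
  filter_upwards [ae_measureReal_fiber_pos X] with x hx
  refine neg_le_neg (Real.log_le_log hx (measureReal_mono fun y (hy : X y = X x) => ?_))
  exact congrArg f hy

theorem sum_measureReal_fiber_filter [DecidableEq γ] (X : SimpleFunc Ω β) (f : β → γ) (c : γ) :
    ∑ b ∈ X.range with f b = c, μ.real (X ⁻¹' {b}) = μ.real (X.map f ⁻¹' {c}) := by
  have hfiber : X.map f ⁻¹' {c} = ⋃ b ∈ X.range.filter (f · = c), X ⁻¹' {b} := by
    ext x; simp
  rw [hfiber, measureReal_biUnion_finset
    (fun a _ b _ hab => (Set.disjoint_singleton.2 hab).preimage _)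
    fun b _ => X.measurableSet_preimage _]

theorem range_pair_subset (X : SimpleFunc Ω β) (Y : SimpleFunc Ω γ) :
    (X.pair Y).range ⊆ X.range ×ˢ Y.range := fun w hw => by
  obtain ⟨x, rfl⟩ := SimpleFunc.mem_range.1 hw
  exact Finset.mk_mem_product (X.mem_range_self x) (Y.mem_range_self x)

/-- Gibbs' inequality for conditional entropy: the law of `X` given `Y = c` is compared with the
subprobability weights `r c`. -/
theorem condEntropy_le_integral_neg_log (X : SimpleFunc Ω β) (Y : SimpleFunc Ω γ)
    {r : γ → β → ℝ} (hr0 : ∀ c b, 0 ≤ r c b) (hr : ∀ᵐ x ∂μ, 0 < r (Y x) (X x))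
    (hsum : ∀ c, ∑ b ∈ X.range, r c b ≤ 1) :
    condEntropy μ X Y ≤ ∫ x, -Real.log (r (Y x) (X x)) ∂μ := by
  let p : γ → ℝ := fun c => μ.real (Y ⁻¹' {c})
  have hp (c) : 0 ≤ p c := measureReal_nonneg
  let q : β × γ → ℝ := fun w => p w.2 * r w.2 w.1
  have hq0 (w) : 0 ≤ q w := mul_nonneg (hp _) (hr0 _ _)
  have hpos : ∀ᵐ x ∂μ, 0 < p (Y x) ∧ 0 < r (Y x) (X x) := (ae_measureReal_fiber_pos Y).and hr
  have hqsum : ∑ w ∈ (X.pair Y).range, q w ≤ 1 := calc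
    ∑ w ∈ (X.pair Y).range, q w ≤ ∑ w ∈ X.range ×ˢ Y.range, q w :=
      Finset.sum_le_sum_of_subset_of_nonneg (range_pair_subset X Y) fun w _ _ => hq0 w
    _ = ∑ c ∈ Y.range, p c * ∑ b ∈ X.range, r c b := by
      simp only [Finset.sum_product_right, Finset.mul_sum, q]
    _ ≤ ∑ c ∈ Y.range, p c :=
      Finset.sum_le_sum fun c _ => mul_le_of_le_one_right (hp c) (hsum c)
    _ = 1 := sum_measureReal_fiber Y
  have hgibbs : entropy μ (X.pair Y) ≤ ∫ x, -Real.log (q (X x, Y x)) ∂μ :=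
    entropy_le_integral_neg_log (X.pair Y) hq0 (hpos.mono fun x hx => mul_pos hx.1 hx.2) hqsum
  have hlog : ∫ x, -Real.log (q (X x, Y x)) ∂μ =
      entropy μ Y + ∫ x, -Real.log (r (Y x) (X x)) ∂μ := by
    have hir : Integrable (fun x => -Real.log (r (Y x) (X x))) μ :=
      integrable_simpleFunc_comp (X.pair Y) fun w => -Real.log (r w.2 w.1)
    rw [entropy_eq_integral, ← integral_add
      (integrable_simpleFunc_comp Y fun c => -Real.log (p c)) hir]
    refine integral_congr_ae (hpos.mono fun x hx => ?_)
    change -Real.log (p (Y x) * r (Y x) (X x)) =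
      -Real.log (p (Y x)) + -Real.log (r (Y x) (X x))
    rw [Real.log_mul hx.1.ne' hx.2.ne', neg_add]
  rw [condEntropy]
  linarith

/-- Compare the law of `X` given `Y` with its law given the common factor of `X` and `Y`. -/
theorem entropy_pair_add_entropy_map_le (X : SimpleFunc Ω β) (Y : SimpleFunc Ω γ) (f : β → δ)
    (g : γ → δ) (hfg : ∀ x, f (X x) = g (Y x)) :
    entropy μ (X.pair Y) + entropy μ (X.map f) ≤ entropy μ X + entropy μ Y := by
  classical
  let Z := X.map f
  let p : β → ℝ := fun b => μ.real (X ⁻¹' {b})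
  let pZ : δ → ℝ := fun e => μ.real (Z ⁻¹' {e})
  let r : γ → β → ℝ := fun c b => if f b = g c then p b / pZ (g c) else 0
  have hr (x) : r (Y x) (X x) = p (X x) / pZ (Z x) := by
    rw [show Z x = g (Y x) from hfg x]
    exact if_pos (hfg x)
  have hr0 (c b) : 0 ≤ r c b := by
    dsimp only [r]
    split_ifs
    exacts [div_nonneg measureReal_nonneg measureReal_nonneg, le_rfl]
  have hpos : ∀ᵐ x ∂μ, 0 < p (X x) ∧ 0 < pZ (Z x) :=
    (ae_measureReal_fiber_pos X).and (ae_measureReal_fiber_pos Z)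
  have hsum (c) : ∑ b ∈ X.range, r c b ≤ 1 := by
    dsimp only [r]
    rw [← Finset.sum_filter, ← Finset.sum_div,
      show ∑ b ∈ X.range with f b = g c, p b = pZ (g c) from sum_measureReal_fiber_filter X f _]
    exact div_self_le_one _
  have hcond := condEntropy_le_integral_neg_log (μ := μ) X Y hr0
    (hpos.mono fun x hx => hr x ▸ div_pos hx.1 hx.2) hsum
  have hlog : ∫ x, -Real.log (r (Y x) (X x)) ∂μ = entropy μ X - entropy μ Z := by
    rw [entropy_eq_integral, entropy_eq_integral, ← integral_sub
      (integrable_simpleFunc_comp X fun b => -Real.log (p b))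
      (integrable_simpleFunc_comp Z fun e => -Real.log (pZ e))]
    refine integral_congr_ae (hpos.mono fun x hx => ?_)
    change -Real.log (r (Y x) (X x)) = -Real.log (p (X x)) - -Real.log (pZ (Z x))
    rw [hr, Real.log_div hx.1.ne' hx.2.ne']
    ring
  rw [condEntropy] at hcond
  linarith

theorem entropy_le_add_condEntropy (X : SimpleFunc Ω β) (Y : SimpleFunc Ω γ) :
    entropy μ X ≤ entropy μ Y + condEntropy μ X Y := by
  have := entropy_map_le (μ := μ) (X.pair Y) Prod.fst
  rw [SimpleFunc.map_fst_pair] at this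
  rw [condEntropy]
  linarith

theorem condEntropy_le_condEntropy_map (X : SimpleFunc Ω β) (Y : SimpleFunc Ω γ) (f : γ → δ) :
    condEntropy μ X Y ≤ condEntropy μ X (Y.map f) := by
  have hmap := entropy_map_le (μ := μ) ((X.pair (Y.map f)).pair Y) fun w => (w.1.1, w.2)
  have hsub := entropy_pair_add_entropy_map_le (μ := μ) (X.pair (Y.map f)) Y Prod.snd f
    fun _ => rfl
  have hpair : ((X.pair (Y.map f)).pair Y).map (fun w => (w.1.1, w.2)) = X.pair Y := rfl
  have hsnd : (X.pair (Y.map f)).map Prod.snd = Y.map f := rfl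
  rw [hpair] at hmap
  rw [hsnd] at hsub
  rw [condEntropy, condEntropy]
  linarith

theorem condEntropy_pair_le (X : SimpleFunc Ω β) (Y : SimpleFunc Ω γ) (Z : SimpleFunc Ω δ) :
    condEntropy μ (X.pair Y) Z ≤ condEntropy μ X (Y.pair Z) + condEntropy μ Y Z := by
  have := entropy_map_le (μ := μ) (X.pair (Y.pair Z)) fun w => ((w.1, w.2.1), w.2.2)
  have hpair : (X.pair (Y.pair Z)).map (fun w => ((w.1, w.2.1), w.2.2)) = (X.pair Y).pair Z := rfl
  rw [hpair] at this
  simp only [condEntropy]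
  linarith

theorem condEntropy_map_le (X : SimpleFunc Ω β) (Y : SimpleFunc Ω γ) (f : β → δ) :
    condEntropy μ (X.map f) Y ≤ condEntropy μ X Y :=
  sub_le_sub_right (entropy_map_le (X.pair Y) fun w => (f w.1, w.2)) _

/-- Compare the law of `X` given `Y` with the uniform one. -/
theorem condEntropy_le_integral_log_ncard (X : SimpleFunc Ω β) (Y : SimpleFunc Ω γ) :
    condEntropy μ X Y ≤ ∫ x, Real.log (X '' (Y ⁻¹' {Y x})).ncard ∂μ := by
  classical
  let S : γ → Finset β := fun c => {b ∈ X.range | b ∈ X '' (Y ⁻¹' {c})}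
  have hS (c) : (S c : Set β) = X '' (Y ⁻¹' {c}) := by
    ext b
    simpa [S] using fun x _ hx => ⟨x, hx⟩
  have hmem (x) : X x ∈ S (Y x) := Finset.mem_coe.1 (hS _ ▸ ⟨x, rfl, rfl⟩)
  let r : γ → β → ℝ := fun c b => if b ∈ S c then ((S c).card : ℝ)⁻¹ else 0
  have hr (x) : r (Y x) (X x) = ((S (Y x)).card : ℝ)⁻¹ := if_pos (hmem x)
  have hcond := condEntropy_le_integral_neg_log (μ := μ) X Y (r := r)
    (fun c b => by
      dsimp only [r]
      split_ifs
      exacts [inv_nonneg.2 (Nat.cast_nonneg _), le_rfl])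
    (.of_forall fun x => by
      rw [hr]
      exact inv_pos.2 (Nat.cast_pos.2 (Finset.card_pos.2 ⟨_, hmem x⟩)))
    fun c => by
      dsimp only [r]
      rw [Finset.sum_ite_mem, Finset.inter_eq_right.2 (Finset.filter_subset _ _),
        Finset.sum_const, nsmul_eq_mul]
      exact mul_inv_le_one
  simpa only [hr, Real.log_inv, neg_neg, ← hS, Set.ncard_coe_finset] using hcond

theorem condEntropy_le_log_of_ncard_le {X : SimpleFunc Ω β} {Y : SimpleFunc Ω γ} {C : ℕ}
    (hC : ∀ c, (X '' (Y ⁻¹' {c})).ncard ≤ C) : condEntropy μ X Y ≤ Real.log C := by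
  refine (condEntropy_le_integral_log_ncard X Y).trans ?_
  have hle := integral_mono (μ := μ)
    (integrable_simpleFunc_comp Y fun c => Real.log (X '' (Y ⁻¹' {c})).ncard)
    (integrable_const (Real.log C)) fun x => Real.log_le_log (Nat.cast_pos.2 <|
      (Set.ncard_pos (X.finite_range.subset (Set.image_subset_range _ _))).2 ⟨X x, x, rfl, rfl⟩)
      (Nat.cast_le.2 (hC _))
  simpa using hle

/-- Condition on `Y` together with the indicator of `Q`. -/
theorem condEntropy_le_of_ncard_inter_le {X : SimpleFunc Ω β} {Y : SimpleFunc Ω γ} {Q : Set Ω}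
    (hQ : MeasurableSet Q) {C L : ℕ} (hC : ∀ c, (X '' (Q ∩ Y ⁻¹' {c})).ncard ≤ C)
    (hL : ∀ c, (X '' (Y ⁻¹' {c})).ncard ≤ L) :
    condEntropy μ X Y ≤ Real.log 2 + (Real.log C + μ.real Qᶜ * Real.log L) := by
  classical
  let I : SimpleFunc Ω Bool :=
    SimpleFunc.piecewise Q hQ (SimpleFunc.const Ω true) (SimpleFunc.const Ω false)
  have hI (x) : I x = true ↔ x ∈ Q := by
    by_cases hx : x ∈ Q <;> simp [I, hx]
  have hIY : condEntropy μ I Y ≤ Real.log 2 := by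
    have hcard (c) : (I '' (Y ⁻¹' {c})).ncard ≤ 2 := by
      simpa using Set.ncard_le_card (I '' (Y ⁻¹' {c}))
    exact_mod_cast condEntropy_le_log_of_ncard_le hcard
  have hfin (S : Set Ω) : (X '' S).Finite := X.finite_range.subset (Set.image_subset_range _ _)
  have hXIY : condEntropy μ X (I.pair Y) ≤ Real.log C + μ.real Qᶜ * Real.log L := by
    refine (condEntropy_le_integral_log_ncard X _).trans ?_
    have hint := (integrable_const (μ := μ) (Real.log L)).indicator hQ.compl
    refine (integral_mono (integrable_simpleFunc_comp (I.pair Y)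
      fun c => Real.log (X '' (I.pair Y ⁻¹' {c})).ncard)
      ((integrable_const (Real.log C)).add hint) fun x => ?_).trans_eq (by
        rw [integral_add' (integrable_const _) hint, integral_indicator_const _ hQ.compl]
        simp)
    have hpos : (0 : ℝ) < (X '' (I.pair Y ⁻¹' {I.pair Y x})).ncard :=
      Nat.cast_pos.2 ((Set.ncard_pos (hfin _)).2 ⟨X x, x, rfl, rfl⟩)
    rw [Pi.add_apply]
    by_cases hx : x ∈ Q
    · rw [Set.indicator_of_notMem (Set.notMem_compl_iff.2 hx), add_zero]
      have hsub : I.pair Y ⁻¹' {I.pair Y x} ⊆ Q ∩ Y ⁻¹' {Y x} := fun y hy =>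
        ⟨(hI y).1 ((congrArg Prod.fst hy).trans ((hI x).2 hx)), congrArg Prod.snd hy⟩
      exact Real.log_le_log hpos (Nat.cast_le.2
        ((Set.ncard_le_ncard (Set.image_mono hsub) (hfin _)).trans (hC (Y x))))
    · rw [Set.indicator_of_mem (Set.mem_compl hx)]
      have hsub : I.pair Y ⁻¹' {I.pair Y x} ⊆ Y ⁻¹' {Y x} := fun y hy => congrArg Prod.snd hy
      exact le_add_of_nonneg_of_le (Real.log_natCast_nonneg C) (Real.log_le_log hpos (Nat.cast_le.2
        ((Set.ncard_le_ncard (Set.image_mono hsub) (hfin _)).trans (hL (Y x)))))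
  have hpair : condEntropy μ X Y ≤ condEntropy μ (X.pair I) Y :=
    condEntropy_map_le (X.pair I) Y Prod.fst
  linarith [condEntropy_pair_le (μ := μ) X I Y]

theorem condEntropy_le_of_determined_on {X : SimpleFunc Ω β} {Y : SimpleFunc Ω γ} {Q : Set Ω}
    (hQ : MeasurableSet Q) (hXY : ∀ x ∈ Q, ∀ x' ∈ Q, Y x = Y x' → X x = X x') :
    condEntropy μ X Y ≤ Real.log 2 + μ.real Qᶜ * Real.log X.range.card := by
  have hC (c) : (X '' (Q ∩ Y ⁻¹' {c})).ncard ≤ 1 := by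
    rw [Set.ncard_le_one (X.finite_range.subset (Set.image_subset_range _ _))]
    rintro _ ⟨x, hx, rfl⟩ _ ⟨x', hx', rfl⟩
    exact hXY x hx.1 x' hx'.1 (hx.2.trans hx'.2.symm)
  have hL (c) : (X '' (Y ⁻¹' {c})).ncard ≤ X.range.card := by
    rw [← Set.ncard_coe_finset, SimpleFunc.coe_range]
    exact Set.ncard_le_ncard (Set.image_subset_range _ _) X.finite_range
  simpa using condEntropy_le_of_ncard_inter_le (μ := μ) hQ hC hL

/-- The observable recording the values of finitely many observables. -/
def tuple {n : ℕ} (X : Fin n → SimpleFunc Ω β) : SimpleFunc Ω (Fin n → β) where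
  toFun x i := X i x
  measurableSet_fiber' f := by
    have hfiber : (fun x i => X i x) ⁻¹' {f} = ⋂ i, X i ⁻¹' {f i} := by
      ext x
      simp [funext_iff]
    rw [hfiber]
    exact .iInter fun i => (X i).measurableSet_preimage _
  finite_range' := (Set.Finite.pi' fun i => (X i).finite_range).subset
    (Set.range_subset_iff.2 fun x i => ⟨x, rfl⟩)

theorem condEntropy_tuple_le {n : ℕ} (X : Fin n → SimpleFunc Ω β) (Y : SimpleFunc Ω γ) :
    condEntropy μ (tuple X) Y ≤ ∑ i, condEntropy μ (X i) Y := by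
  induction n with
  | zero =>
    rw [Finset.univ_eq_empty, Finset.sum_empty, condEntropy, sub_nonpos]
    have hconst : (tuple X).pair Y = Y.map fun y => (Fin.elim0, y) :=
      SimpleFunc.ext fun x => Prod.ext (Subsingleton.elim _ _) rfl
    rw [hconst]
    exact entropy_map_le Y _
  | succ n ih =>
    have hsnoc : tuple X = ((tuple fun i : Fin n => X i.castSucc).pair (X (Fin.last n))).map
        fun w => Fin.snoc (α := fun _ => β) w.1 w.2 := by
      ext x i
      refine Fin.lastCases ?_ (fun j => ?_) i <;> simp [tuple]
    rw [Fin.sum_univ_castSucc, hsnoc]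
    refine (condEntropy_map_le _ _ _).trans ((condEntropy_pair_le _ _ _).trans ?_)
    gcongr
    exact (condEntropy_le_condEntropy_map _ _ Prod.snd).trans (ih _)

theorem condEntropy_tuple_tuple_le {n : ℕ} (X : Fin n → SimpleFunc Ω β)
    (Y : Fin n → SimpleFunc Ω γ) :
    condEntropy μ (tuple X) (tuple Y) ≤ ∑ i, condEntropy μ (X i) (Y i) := by
  refine (condEntropy_tuple_le X _).trans (Finset.sum_le_sum fun i _ => ?_)
  have hcoord : (tuple Y).map (fun f => f i) = Y i := rfl
  rw [← hcoord]
  exact condEntropy_le_condEntropy_map _ _ _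

end Entropy

section KolmogorovSinai

variable {Ω β γ : Type*} [MeasurableSpace Ω] {μ : Measure Ω} {T : Ω → Ω}

theorem entropy_comp_measurePreserving (hT : MeasurePreserving T μ μ) (X : SimpleFunc Ω β) :
    entropy μ (X.comp T hT.measurable) = entropy μ X := by
  have hsub : (X.comp T hT.measurable).range ⊆ X.range := SimpleFunc.range_comp_subset_range _ _
  rw [entropy_eq_sum_of_range_subset hsub, entropy]
  refine Finset.sum_congr rfl fun b _ => ?_
  rw [SimpleFunc.coe_comp, Set.preimage_comp, measureReal_def, measureReal_def,
    hT.measure_preimage (X.measurableSet_preimage _).nullMeasurableSet]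

theorem condEntropy_comp_measurePreserving (hT : MeasurePreserving T μ μ) (X : SimpleFunc Ω β)
    (Y : SimpleFunc Ω γ) :
    condEntropy μ (X.comp T hT.measurable) (Y.comp T hT.measurable) = condEntropy μ X Y :=
  congrArg₂ (· - ·) (entropy_comp_measurePreserving hT (X.pair Y))
    (entropy_comp_measurePreserving hT Y)

/-- The observable recording `X` along the first `n` points of the orbit under `T`. -/
def itinerary (hT : Measurable T) (X : SimpleFunc Ω β) (n : ℕ) : SimpleFunc Ω (Fin n → β) :=
  tuple fun i : Fin n => X.comp T^[i] (hT.iterate i)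

open Classical in
theorem exists_simpleFunc_of_isFinMeasPartition {m : ℕ} {P : Fin m → Set Ω}
    (hP : IsFinMeasPartition μ P) :
    ∃ X : SimpleFunc Ω (Option (Fin m)), ∀ x i, X x = some i ↔ x ∈ P i := by
  obtain ⟨hmeas, hdisj, -⟩ := hP
  let X : Ω → Option (Fin m) := fun x => if hx : ∃ i, x ∈ P i then some hx.choose else none
  have hX (x i) : X x = some i ↔ x ∈ P i := by
    by_cases hx : ∃ i, x ∈ P i
    · simp only [X, dif_pos hx, Option.some.injEq]
      refine ⟨fun hi => hi ▸ hx.choose_spec, fun hi => ?_⟩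
      by_contra hne
      exact Set.disjoint_left.1 (hdisj hne) hx.choose_spec hi
    · simp only [X, dif_neg hx, reduceCtorEq, false_iff]
      exact fun hi => hx ⟨i, hi⟩
  refine ⟨⟨X, fun b => ?_, Set.toFinite _⟩, hX⟩
  cases b with
  | some i => exact (Set.ext fun x => hX x i : X ⁻¹' {some i} = P i) ▸ hmeas i
  | none =>
    have hnone : X ⁻¹' {none} = (⋃ i, P i)ᶜ := by
      ext x
      simp only [Set.mem_preimage, Set.mem_singleton_iff, Set.mem_compl_iff, Set.mem_iUnion,
        not_exists, ← hX]
      exact Option.eq_none_iff_forall_ne_some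
    exact hnone ▸ (MeasurableSet.iUnion hmeas).compl

theorem finPartitionEntropy_refinedPartition_le [IsProbabilityMeasure μ] (hT : Measurable T)
    {m : ℕ} {P : Fin m → Set Ω} {X : SimpleFunc Ω (Option (Fin m))}
    (hX : ∀ x i, X x = some i ↔ x ∈ P i) (n : ℕ) :
    finPartitionEntropy μ (refinedPartition T P n) ≤
      ENNReal.ofReal (entropy μ (itinerary hT X n)) := by
  classical
  let someTuple : (Fin n → Fin m) → Fin n → Option (Fin m) := fun f i => some (f i)
  have hinj : Function.Injective someTuple := fun f g hfg =>
    funext fun i => Option.some_injective _ (congrFun hfg i)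
  have hfiber (f) : refinedPartition T P n f = itinerary hT X n ⁻¹' {someTuple f} := by
    ext x
    simp [refinedPartition, itinerary, tuple, someTuple, funext_iff, hX]
  refine ENNReal.ofReal_le_ofReal ?_
  rw [entropy_eq_sum_of_range_subset (Finset.subset_univ _)]
  calc ∑ f, Real.negMulLog (μ (refinedPartition T P n f)).toReal
      = ∑ b ∈ Finset.univ.image someTuple,
          Real.negMulLog (μ.real (itinerary hT X n ⁻¹' {b})) := by
        rw [Finset.sum_image hinj.injOn]
        exact Finset.sum_congr rfl fun f _ => by rw [hfiber, measureReal_def]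
    _ ≤ ∑ b, Real.negMulLog (μ.real (itinerary hT X n ⁻¹' {b})) :=
        Finset.sum_le_sum_of_subset_of_nonneg (Finset.subset_univ _) fun _ _ _ =>
          Real.negMulLog_nonneg measureReal_nonneg measureReal_le_one

theorem ksEntropy_eq_zero_of_entropy_itinerary_le [IsProbabilityMeasure μ] (hT : Measurable T)
    (hsmall : ∀ (m : ℕ) (X : SimpleFunc Ω (Option (Fin m))), ∀ ε > 0, ∃ n : ℕ, 0 < n ∧
      entropy μ (itinerary hT X n) ≤ ε * n) : ksEntropy T μ = 0 := by
  simp only [ksEntropy, ENNReal.iSup_eq_zero]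
  refine fun m P hP => le_antisymm (ENNReal.le_of_forall_pos_le_add fun ε hε _ => ?_) bot_le
  obtain ⟨X, hX⟩ := exists_simpleFunc_of_isFinMeasPartition hP
  obtain ⟨n, hn0, hn⟩ := hsmall m X ε hε
  obtain ⟨k, rfl⟩ := Nat.exists_eq_add_one.2 hn0
  rw [zero_add]
  refine (iInf_le _ k).trans (ENNReal.div_le_of_le_mul ?_)
  refine (finPartitionEntropy_refinedPartition_le hT hX _).trans
    ((ENNReal.ofReal_le_ofReal hn).trans_eq ?_)
  rw [ENNReal.ofReal_mul ε.coe_nonneg, ENNReal.ofReal_coe_nnreal, ENNReal.ofReal_natCast]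
  push_cast
  rfl

end KolmogorovSinai

section ScaleEntropy

open Filter Topology

variable {ι V : Type*} [AddCommGroup V] [Module ℝ V]

/-- The coordinates on which the functional is zero at `w` and positive at `u`: the directions that
the flow of `w` leaves at scale one and the flow of `u` expands. -/
def neutralUnstable (lam : V →ₗ[ℝ] (ι → ℝ)) (w u : V) : Set ι :=
  {i | lam w i = 0 ∧ 0 < lam u i}

/-- The expansion exponents of `u` in the directions left neutral by `w`. -/
noncomputable def neutralPart (lam : V →ₗ[ℝ] (ι → ℝ)) (w u : V) : ι → ℝ :=
  (neutralUnstable lam w u).indicator (lam u)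

/-- The properties of `G ρ`, the entropy of a partition of a space on which `V` acts into cells of
size `2 ^ (-ρ i)` in the `i`-th direction, where `lam t i` is the exponent by which `t : V` expands
that direction.  A cell never needs size above one (`sup_zero`), the action transports cells up
to a bounded cost (`shift`), and a multiplicative refinement costs a bounded number of bits per
factor of two (`add_const_le`).  The field `cheap` is the only one that carries dynamical content:
refining in the directions that `w` leaves neutral and `u` expands is almost free at some scale. -/
structure IsScaleEntropy (lam : V →ₗ[ℝ] (ι → ℝ)) (G : (ι → ℝ) → ℝ) (C : ℝ) : Prop where
  nonneg : ∀ r, 0 ≤ G r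
  mono : Monotone G
  sup_zero : ∀ r, G (r ⊔ 0) = G r
  submodular : ∀ a b, G (a ⊔ b) + G (a ⊓ b) ≤ G a + G b
  shift : ∀ t a b, 0 ≤ a → 0 ≤ b → a + lam t ≤ b → G a ≤ G b + C
  add_const_le : ∀ a c, 0 ≤ c → G (a + Function.const ι c) ≤ G a + C * (c + 1)
  cheap : ∀ w u, w ≠ 0 → ∀ ε > 0, ∀ κ₀ : ℝ, ∃ κ ≥ κ₀, ∃ k : ι → ℝ, 0 ≤ k ∧
    G (k + (neutralUnstable lam w u).indicator (Function.const ι κ)) ≤ G k + ε * κ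

theorem exists_pos_forall_abs_le [Finite ι] (f : ι → ℝ) : ∃ M > 0, ∀ i, |f i| ≤ M := by
  obtain ⟨M, hM⟩ := Finite.exists_le fun i => |f i|
  exact ⟨max M 1, by positivity, fun i => (hM i).trans (le_max_left _ _)⟩

section NeutralPart

variable {lam : V →ₗ[ℝ] (ι → ℝ)} {w u : V} {i : ι}

theorem neutralPart_of_mem (hi : i ∈ neutralUnstable lam w u) : neutralPart lam w u i = lam u i :=
  Set.indicator_of_mem hi _

theorem neutralPart_of_notMem (hi : i ∉ neutralUnstable lam w u) : neutralPart lam w u i = 0 :=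
  Set.indicator_of_notMem hi _

theorem neutralPart_of_ne_zero (hi : lam w i ≠ 0) : neutralPart lam w u i = 0 :=
  neutralPart_of_notMem fun h => hi h.1

theorem neutralPart_nonneg (lam : V →ₗ[ℝ] (ι → ℝ)) (w u : V) : 0 ≤ neutralPart lam w u :=
  fun _ => Set.indicator_apply_nonneg fun h => h.2.le

theorem le_neutralPart (hi : lam w i = 0) : lam u i ≤ neutralPart lam w u i := by
  by_cases hu : 0 < lam u i
  · exact (neutralPart_of_mem ⟨hi, hu⟩).ge
  · exact (not_lt.1 hu).trans (neutralPart_nonneg lam w u i)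

theorem neutralPart_smul {a b : ℝ} (ha : a ≠ 0) (hb : 0 < b) :
    neutralPart lam (a • w) (b • u) = b • neutralPart lam w u := by
  have hset : neutralUnstable lam (a • w) (b • u) = neutralUnstable lam w u := by
    ext i; simp [neutralUnstable, ha, hb]
  rw [neutralPart, hset, map_smul]
  exact Set.indicator_const_smul _ b _

end NeutralPart

namespace IsScaleEntropy

variable {lam : V →ₗ[ℝ] (ι → ℝ)} {G : (ι → ℝ) → ℝ} {C : ℝ}

theorem const_nonneg (h : IsScaleEntropy lam G C) : 0 ≤ C := by
  have := h.shift 0 0 0 le_rfl le_rfl (by simp)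
  linarith

theorem le_of_le_sup_zero (h : IsScaleEntropy lam G C) {a b : ι → ℝ} (hab : a ≤ b ⊔ 0) :
    G a ≤ G b :=
  h.sup_zero b ▸ h.mono hab

theorem le_of_sup_zero_add_le (h : IsScaleEntropy lam G C) (t : V) {a b : ι → ℝ}
    (hab : ∀ i, max (a i) 0 + lam t i ≤ max (b i) 0) : G a ≤ G b + C := by
  rw [← h.sup_zero a, ← h.sup_zero b]
  exact h.shift t _ _ le_sup_right le_sup_right hab

theorem neg_le (h : IsScaleEntropy lam G C) (t : V) : G (lam (-t)) ≤ G (lam t) + C :=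
  h.le_of_sup_zero_add_le t fun i => by
    simp only [map_neg, Pi.neg_apply]
    grind

theorem map_add_le (h : IsScaleEntropy lam G C) (s t : V) :
    G (lam (s + t)) ≤ G (lam s) + G (lam t) + 2 * C := by
  have hshift : G (lam (s + t)) ≤ G (lam t ⊔ lam (-s)) + C :=
    h.le_of_sup_zero_add_le (-s) fun i => by
      simp only [map_add, map_neg, Pi.add_apply, Pi.sup_apply, Pi.neg_apply]
      grind
  linarith [h.submodular (lam t) (lam (-s)), h.neg_le s, h.nonneg (lam t ⊓ lam (-s))]

section MarginalCost

/-! ### Cost of refining in neutral directions -/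

/-- Once `ρ + n s • neutralPart` has been reached, moving by `-n s • u` brings the neutral
coordinates back to those of `k`, where the next refinement is cheap by submodularity. -/
theorem add_smul_neutralPart_le (h : IsScaleEntropy lam G C) {w u : V} {k : ι → ℝ} (hk : 0 ≤ k)
    {κ c s : ℝ} (hs : 0 ≤ s) (hsu : ∀ i, s * lam u i ≤ κ) (hκ : 0 ≤ κ)
    (hcheap : G (k + (neutralUnstable lam w u).indicator (Function.const ι κ)) ≤ G k + c) (n : ℕ)
    {ρ : ι → ℝ} (hkρ : k ≤ ρ) (hρ : ∀ i ∈ neutralUnstable lam w u, ρ i = k i)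
    (hfine : ∀ i, lam w i ≠ 0 → k i + n * s * |lam u i| ≤ ρ i) :
    G (ρ + (n * s) • neutralPart lam w u) ≤ G ρ + n * (c + 2 * C) := by
  induction n with
  | zero => simp
  | succ n ih =>
    push_cast at hfine ⊢
    have hns : 0 ≤ n * s := by positivity
    have hm := neutralPart_nonneg lam w u
    specialize ih fun i hi => (hfine i hi).trans' (by gcongr; linarith)
    set m := neutralPart lam w u
    set r : ι → ℝ := ρ + (n * s) • m - (n * s) • lam u with hr
    have hkr : k ≤ r := fun i => by
      have hki := hkρ i
      simp only [hr, Pi.add_apply, Pi.sub_apply, Pi.smul_apply, smul_eq_mul]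
      by_cases hi : lam w i = 0
      · nlinarith [le_neutralPart hi (u := u)]
      · have hmi : m i = 0 := neutralPart_of_ne_zero hi
        have := hfine i hi
        nlinarith [abs_nonneg (lam u i), le_abs_self (lam u i)]
    have hr0 : 0 ≤ r := hk.trans hkr
    have hρ0 : 0 ≤ ρ := hk.trans hkρ
    have hback : G (ρ + ((n + 1) * s) • m) ≤ G (r + s • m) + C := by
      refine h.shift (-((n * s) • u)) _ _ (add_nonneg hρ0 (smul_nonneg (by positivity) hm))
        (add_nonneg hr0 (smul_nonneg hs hm)) (le_of_eq ?_)
      rw [map_neg, map_smul, hr]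
      module
    have hforth : G r ≤ G (ρ + (n * s) • m) + C := by
      refine h.shift ((n * s) • u) _ _ hr0 (add_nonneg hρ0 (smul_nonneg hns hm)) (le_of_eq ?_)
      rw [map_smul, hr]
      module
    set a := k + (neutralUnstable lam w u).indicator (Function.const ι κ) with ha
    have hka : k ≤ a := le_add_of_nonneg_right (Set.indicator_nonneg fun _ _ => hκ)
    have hsup : r + s • m ≤ r ⊔ a := fun i => by
      by_cases hi : i ∈ neutralUnstable lam w u
      · have hmi : m i = lam u i := neutralPart_of_mem hi
        refine le_sup_of_le_right ?_
        simpa [hr, ha, hmi, hρ i hi, hi] using hsu i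
      · exact le_sup_of_le_left (by simp [m, neutralPart_of_notMem hi])
    linarith [h.submodular r a, h.mono hsup, h.mono (le_inf hkr hka)]

variable [Finite ι]

theorem exists_cheap_step (h : IsScaleEntropy lam G C) {w : V} (hw : w ≠ 0) (u : V) {ε : ℝ}
    (hε : 0 < ε) :
    ∃ s > 0, ∃ k : ι → ℝ, 0 ≤ k ∧ ∀ (n : ℕ) (ρ : ι → ℝ), k ≤ ρ →
      (∀ i ∈ neutralUnstable lam w u, ρ i = k i) →
      (∀ i, lam w i ≠ 0 → k i + n * s * |lam u i| ≤ ρ i) →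
      G (ρ + (n * s) • neutralPart lam w u) ≤ G ρ + ε * (n * s) := by
  have hC := h.const_nonneg
  obtain ⟨Λ, hΛ, hle⟩ := exists_pos_forall_abs_le (lam u)
  obtain ⟨κ, hκ, k, hk, hcheap⟩ := h.cheap w u hw (ε / (2 * Λ)) (by positivity) (1 + 4 * C * Λ / ε)
  have hκ0 : 0 < κ := hκ.trans_lt' (by positivity)
  have hCκ : 2 * C ≤ ε / (2 * Λ) * κ := by
    have : 4 * C * Λ / ε ≤ κ := by linarith
    rw [div_le_iff₀ hε] at this
    rw [div_mul_eq_mul_div, le_div_iff₀ (by positivity)]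
    linarith
  refine ⟨κ / Λ, by positivity, k, hk, fun n ρ hkρ hρ hfine => ?_⟩
  refine (h.add_smul_neutralPart_le hk (by positivity) (fun i => ?_) hκ0.le hcheap n hkρ hρ
    hfine).trans ?_
  · rw [div_mul_eq_mul_div, div_le_iff₀ hΛ]
    exact mul_le_mul_of_nonneg_left ((le_abs_self _).trans (hle i)) hκ0.le
  · have hsum : ε * (n * (κ / Λ)) = n * (ε / (2 * Λ) * κ + ε / (2 * Λ) * κ) := by
      field_simp
      ring
    rw [hsum]
    gcongr

theorem exists_add_smul_neutralPart_le (h : IsScaleEntropy lam G C) {w : V} (hw : w ≠ 0) (u : V)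
    {ε : ℝ} (hε : 0 < ε) :
    ∃ D, ∀ T, 0 ≤ T → ∀ ρ : ι → ℝ, 0 ≤ ρ → ∀ τ : ℝ, 0 ≤ ρ + τ • lam w →
      (∀ i, lam w i ≠ 0 → D + T * |lam u i| ≤ ρ i + τ * lam w i) →
      (∀ i ∈ neutralUnstable lam w u, ρ i = 0) →
      G (ρ + T • neutralPart lam w u) ≤ G ρ + ε * T + D := by
  have hC := h.const_nonneg
  have hm := neutralPart_nonneg lam w u
  obtain ⟨s, hs, k, hk, hstep⟩ := h.exists_cheap_step hw u hε
  obtain ⟨B, hB, hkB⟩ := exists_pos_forall_abs_le k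
  replace hkB : ∀ i, k i ≤ B := fun i => (le_abs_self _).trans (hkB i)
  obtain ⟨Λ, hΛ, hleΛ⟩ := exists_pos_forall_abs_le (lam u)
  refine ⟨B + s * Λ + ε * s + C * (B + 1) + 2 * C, fun T hT ρ hρ τ hρτ hfine hzero => ?_⟩
  have hsΛ : 0 ≤ s * Λ := by positivity
  have hεs : 0 ≤ ε * s := by positivity
  have hCB : 0 ≤ C * (B + 1) := by positivity
  set σ := ρ + τ • lam w with hσ
  obtain ⟨n, hTn, hnT⟩ : ∃ n : ℕ, T ≤ n * s ∧ n * s ≤ T + s := by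
    refine ⟨⌈T / s⌉₊, (div_le_iff₀ hs).1 (Nat.le_ceil _), ?_⟩
    have := mul_le_mul_of_nonneg_right (Nat.ceil_lt_add_one (div_nonneg hT hs.le)).le hs.le
    rwa [add_mul, div_mul_cancel₀ _ hs.ne', one_mul] at this
  have hsteps := hstep n (σ ⊔ k) le_sup_right
    (fun i hi => by simpa [hσ, hi.1, hzero i hi] using hk i)
    (fun i hi => le_sup_of_le_left <| by
      have hn : n * s * |lam u i| ≤ (T + s) * |lam u i| := by gcongr
      have hsu : s * |lam u i| ≤ s * Λ := by gcongr; exact hleΛ i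
      simp only [hσ, Pi.add_apply, Pi.smul_apply, smul_eq_mul]
      linarith [hfine i hi, hkB i])
  have hforth : G (ρ + T • neutralPart lam w u) ≤
      G (σ ⊔ k + (n * s) • neutralPart lam w u) + C := by
    refine h.shift (τ • w) _ _ (add_nonneg hρ (smul_nonneg hT hm))
      (add_nonneg (hk.trans le_sup_right) (smul_nonneg (by positivity) hm)) ?_
    rw [map_smul, add_right_comm]
    exact add_le_add le_sup_left (smul_le_smul_of_nonneg_right hTn hm)
  have hsupk : G (σ ⊔ k) ≤ G σ + C * (B + 1) :=
    (h.mono (sup_le (le_add_of_nonneg_right fun _ => hB.le)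
      fun i => (hkB i).trans (le_add_of_nonneg_left (hρτ i)))).trans (h.add_const_le σ B hB.le)
  have hback : G σ ≤ G ρ + C := by
    refine h.shift (-(τ • w)) _ _ hρτ hρ (le_of_eq ?_)
    rw [map_neg, map_smul, hσ]
    module
  linarith [mul_le_mul_of_nonneg_left hnT hε.le]

end MarginalCost

section GrowthRate

/-! ### The growth rate along rays -/

/-- The rate at which `G` grows along the ray of `t`: the entropy of `t` when `G` is the scale
entropy of an action. -/
noncomputable def growthRate (lam : V →ₗ[ℝ] (ι → ℝ)) (G : (ι → ℝ) → ℝ) (t : V) : ℝ :=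
  limUnder atTop fun n : ℕ => G (lam ((n : ℝ) • t)) / n

theorem tendsto_growthRate (h : IsScaleEntropy lam G C) (t : V) :
    Tendsto (fun n : ℕ => G (lam ((n : ℝ) • t)) / n) atTop (𝓝 (growthRate lam G t)) := by
  have hC := h.const_nonneg
  have hsub : Subadditive fun n : ℕ => G (lam ((n : ℝ) • t)) + 2 * C := fun m n => by
    have := h.map_add_le ((m : ℝ) • t) ((n : ℝ) • t)
    rw [← add_smul] at this
    push_cast
    linarith
  have hbdd : BddBelow (Set.range fun n : ℕ => (G (lam ((n : ℝ) • t)) + 2 * C) / n) := by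
    refine ⟨0, Set.forall_mem_range.2 fun n => ?_⟩
    have := h.nonneg (lam ((n : ℝ) • t))
    positivity
  refine tendsto_nhds_limUnder ⟨hsub.lim, ?_⟩
  have hlim := (hsub.tendsto_lim hbdd).sub (tendsto_const_div_atTop_nhds_zero_nat (2 * C))
  rw [sub_zero] at hlim
  exact hlim.congr fun n => by ring

theorem tendsto_growthRate_mul (h : IsScaleEntropy lam G C) (t : V) {k : ℕ} (hk : 0 < k) :
    Tendsto (fun n : ℕ => G (lam (((k * n : ℕ) : ℝ) • t)) / n) atTop
      (𝓝 (k * growthRate lam G t)) := by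
  refine (((h.tendsto_growthRate t).comp (tendsto_id.const_mul_atTop' hk)).const_mul
    (k : ℝ)).congr fun n => ?_
  rcases n.eq_zero_or_pos with rfl | hn
  · simp
  · simp only [Function.comp_apply, id_eq]
    push_cast
    field_simp

theorem growthRate_nonneg (h : IsScaleEntropy lam G C) (t : V) : 0 ≤ growthRate lam G t :=
  ge_of_tendsto' (h.tendsto_growthRate t) fun n => div_nonneg (h.nonneg _) n.cast_nonneg

theorem growthRate_natCast_smul (h : IsScaleEntropy lam G C) (t : V) {k : ℕ} (hk : 0 < k) :
    growthRate lam G ((k : ℝ) • t) = k * growthRate lam G t :=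
  tendsto_nhds_unique (h.tendsto_growthRate _) <| (h.tendsto_growthRate_mul t hk).congr fun n => by
    rw [smul_smul, mul_comm (n : ℝ), Nat.cast_mul]

theorem growthRate_add_le (h : IsScaleEntropy lam G C) (s t : V) :
    growthRate lam G (s + t) ≤ growthRate lam G s + growthRate lam G t := by
  have hlim := ((h.tendsto_growthRate s).add (h.tendsto_growthRate t)).add
    (tendsto_const_div_atTop_nhds_zero_nat (2 * C))
  rw [add_zero] at hlim
  refine le_of_tendsto_of_tendsto' (h.tendsto_growthRate _) hlim fun n => ?_
  rw [← add_div, ← add_div, smul_add]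
  exact div_le_div_of_nonneg_right (h.map_add_le _ _) n.cast_nonneg

theorem exists_growthRate_smul_le [Finite ι] (h : IsScaleEntropy lam G C) (t : V) :
    ∃ M, 0 ≤ M ∧ ∀ s : ℝ, growthRate lam G (s • t) ≤ M * |s| := by
  have hC := h.const_nonneg
  obtain ⟨Λ, hΛ, hle⟩ := exists_pos_forall_abs_le (lam t)
  refine ⟨C * Λ, by positivity, fun s => ?_⟩
  have hlim : Tendsto (fun n : ℕ => C * Λ * |s| + (G 0 + C) / n) atTop (𝓝 (C * Λ * |s|)) := by
    simpa using tendsto_const_nhds.add (tendsto_const_div_atTop_nhds_zero_nat (G 0 + C))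
  refine le_of_tendsto_of_tendsto (h.tendsto_growthRate _) hlim ?_
  filter_upwards [eventually_gt_atTop 0] with n hn
  have hn' : (0 : ℝ) < n := by exact_mod_cast hn
  have hmono : G (lam ((n : ℝ) • s • t)) ≤ G (0 + Function.const ι (n * |s| * Λ)) :=
    h.mono fun i => by
      have habs : s * lam t i ≤ |s| * Λ := by
        calc s * lam t i ≤ |s| * |lam t i| := (le_abs_self _).trans (abs_mul _ _).le
          _ ≤ |s| * Λ := by gcongr; exact hle i
      simpa [mul_assoc] using mul_le_mul_of_nonneg_left habs hn'.le
  rw [div_le_iff₀ hn', add_mul, div_mul_cancel₀ _ hn'.ne']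
  linarith [h.add_const_le 0 (n * |s| * Λ) (by positivity)]

end GrowthRate

section LocalConcavity

/-! ### Local concavity of the growth rate -/

/-- Submodularity for `lam (w - u) ⊔ lam (-(w + u))` and the refinement in neutral directions of
`lam (-2 (w - u)) ⊔ 0`. -/
theorem map_add_add_map_three_smul_sub_le (h : IsScaleEntropy lam G C) {w u : V}
    (hdom : ∀ i, lam w i ≠ 0 → 8 * |lam u i| ≤ |lam w i|) :
    G (lam (w + u)) + G (lam ((3 : ℝ) • (w - u))) ≤
      G (lam ((2 : ℝ) • w) ⊔ 0 + neutralPart lam w u) +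
        G (lam (-((2 : ℝ) • (w - u))) ⊔ 0 + neutralPart lam w (-u)) + 3 * C := by
  have hm := neutralPart_nonneg lam w u
  have hm' := neutralPart_nonneg lam w (-u)
  have hlem : ∀ i, lam w i = 0 → lam u i ≤ neutralPart lam w u i := fun i => le_neutralPart
  have hlem' : ∀ i, lam w i = 0 → -lam u i ≤ neutralPart lam w (-u) i := fun i hi => by
    simpa using le_neutralPart (u := -u) hi
  set m := neutralPart lam w u
  set m' := neutralPart lam w (-u)
  set Q := lam (w - u) ⊔ lam (-(w + u)) with hQ
  set B := lam (-((2 : ℝ) • (w - u))) ⊔ 0 + m' with hB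
  have hQle : G Q ≤ G (lam ((2 : ℝ) • w) ⊔ 0 + m) + C :=
    h.le_of_sup_zero_add_le (w + u) fun i => by
      have := hm i; have := hlem i; have := hdom i
      simp only [hQ, map_add, map_sub, map_neg, map_smul, Pi.add_apply, Pi.sup_apply, Pi.neg_apply,
        Pi.sub_apply, Pi.smul_apply, smul_eq_mul, Pi.zero_apply] at *
      grind
  have hthree : G (lam ((3 : ℝ) • (w - u))) ≤ G (lam (w - u) ⊔ lam (-((2 : ℝ) • (w - u)))) + C :=
    h.le_of_sup_zero_add_le (-((2 : ℝ) • (w - u))) fun i => by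
      simp only [map_neg, map_smul, Pi.sup_apply, Pi.neg_apply, Pi.smul_apply, smul_eq_mul]
      grind
  have hsup : G (lam (w - u) ⊔ lam (-((2 : ℝ) • (w - u)))) ≤ G (Q ⊔ B) :=
    h.mono <| sup_le_sup le_sup_left (le_sup_left.trans (le_add_of_nonneg_right hm'))
  have hinf : G (lam (-(w + u))) ≤ G (Q ⊓ B) :=
    h.le_of_le_sup_zero fun i => by
      have := hm' i; have := hlem' i; have := hdom i
      simp only [hQ, hB, map_add, map_sub, map_neg, map_smul, Pi.add_apply, Pi.sup_apply,
        Pi.inf_apply, Pi.neg_apply, Pi.sub_apply, Pi.smul_apply, smul_eq_mul, Pi.zero_apply] at *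
      grind
  have hneg : G (lam (w + u)) ≤ G (lam (-(w + u))) + C := by
    simpa only [neg_neg] using h.neg_le (-(w + u))
  linarith [h.submodular Q B]

variable [Finite ι]

theorem exists_eventually_sup_zero_add_neutralPart_le (h : IsScaleEntropy lam G C) {w : V}
    (hw : w ≠ 0) {u : V} {δ η ε : ℝ} (hδ : 0 < δ) (hη : 0 ≤ η) (hηδ : η ≤ δ)
    (hdom : ∀ i, lam w i ≠ 0 → 8 * (δ * |lam u i|) ≤ |lam w i|) (hε : 0 < ε) :
    ∃ D, ∀ᶠ n : ℕ in atTop,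
      G (lam ((2 * n : ℝ) • (w - η • u)) ⊔ 0 + (n * δ) • neutralPart lam w u) ≤
        G (lam ((2 * n : ℝ) • (w - η • u))) + ε * n + D := by
  obtain ⟨D, hD⟩ := h.exists_add_smul_neutralPart_le hw u (div_pos hε hδ)
  have hbig : ∀ᶠ n : ℕ in atTop, ∀ i, lam w i ≠ 0 → D ≤ n * (|lam w i| / 8) := by
    refine eventually_all.2 fun i => ?_
    by_cases hi : lam w i = 0
    · simp [hi]
    · have hpos : 0 < |lam w i| / 8 := by positivity
      filter_upwards [(tendsto_natCast_atTop_atTop.atTop_mul_const hpos).eventually_ge_atTop D]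
        with n hn _ using hn
  refine ⟨D, ?_⟩
  filter_upwards [hbig] with n hn
  have hshift : ∀ i, lam w i ≠ 0 → n * (|lam w i| / 2) ≤
      max (2 * n * (lam w i - η * lam u i)) 0 + -n * lam w i := fun i hi => by
    have habs : |η * lam u i| ≤ |lam w i| / 8 := by
      rw [abs_mul, abs_of_nonneg hη]
      linarith [hdom i hi, mul_le_mul_of_nonneg_right hηδ (abs_nonneg (lam u i))]
    have hstep : |lam w i| / 2 ≤ max (2 * (lam w i - η * lam u i)) 0 - lam w i := by grind
    have hmul := mul_le_mul_of_nonneg_left hstep n.cast_nonneg (α := ℝ)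
    rw [mul_sub, mul_max_of_nonneg _ _ n.cast_nonneg, mul_zero, ← mul_assoc, mul_comm (n : ℝ) 2]
      at hmul
    linarith
  have key := hD (n * δ) (by positivity) (lam ((2 * n : ℝ) • (w - η • u)) ⊔ 0) le_sup_right (-n)
    (fun i => ?_) (fun i hi => ?_) (fun i hi => ?_)
  · rw [h.sup_zero] at key
    convert key using 3
    field_simp
  · by_cases hi : lam w i = 0
    · simp [hi]
    · have := (hshift i hi).trans' (by positivity)
      simpa only [map_smul, map_sub, Pi.zero_apply, Pi.add_apply, Pi.sup_apply, Pi.smul_apply,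
        Pi.sub_apply, smul_eq_mul] using this
  · have hn8 := mul_le_mul_of_nonneg_left (hdom i hi) n.cast_nonneg (α := ℝ)
    have hnn : 0 ≤ n * |lam w i| := by positivity
    have := hshift i hi
    simp only [map_smul, map_sub, Pi.sup_apply, Pi.smul_apply, Pi.sub_apply, smul_eq_mul,
      Pi.zero_apply]
    linarith [hn i hi]
  · simpa [hi.1] using by have := hi.2; positivity

theorem exists_eventually_map_add_le (h : IsScaleEntropy lam G C) {w : V} (hw : w ≠ 0) {u : V}
    {δ ε : ℝ} (hδ : 0 < δ) (hdom : ∀ i, lam w i ≠ 0 → 8 * (δ * |lam u i|) ≤ |lam w i|)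
    (hε : 0 < ε) :
    ∃ D, ∀ᶠ n : ℕ in atTop,
      G (lam ((n : ℝ) • (w + δ • u))) + G (lam ((3 * n : ℝ) • (w - δ • u))) ≤
        G (lam ((2 * n : ℝ) • w)) + G (lam ((2 * n : ℝ) • (w - δ • u))) + ε * n + D := by
  obtain ⟨D, hD⟩ := h.exists_eventually_sup_zero_add_neutralPart_le hw hδ le_rfl hδ.le hdom
    (half_pos hε)
  obtain ⟨D', hD'⟩ := h.exists_eventually_sup_zero_add_neutralPart_le (neg_ne_zero.2 hw) (u := -u)
    hδ hδ.le le_rfl (by simpa using hdom) (half_pos hε)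
  refine ⟨D + D' + 4 * C, ?_⟩
  filter_upwards [hD, hD', eventually_gt_atTop 0] with n hDn hDn' hn
  have hn' : (0 : ℝ) < n := by exact_mod_cast hn
  have hstep := h.map_add_add_map_three_smul_sub_le (w := (n : ℝ) • w) (u := (n * δ) • u)
    fun i hi => by
      have := mul_le_mul_of_nonneg_left (hdom i (by simp_all)) hn'.le
      simp only [map_smul, Pi.smul_apply, smul_eq_mul, abs_mul, abs_of_pos hn', abs_of_pos hδ]
      linarith
  have hm : neutralPart lam ((n : ℝ) • w) ((n * δ) • u) = (n * δ) • neutralPart lam w u :=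
    neutralPart_smul hn'.ne' (by positivity)
  have hm' : neutralPart lam ((n : ℝ) • w) (-((n * δ) • u)) =
      (n * δ) • neutralPart lam (-w) (-u) := by
    rw [← neutralPart_smul (neg_ne_zero.2 hn'.ne') (by positivity)]
    simp only [smul_neg, neg_smul, neg_neg]
  have hx : (n : ℝ) • w + (n * δ) • u = (n : ℝ) • (w + δ • u) := by module
  have hy₂ : (2 : ℝ) • ((n : ℝ) • w - (n * δ) • u) = (2 * n : ℝ) • (w - δ • u) := by module
  have hy₃ : (3 : ℝ) • ((n : ℝ) • w - (n * δ) • u) = (3 * n : ℝ) • (w - δ • u) := by module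
  have hy : (2 * n : ℝ) • (-w - δ • -u) = -((2 * n : ℝ) • (w - δ • u)) := by module
  rw [hm, hm', hx, hy₂, hy₃, smul_smul] at hstep
  rw [zero_smul, sub_zero] at hDn
  rw [hy] at hDn'
  linarith [h.neg_le ((2 * n : ℝ) • (w - δ • u))]

theorem eventually_growthRate_add_growthRate_sub_le (h : IsScaleEntropy lam G C) {w : V}
    (hw : w ≠ 0) (u : V) :
    ∀ᶠ δ in 𝓝[>] (0 : ℝ), growthRate lam G (w + δ • u) + growthRate lam G (w - δ • u) ≤
      2 * growthRate lam G w := by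
  have hsmall : ∀ᶠ δ in 𝓝[>] (0 : ℝ), ∀ i, lam w i ≠ 0 → 8 * (δ * |lam u i|) ≤ |lam w i| := by
    refine eventually_all.2 fun i => ?_
    by_cases hi : lam w i = 0
    · simp [hi]
    · have hlim : Tendsto (fun δ : ℝ => 8 * (δ * |lam u i|)) (𝓝[>] 0) (𝓝 0) := by
        refine Tendsto.mono_left ?_ nhdsWithin_le_nhds
        exact Continuous.tendsto' (by fun_prop) _ _ (by simp)
      filter_upwards [hlim.eventually_le_const (abs_pos.2 hi)] with δ hδ _ using hδ
  filter_upwards [hsmall, self_mem_nhdsWithin] with δ hdom (hδ : 0 < δ)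
  refine le_of_forall_pos_le_add fun ε hε => ?_
  obtain ⟨D, hD⟩ := h.exists_eventually_map_add_le hw hδ hdom hε
  have hl := (h.tendsto_growthRate (w + δ • u)).add
    (h.tendsto_growthRate_mul (w - δ • u) three_pos)
  have hr := (((h.tendsto_growthRate_mul w two_pos).add
    (h.tendsto_growthRate_mul (w - δ • u) two_pos)).add_const ε).add
      (tendsto_const_div_atTop_nhds_zero_nat D)
  have key := le_of_tendsto_of_tendsto hl hr <| by
    filter_upwards [hD, eventually_gt_atTop 0] with n hDn hn
    have hn' : (0 : ℝ) < n := by exact_mod_cast hn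
    rw [← add_div, ← add_div, div_add' _ _ _ hn'.ne', ← add_div]
    push_cast
    exact div_le_div_of_nonneg_right hDn hn'.le
  push_cast at key
  linarith

end LocalConcavity

end IsScaleEntropy

section Concave

theorem nonneg_of_locally_midpoint_concave {f : ℝ → ℝ} (hf : Continuous f)
    (hmid : ∀ s, ∀ᶠ δ in 𝓝[>] (0 : ℝ), f (s + δ) + f (s - δ) ≤ 2 * f s) {a b : ℝ}
    (ha : 0 ≤ f a) (hb : 0 ≤ f b) {x : ℝ} (hx : x ∈ Set.Icc a b) : 0 ≤ f x := by
  by_contra! hfx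
  obtain ⟨y, hy, hmin⟩ := isCompact_Icc.exists_isMinOn ⟨x, hx⟩ hf.continuousOn (s := Set.Icc a b)
  have hfy : f y < 0 := (hmin hx).trans_lt hfx
  -- At the leftmost minimum, midpoint concavity forces an equal value further to the left.
  obtain ⟨z, ⟨hz, hzy⟩, hleast⟩ := (isCompact_Icc.inter_right
    (isClosed_singleton.preimage hf) : IsCompact (Set.Icc a b ∩ f ⁻¹' {f y})).exists_isLeast
      ⟨y, hy, rfl⟩
  replace hzy : f z = f y := hzy
  have haz : a < z := lt_of_le_of_ne hz.1 (by rintro rfl; linarith)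
  have hzb : z < b := lt_of_le_of_ne hz.2 (by rintro rfl; linarith)
  have hroom : ∀ᶠ δ in 𝓝[>] (0 : ℝ), δ ∈ Set.Ioc 0 (min (z - a) (b - z)) :=
    Ioc_mem_nhdsGT (lt_min (sub_pos.2 haz) (sub_pos.2 hzb))
  obtain ⟨δ, hδ, hδ0, hδle⟩ := ((hmid z).and hroom).exists
  obtain ⟨hδa, hδb⟩ := le_min_iff.1 hδle
  have hright : f y ≤ f (z + δ) := hmin ⟨by linarith, by linarith⟩
  have hleft : f y ≤ f (z - δ) := hmin ⟨by linarith, by linarith⟩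
  have := hleast ⟨⟨by linarith, by linarith⟩, show f (z - δ) = f y by linarith⟩
  linarith

theorem concaveOn_univ_of_locally_midpoint_concave {f : ℝ → ℝ} (hf : Continuous f)
    (hmid : ∀ s, ∀ᶠ δ in 𝓝[>] (0 : ℝ), f (s + δ) + f (s - δ) ≤ 2 * f s) :
    ConcaveOn ℝ Set.univ f := by
  refine LinearOrder.concaveOn_of_lt convex_univ fun a _ b _ hab s t hs ht hst => ?_
  have hba : 0 < b - a := sub_pos.2 hab
  set L : ℝ → ℝ := fun x => ((b - x) * f a + (x - a) * f b) / (b - a) with hL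
  have key := nonneg_of_locally_midpoint_concave (f := fun x => f x - L x) (by fun_prop)
    (fun x => (hmid x).mono fun δ hδ => by
      have : L (x + δ) + L (x - δ) = 2 * L x := by
        simp only [hL]
        ring
      linarith)
    (a := a) (b := b) (x := s * a + t * b)
    (by simp [hL, hba.ne']) (by simp [hL, hba.ne'])
    (convex_Icc a b (Set.left_mem_Icc.2 hab.le) (Set.right_mem_Icc.2 hab.le) hs.le ht.le hst)
  have hchord : L (s * a + t * b) = s * f a + t * f b := by
    obtain rfl : s = 1 - t := by linarith
    simp only [hL]
    field_simp
    ring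
  simpa [hchord] using key

theorem le_of_concaveOn_univ_of_nonneg {E : Type*} [AddCommGroup E] [Module ℝ E] {f : E → ℝ}
    (hf : ConcaveOn ℝ Set.univ f) (hf0 : ∀ x, 0 ≤ f x) (x y : E) : f x ≤ f y := by
  -- `y` lies between `x` and the far away point `y + n • (y - x)`.
  have hn : ∀ n : ℕ, n * (f x - f y) ≤ f y := fun n => by
    have hn1 : (0 : ℝ) < n + 1 := by positivity
    have := hf.2 (Set.mem_univ x) (Set.mem_univ (y + (n : ℝ) • (y - x)))
      (by positivity : (0 : ℝ) ≤ n / (n + 1)) (by positivity : (0 : ℝ) ≤ 1 / (n + 1))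
      (by field_simp)
    have hy : (n / (n + 1) : ℝ) • x + (1 / (n + 1) : ℝ) • (y + (n : ℝ) • (y - x)) = y := by
      match_scalars <;> field_simp <;> ring
    rw [hy, smul_eq_mul, smul_eq_mul, div_mul_eq_mul_div, div_mul_eq_mul_div, ← add_div,
      div_le_iff₀ hn1] at this
    linarith [hf0 (y + (n : ℝ) • (y - x))]
  by_contra! hlt
  obtain ⟨n, hn'⟩ := exists_nat_gt (f y / (f x - f y))
  rw [div_lt_iff₀ (sub_pos.2 hlt)] at hn'
  exact (hn n).not_gt hn'

end Concave

theorem IsScaleEntropy.growthRate_eq_zero [Finite ι] {lam : V →ₗ[ℝ] (ι → ℝ)} {G : (ι → ℝ) → ℝ}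
    {C : ℝ} (h : IsScaleEntropy lam G C) {t u : V} (htu : ∀ s : ℝ, t + s • u ≠ 0) :
    growthRate lam G u = 0 := by
  set f : ℝ → ℝ := fun s => growthRate lam G (t + s • u) with hf
  obtain ⟨M, hM0, hM⟩ := h.exists_growthRate_smul_le u
  have hcont : Continuous f := by
    refine (LipschitzWith.of_le_add_mul ⟨M, hM0⟩ fun a b => ?_).continuous
    have hadd := h.growthRate_add_le (t + b • u) ((a - b) • u)
    rw [show t + b • u + (a - b) • u = t + a • u by module] at hadd
    exact hadd.trans (add_le_add_right (hM (a - b)) _)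
  have hconc : ConcaveOn ℝ Set.univ f :=
    concaveOn_univ_of_locally_midpoint_concave hcont fun s => by
      filter_upwards [h.eventually_growthRate_add_growthRate_sub_le (htu s) u] with δ hδ
      simpa only [hf, add_smul, sub_smul, add_assoc, add_sub_assoc] using hδ
  have hconst := le_of_concaveOn_univ_of_nonneg hconc fun s => h.growthRate_nonneg _
  have hbound : ∀ k : ℕ, k * growthRate lam G u ≤ f 0 + growthRate lam G (-t) := fun k => by
    rcases k.eq_zero_or_pos with rfl | hk
    · simpa using add_nonneg (h.growthRate_nonneg _) (h.growthRate_nonneg _)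
    · have hadd := h.growthRate_add_le (t + (k : ℝ) • u) (-t)
      rw [add_neg_cancel_comm, h.growthRate_natCast_smul u hk] at hadd
      linarith [hconst k 0]
  by_contra hne
  have hpos := (h.growthRate_nonneg u).lt_of_ne' hne
  obtain ⟨k, hk⟩ := exists_nat_gt ((f 0 + growthRate lam G (-t)) / growthRate lam G u)
  rw [div_lt_iff₀ hpos] at hk
  exact (hbound k).not_gt hk

end ScaleEntropy

section IrreducibleActions

open Matrix

variable {d N : ℕ}

theorem linearMap_apply_eq_sum_single {R M ι : Type*} [Semiring R] [AddCommMonoid M] [Module R M]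
    [Fintype ι] [DecidableEq ι] (f : (ι → R) →ₗ[R] M) (x : ι → R) :
    f x = ∑ i, x i • f (Pi.single i 1) := by
  conv_lhs => rw [← Finset.univ_sum_single x, map_sum]
  exact Finset.sum_congr rfl fun i _ => by
    rw [← map_smul, ← Pi.single_smul, smul_eq_mul, mul_one]

section Annihilator

/-- The annihilator, in the torus, of the integral characters lying in a rational subspace `P` of
the space of characters. -/
def torusAnnihilator (P : Submodule ℚ (Fin N → ℚ)) : AddSubgroup (Fin N → UnitAddCircle) where
  carrier := {x | ∀ ξ : Fin N → ℤ, ((↑) ∘ ξ : Fin N → ℚ) ∈ P → ∑ j, ξ j • x j = 0}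
  zero_mem' := by simp
  add_mem' ha hb ξ hξ := by simp [Finset.sum_add_distrib, ha ξ hξ, hb ξ hξ]
  neg_mem' ha ξ hξ := by simp [ha ξ hξ]

variable {P : Submodule ℚ (Fin N → ℚ)}

theorem mem_torusAnnihilator {x : Fin N → UnitAddCircle} :
    x ∈ torusAnnihilator P ↔
      ∀ ξ : Fin N → ℤ, ((↑) ∘ ξ : Fin N → ℚ) ∈ P → ∑ j, ξ j • x j = 0 :=
  Iff.rfl

theorem isClosed_torusAnnihilator (P : Submodule ℚ (Fin N → ℚ)) :
    IsClosed (torusAnnihilator P : Set (Fin N → UnitAddCircle)) := by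
  simp only [torusAnnihilator, AddSubgroup.coe_set_mk, AddSubmonoid.coe_set_mk,
    AddSubsemigroup.coe_set_mk, Set.ofPred_forall]
  exact isClosed_iInter fun ξ => isClosed_iInter fun _ =>
    isClosed_eq (by fun_prop) continuous_const

theorem sum_zsmul_toralMap (A : Matrix (Fin N) (Fin N) ℤ) (ξ : Fin N → ℤ)
    (x : Fin N → UnitAddCircle) : ∑ j, ξ j • toralMap A x j = ∑ j, (ξ ᵥ* A) j • x j := by
  simp only [toralMap, vecMul, dotProduct, Finset.smul_sum, Finset.sum_smul, smul_smul]
  exact Finset.sum_comm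

theorem toralMap_mem_torusAnnihilator {A : Matrix (Fin N) (Fin N) ℤ}
    (hA : ∀ ξ ∈ P, ξ ᵥ* A.map (↑) ∈ P) {x : Fin N → UnitAddCircle}
    (hx : x ∈ torusAnnihilator P) : toralMap A x ∈ torusAnnihilator P := by
  intro ξ hξ
  rw [sum_zsmul_toralMap]
  refine hx _ ?_
  convert hA _ hξ
  exact (Int.castRingHom ℚ).map_vecMul A ξ |> funext

theorem infinite_unitAddCircle : Infinite UnitAddCircle := by
  have : Infinite (Set.Ico (0 : ℝ) (0 + 1)) := (Set.Ico_infinite (by norm_num)).to_subtype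
  exact (AddCircle.equivIco (1 : ℝ) 0).infinite_iff.mpr this

theorem smul_mem_torusAnnihilator {φ : Module.Dual ℚ (Fin N → ℚ)} (hφ : P ≤ LinearMap.ker φ)
    (t : ℝ) :
    (fun i => ((t * φ (Pi.single i 1) : ℝ) : UnitAddCircle)) ∈ torusAnnihilator P := by
  intro ξ hξ
  have hsum : ∑ i, (ξ i : ℝ) * φ (Pi.single i 1) = 0 := by
    have := hφ hξ
    rw [LinearMap.mem_ker, linearMap_apply_eq_sum_single] at this
    exact_mod_cast this
  calc ∑ i, ξ i • ((t * φ (Pi.single i 1) : ℝ) : UnitAddCircle)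
      = ((∑ i, ξ i • (t * φ (Pi.single i 1) : ℝ) : ℝ) : UnitAddCircle) :=
        (map_sum (QuotientAddGroup.mk' (AddSubgroup.zmultiples (1 : ℝ))) _ _).symm
    _ = ((t * ∑ i, (ξ i : ℝ) * φ (Pi.single i 1) : ℝ) : UnitAddCircle) := by
        simp only [Finset.mul_sum, zsmul_eq_mul, mul_left_comm]
    _ = 0 := by simp [hsum]

theorem infinite_torusAnnihilator (hP : P ≠ ⊤) :
    (torusAnnihilator P : Set (Fin N → UnitAddCircle)).Infinite := by
  obtain ⟨φ, hφ_ne, hφ⟩ := P.exists_le_ker_of_lt_top hP.lt_top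
  obtain ⟨j, hj⟩ : ∃ j, φ (Pi.single j 1) ≠ 0 := by
    by_contra! h
    exact hφ_ne (LinearMap.pi_ext' fun i => LinearMap.ext_ring (by simpa using h i))
  have hsurj : Set.univ ⊆ (fun x => x j) '' (torusAnnihilator P : Set (Fin N → UnitAddCircle)) := by
    intro c _
    obtain ⟨r, rfl⟩ := QuotientAddGroup.mk_surjective c
    have hjℝ : (φ (Pi.single j 1) : ℝ) ≠ 0 := Rat.cast_ne_zero.mpr hj
    refine ⟨_, smul_mem_torusAnnihilator hφ (r / φ (Pi.single j 1)), ?_⟩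
    simp only [div_mul_cancel₀ _ hjℝ]
  have := infinite_unitAddCircle
  exact (Set.infinite_univ.mono hsurj).of_image _

theorem exists_integral_mem_of_ne_bot (hP : P ≠ ⊥) :
    ∃ ξ : Fin N → ℤ, ξ ≠ 0 ∧ ((↑) ∘ ξ : Fin N → ℚ) ∈ P := by
  obtain ⟨x, hxP, hx⟩ := P.exists_mem_ne_zero_of_ne_bot hP
  obtain ⟨b, hb⟩ := IsLocalization.exist_integer_multiples_of_finite (nonZeroDivisors ℤ) x
  choose ξ hξ using hb
  have hξx : ((↑) ∘ ξ : Fin N → ℚ) = ((b : ℤ) : ℚ) • x := by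
    ext j
    simpa using hξ j
  refine ⟨ξ, ?_, hξx ▸ P.smul_mem _ hxP⟩
  rintro rfl
  have hb : ((b : ℤ) : ℚ) ≠ 0 := by exact_mod_cast nonZeroDivisors.coe_ne_zero b
  exact smul_ne_zero hb hx (hξx.symm.trans (by ext; simp))

theorem torusAnnihilator_ne_top (hP : P ≠ ⊥) : torusAnnihilator P ≠ ⊤ := by
  intro htop
  obtain ⟨ξ, hξ, hξP⟩ := exists_integral_mem_of_ne_bot hP
  obtain ⟨j, hj⟩ := Function.ne_iff.mp hξ
  let x : Fin N → UnitAddCircle := Pi.single j ((1 / (2 * ξ j) : ℝ) : UnitAddCircle)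
  have hx : ∑ i, ξ i • x i = 0 := mem_torusAnnihilator.mp (htop ▸ AddSubgroup.mem_top x) ξ hξP
  rw [Finset.sum_eq_single j (fun i _ hi => by simp [x, hi]) (by simp)] at hx
  simp only [x, Pi.single_eq_same] at hx
  rw [← AddCircle.coe_zsmul, AddCircle.coe_eq_zero_iff] at hx
  obtain ⟨n, hn⟩ := hx
  have hjℝ : (ξ j : ℝ) ≠ 0 := Int.cast_ne_zero.mpr hj
  have : (2 * n : ℝ) = 1 := by
    rw [zsmul_eq_mul, mul_one, zsmul_eq_mul] at hn
    rw [hn]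
    field_simp
  have : 2 * n = 1 := by exact_mod_cast this
  lia

theorem IsIrreducibleOn.eq_bot_or_eq_top {α : (Fin d → ℤ) → Matrix (Fin N) (Fin N) ℤ}
    {Λ : AddSubgroup (Fin d → ℤ)} (hα : IsIrreducibleOn α Λ)
    (hP : ∀ v ∈ Λ, ∀ ξ ∈ P, ξ ᵥ* (α v).map (↑) ∈ P) : P = ⊥ ∨ P = ⊤ := by
  by_contra! h
  exact infinite_torusAnnihilator h.2 <| hα _ (isClosed_torusAnnihilator P)
    (fun v hv _ hx => toralMap_mem_torusAnnihilator (hP v hv) hx) (torusAnnihilator_ne_top h.1)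

end Annihilator

/-- The rational representation of `ℤ^d` on row vectors, i.e. on the rationalized character group
of the torus, dual to the action `α`. -/
def dualRep (α : AddChar (Fin d → ℤ) (Matrix (Fin N) (Fin N) ℤ)) :
    Representation ℚ (Multiplicative (Fin d → ℤ)) (Fin N → ℚ) where
  toFun v := ((α v.toAdd).map (↑)).vecMulLinear
  map_one' := by
    ext
    simp
  map_mul' v w := by
    rw [mul_comm, toAdd_mul, α.map_add_eq_mul]
    refine LinearMap.ext fun ξ => ?_
    simp [Matrix.map_mul_intCast, vecMul_vecMul]

theorem dualRep_apply (α : AddChar (Fin d → ℤ) (Matrix (Fin N) (Fin N) ℤ)) (v : Fin d → ℤ)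
    (ξ : Fin N → ℚ) : dualRep α (.ofAdd v) ξ = ξ ᵥ* (α v).map (↑) :=
  rfl

theorem isIrreducible_dualRep [NeZero N] {α : AddChar (Fin d → ℤ) (Matrix (Fin N) (Fin N) ℤ)}
    (hα : IsIrreducibleOn α ⊤) : (dualRep α).IsIrreducible where
  exists_pair_ne := ⟨⊥, ⊤, fun h => bot_ne_top (congrArg Subrepresentation.toSubmodule h)⟩
  eq_bot_or_eq_top P :=
    (hα.eq_bot_or_eq_top fun v _ _ hξ => P.apply_mem_toSubmodule (.ofAdd v) hξ).imp
      (fun h => Subrepresentation.toSubmodule_injective h)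
      (fun h => Subrepresentation.toSubmodule_injective h)

open scoped MonoidAlgebra in
/-- A simple module over the commutative ring `k[G]` is a quotient by a maximal ideal. -/
theorem exists_field_of_isIrreducible {k G V : Type} [Field k] [CommMonoid G] [AddCommGroup V]
    [Module k V] (ρ : Representation k G V) (hρ : ρ.IsIrreducible) :
    ∃ (K : Type) (_ : Field K) (_ : Algebra k K) (κ : V ≃ₗ[k] K) (r : G →* K),
      ∀ g x, κ (ρ g x) = r g * κ x := by
  obtain ⟨I, hI, ⟨e⟩⟩ := isSimpleModule_iff_quot_maximal.mp
    ((Representation.irreducible_iff_isSimpleModule_asModule ρ).mp hρ)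
  refine ⟨k[G] ⧸ I, Ideal.Quotient.field I, inferInstance,
    ρ.asModuleEquiv.symm.trans (e.restrictScalars k),
    (Ideal.Quotient.mk I : k[G] →* k[G] ⧸ I).comp (MonoidAlgebra.of k G), fun g x => ?_⟩
  simp only [LinearEquiv.trans_apply, LinearEquiv.restrictScalars_apply,
    Representation.asModuleEquiv_symm_map_rho, map_smul, MonoidHom.comp_apply]
  exact Algebra.smul_def (A := k[G] ⧸ I) _ _

/-- A common eigenbasis of the action `α`: the columns of `E` are eigenvectors, the `i`-th one with
eigencharacter `χ i`. The last three conditions express faithfulness and strong irreducibility: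
no nonzero integral character kills an eigenvector, and the eigencharacters are faithful and
pairwise different on every finite-index subgroup. -/
structure IsEigenbasis (α : AddChar (Fin d → ℤ) (Matrix (Fin N) (Fin N) ℤ))
    (E : Matrix (Fin N) (Fin N) ℂ) (χ : Fin N → AddChar (Fin d → ℤ) ℂ) : Prop where
  det_ne_zero : E.det ≠ 0
  map_mul_eq (v : Fin d → ℤ) : (α v).map (↑) * E = E * diagonal fun i => χ i v
  vecMul_apply_ne_zero {ξ : Fin N → ℤ} (hξ : ξ ≠ 0) (i : Fin N) : ((↑) ∘ ξ ᵥ* E) i ≠ 0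
  char_ne_one (i : Fin N) {v : Fin d → ℤ} (hv : v ≠ 0) : χ i v ≠ 1
  exists_char_pow_ne {i j : Fin N} (hij : i ≠ j) {n : ℕ} (hn : 0 < n) :
    ∃ v, χ i v ^ n ≠ χ j v ^ n

section Field

variable {α : AddChar (Fin d → ℤ) (Matrix (Fin N) (Fin N) ℤ)} {K : Type*} [Field K] [Algebra ℚ K]
  (κ : (Fin N → ℚ) ≃ₗ[ℚ] K) {r : Multiplicative (Fin d → ℤ) →* K}

theorem algHom_apply_eq_sum (σ : K →ₐ[ℚ] ℂ) (ξ : Fin N → ℚ) :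
    σ (κ ξ) = ∑ j, (ξ j : ℂ) * σ (κ (Pi.single j 1)) := by
  have := linearMap_apply_eq_sum_single (σ.toLinearMap ∘ₗ κ.toLinearMap) ξ
  simpa [Algebra.smul_def] using this

variable {κ}

theorem eq_one_of_field_char_eq_one (hκ : ∀ v ξ, κ (dualRep α v ξ) = r v * κ ξ)
    {v : Fin d → ℤ} (hv : r (.ofAdd v) = 1) : α v = 1 := by
  ext j k
  have h := hκ (.ofAdd v) (Pi.single j 1)
  rw [hv, one_mul] at h
  have := congrFun (κ.injective h) k
  rw [dualRep_apply, single_one_vecMul, row_apply, map_apply, Pi.single_apply] at this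
  rw [one_apply]
  simp only [eq_comm (a := k)] at this
  exact_mod_cast this

theorem exists_field_char_pow_ne (hκ : ∀ v ξ, κ (dualRep α v ξ) = r v * κ ξ)
    (hα : ∀ Λ : AddSubgroup (Fin d → ℤ), Λ.FiniteIndex → IsIrreducibleOn α Λ)
    {σ τ : K →ₐ[ℚ] ℂ} (hστ : σ ≠ τ) {n : ℕ} (hn : 0 < n) :
    ∃ v, σ (r v) ^ n ≠ τ (r v) ^ n := by
  by_contra! heq
  let P : Submodule ℚ (Fin N → ℚ) :=
    (LinearMap.eqLocus σ.toLinearMap τ.toLinearMap).comap κ.toLinearMap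
  have hP : ∀ ξ, ξ ∈ P ↔ σ (κ ξ) = τ (κ ξ) := fun _ => Iff.rfl
  have : NeZero n := ⟨hn.ne'⟩
  let f : (Fin d → ℤ) →+ (Fin d → ZMod n) := (Int.castAddHom (ZMod n)).compLeft (Fin d)
  have hinv : ∀ v ∈ f.ker, ∀ ξ ∈ P, ξ ᵥ* (α v).map (↑) ∈ P := by
    intro v hv ξ hξ
    choose w hw using fun k => (ZMod.intCast_zmod_eq_zero_iff_dvd (v k) n).mp (congrFun hv k)
    have hvw : Multiplicative.ofAdd v = .ofAdd w ^ n := by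
      rw [← ofAdd_nsmul]
      congr 1
      ext k
      simp [hw k]
    rw [hP] at hξ ⊢
    rw [← dualRep_apply, hκ, hvw, map_pow, map_mul, map_mul, map_pow, map_pow, heq, hξ]
  rcases (hα f.ker inferInstance).eq_bot_or_eq_top hinv with h | h
  · have : κ.symm 1 ∈ P := by simp [hP]
    simp [h] at this
  · refine hστ (AlgHom.ext fun k => ?_)
    have : κ.symm k ∈ P := h ▸ Submodule.mem_top
    simpa [hP] using this

/-- The eigenbasis is the matrix of embeddings `K → ℂ` evaluated on the basis of `K` coming from
the standard basis; it is invertible because the discriminant of `K` does not vanish. -/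
theorem exists_isEigenbasis_of_field (hκ : ∀ v ξ, κ (dualRep α v ξ) = r v * κ ξ)
    (hfaithful : ∀ v, v ≠ 0 → α v ≠ 1)
    (hα : ∀ Λ : AddSubgroup (Fin d → ℤ), Λ.FiniteIndex → IsIrreducibleOn α Λ) :
    ∃ E χ, IsEigenbasis α E χ := by
  have : FiniteDimensional ℚ K := Module.Finite.equiv κ
  have hcard : Fintype.card (K →ₐ[ℚ] ℂ) = N := by
    rw [AlgHom.card, ← κ.finrank_eq, Module.finrank_fin_fun]
  let e : Fin N ≃ (K →ₐ[ℚ] ℂ) := (Fintype.equivFinOfCardEq hcard).symm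
  let b : Module.Basis (Fin N) ℚ K := (Pi.basisFun ℚ (Fin N)).map κ
  have hE : ∀ j i, Algebra.embeddingsMatrixReindex ℚ ℂ b e j i = e i (κ (Pi.single j 1)) := by
    simp [Algebra.embeddingsMatrixReindex, Algebra.embeddingsMatrix, b]
  refine ⟨Algebra.embeddingsMatrixReindex ℚ ℂ b e,
    fun i => AddChar.toMonoidHomEquiv.symm ((e i : K →* ℂ).comp r), ?_, fun v => ?_,
    fun {ξ} hξ i => ?_, fun i v hv h => ?_, fun hij n hn => ?_⟩
  · intro hdet
    have := Algebra.discr_eq_det_embeddingsMatrixReindex_pow_two ℚ ℂ b e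
    simp [hdet, Algebra.discr_not_zero_of_basis ℚ b] at this
  · ext j i
    have := congrArg (e i) (hκ (.ofAdd v) (Pi.single j 1))
    rw [map_mul, algHom_apply_eq_sum κ, dualRep_apply, single_one_vecMul, mul_comm] at this
    rw [mul_diagonal, hE, mul_apply]
    simpa [hE, mul_comm] using this
  · have hξ' : ((↑) ∘ ξ : Fin N → ℚ) ≠ 0 := fun h => hξ (funext fun j => by
      simpa using congrFun h j)
    have := algHom_apply_eq_sum κ (e i) ((↑) ∘ ξ)
    simp only [Function.comp_apply, Rat.cast_intCast] at this
    simp only [vecMul, dotProduct, Function.comp_apply, hE, ← this]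
    simpa using hξ'
  · exact hfaithful v hv (eq_one_of_field_char_eq_one hκ ((e i).injective (by simpa using h)))
  · exact exists_field_char_pow_ne hκ hα (e.injective.ne hij) hn

end Field

theorem exists_isEigenbasis {α : AddChar (Fin d → ℤ) (Matrix (Fin N) (Fin N) ℤ)}
    (hfaithful : ∀ v, v ≠ 0 → α v ≠ 1)
    (hα : ∀ Λ : AddSubgroup (Fin d → ℤ), Λ.FiniteIndex → IsIrreducibleOn α Λ) :
    ∃ E χ, IsEigenbasis α E χ := by
  rcases N.eq_zero_or_pos with rfl | hN
  · exact ⟨1, Fin.elim0, by simp, fun _ => Subsingleton.elim _ _,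
      fun hξ => absurd (Subsingleton.elim _ _) hξ, fun i => i.elim0, fun {i} => i.elim0⟩
  have : NeZero N := ⟨hN.ne'⟩
  obtain ⟨K, _, _, κ, r, hκ⟩ :=
    exists_field_of_isIrreducible _ (isIrreducible_dualRep (hα ⊤ inferInstance))
  exact exists_isEigenbasis_of_field hκ hfaithful hα

end IrreducibleActions

section EigenCoordinates

open Matrix

variable {d N : ℕ}

/-- The representative in `[0, 1)^N` of a point of the torus. -/
noncomputable def toralLift (x : Fin N → UnitAddCircle) : Fin N → ℝ :=
  fun j => AddCircle.equivIco (1 : ℝ) 0 (x j)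

theorem toralLift_mem_Ico (x : Fin N → UnitAddCircle) (j : Fin N) :
    toralLift x j ∈ Set.Ico (0 : ℝ) 1 := by
  simpa [toralLift] using (AddCircle.equivIco (1 : ℝ) 0 (x j)).2

theorem coe_toralLift (x : Fin N → UnitAddCircle) (j : Fin N) :
    (toralLift x j : UnitAddCircle) = x j :=
  AddCircle.coe_equivIco

theorem norm_toralLift_le_one (x : Fin N → UnitAddCircle) : ‖toralLift x‖ ≤ 1 :=
  (pi_norm_le_iff_of_nonneg zero_le_one).mpr fun j => by
    obtain ⟨h0, h1⟩ := toralLift_mem_Ico x j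
    rw [Real.norm_of_nonneg h0]
    exact h1.le

theorem measurable_toralLift : Measurable (toralLift (N := N)) :=
  measurable_pi_lambda _ fun j =>
    (measurable_subtype_coe.comp (AddCircle.measurableEquivIco (1 : ℝ) 0).measurable).comp
      (measurable_pi_apply j)

theorem continuous_toralMap (A : Matrix (Fin N) (Fin N) ℤ) : Continuous (toralMap A) := by
  unfold toralMap
  fun_prop

theorem coe_mulVec (A : Matrix (Fin N) (Fin N) ℤ) (y : Fin N → ℝ) (i : Fin N) :
    (((A.map (↑) *ᵥ y) i : ℝ) : UnitAddCircle) = toralMap A (fun j => (y j : UnitAddCircle)) i := by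
  simp only [mulVec, dotProduct, toralMap]
  refine (map_sum (QuotientAddGroup.mk' (AddSubgroup.zmultiples (1 : ℝ))) _ _).trans ?_
  refine Finset.sum_congr rfl fun j _ => ?_
  rw [← AddCircle.coe_zsmul, zsmul_eq_mul]
  rfl

theorem exists_toralLift_toralMap_eq (A : Matrix (Fin N) (Fin N) ℤ) (x : Fin N → UnitAddCircle) :
    ∃ z : Fin N → ℤ, toralLift (toralMap A x) = A.map (↑) *ᵥ toralLift x + (↑) ∘ z := by
  have hcoord : ∀ i, ∃ z : ℤ,
      toralLift (toralMap A x) i = (A.map (↑) *ᵥ toralLift x) i + z := by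
    intro i
    have h : (toralLift (toralMap A x) i : UnitAddCircle) = (A.map (↑) *ᵥ toralLift x) i := by
      rw [coe_toralLift, coe_mulVec]
      simp only [coe_toralLift]
    rw [← sub_eq_zero, ← AddCircle.coe_sub, AddCircle.coe_eq_zero_iff] at h
    obtain ⟨n, hn⟩ := h
    refine ⟨n, ?_⟩
    rw [zsmul_eq_mul, mul_one] at hn
    linarith
  choose z hz using hcoord
  exact ⟨z, funext hz⟩

/-- The coordinates of a real vector in the basis of `ℂ^N` formed by the columns of `E`. -/
noncomputable def eigenCoord (E : Matrix (Fin N) (Fin N) ℂ) : (Fin N → ℝ) →ₗ[ℝ] (Fin N → ℂ) :=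
  (E⁻¹.mulVecLin.restrictScalars ℝ) ∘ₗ Complex.ofRealCLM.toLinearMap.compLeft (Fin N)

theorem eigenCoord_apply (E : Matrix (Fin N) (Fin N) ℂ) (y : Fin N → ℝ) :
    eigenCoord E y = E⁻¹ *ᵥ fun j => (y j : ℂ) :=
  rfl

theorem exists_norm_linearMap_le {V W : Type*} [NormedAddCommGroup V] [NormedSpace ℝ V]
    [FiniteDimensional ℝ V] [NormedAddCommGroup W] [NormedSpace ℝ W] (f : V →ₗ[ℝ] W) :
    ∃ c, 0 ≤ c ∧ ∀ y, ‖f y‖ ≤ c * ‖y‖ :=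
  ⟨_, norm_nonneg _, (LinearMap.toContinuousLinearMap f).le_opNorm⟩

theorem mulVec_eigenCoord {E : Matrix (Fin N) (Fin N) ℂ} (hE : E.det ≠ 0) (y : Fin N → ℝ) :
    E *ᵥ eigenCoord E y = fun j => (y j : ℂ) := by
  rw [eigenCoord_apply, mulVec_mulVec, mul_nonsing_inv _ hE.isUnit, one_mulVec]

theorem exists_norm_le_eigenCoord {E : Matrix (Fin N) (Fin N) ℂ} (hE : E.det ≠ 0) :
    ∃ c, 0 ≤ c ∧ ∀ y, ‖y‖ ≤ c * ‖eigenCoord E y‖ := by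
  obtain ⟨c, hc, hcE⟩ := exists_norm_linearMap_le (E.mulVecLin.restrictScalars ℝ)
  refine ⟨c, hc, fun y => ?_⟩
  have h := hcE (eigenCoord E y)
  rw [LinearMap.restrictScalars_apply, mulVecLin_apply, mulVec_eigenCoord hE] at h
  exact (pi_norm_le_iff_of_nonneg (by positivity)).mpr fun j => by
    simpa using (norm_le_pi_norm _ j).trans h

variable {α : AddChar (Fin d → ℤ) (Matrix (Fin N) (Fin N) ℤ)} {E : Matrix (Fin N) (Fin N) ℂ}
  {χ : Fin N → AddChar (Fin d → ℤ) ℂ}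

theorem IsEigenbasis.eigenCoord_mulVec (h : IsEigenbasis α E χ) (v : Fin d → ℤ) (y : Fin N → ℝ)
    (i : Fin N) : eigenCoord E ((α v).map (↑) *ᵥ y) i = χ i v * eigenCoord E y i := by
  have hcast : (fun j => ((((α v).map (↑) *ᵥ y) j : ℝ) : ℂ)) =
      (α v).map (↑) *ᵥ (E *ᵥ eigenCoord E y) := by
    rw [mulVec_eigenCoord h.det_ne_zero]
    ext j
    simp [mulVec, dotProduct]
  rw [eigenCoord_apply, hcast, mulVec_mulVec, mulVec_mulVec, Matrix.mul_assoc, h.map_mul_eq,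
    ← Matrix.mul_assoc, nonsing_inv_mul _ h.det_ne_zero.isUnit, Matrix.one_mul, mulVec_diagonal]

theorem IsEigenbasis.ofReal_dotProduct_eq (h : IsEigenbasis α E χ) (ξ : Fin N → ℤ)
    (y : Fin N → ℝ) :
    (((↑) ∘ ξ ⬝ᵥ y : ℝ) : ℂ) = ((↑) ∘ ξ ᵥ* E) ⬝ᵥ eigenCoord E y := by
  rw [← dotProduct_mulVec, mulVec_eigenCoord h.det_ne_zero]
  simp [dotProduct]

section Lyapunov

/-- The Lyapunov exponents, to base two, of the characters `χ i`, extended linearly to `ℝ^d`. -/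
noncomputable def lyapunov (χ : Fin N → AddChar (Fin d → ℤ) ℂ) :
    (Fin d → ℝ) →ₗ[ℝ] (Fin N → ℝ) :=
  LinearMap.pi fun i => ∑ k, Real.logb 2 ‖χ i (Pi.single k 1)‖ • LinearMap.proj k

theorem char_ne_zero {A : Type*} [AddGroup A] (ψ : AddChar A ℂ) (v : A) : ψ v ≠ 0 :=
  (ψ.val_isUnit v).ne_zero

theorem logb_norm_char_eq_lyapunov (χ : Fin N → AddChar (Fin d → ℤ) ℂ) (i : Fin N)
    (v : Fin d → ℤ) : Real.logb 2 ‖χ i v‖ = lyapunov χ ((↑) ∘ v) i := by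
  let f : (Fin d → ℤ) →+ ℝ :=
    { toFun := fun v => Real.logb 2 ‖χ i v‖
      map_zero' := by simp
      map_add' := fun a b => by
        rw [AddChar.map_add_eq_mul, norm_mul,
          Real.logb_mul (norm_ne_zero_iff.mpr (char_ne_zero _ a))
            (norm_ne_zero_iff.mpr (char_ne_zero _ b))] }
  have hf := linearMap_apply_eq_sum_single f.toIntLinearMap v
  simpa [lyapunov, f, mul_comm] using hf

theorem norm_char_eq_two_rpow (χ : Fin N → AddChar (Fin d → ℤ) ℂ) (i : Fin N)
    (v : Fin d → ℤ) : ‖χ i v‖ = (2 : ℝ) ^ lyapunov χ ((↑) ∘ v) i := by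
  rw [← logb_norm_char_eq_lyapunov,
    Real.rpow_logb two_pos (by norm_num) (norm_pos_iff.mpr (char_ne_zero _ v))]

theorem exists_abs_lyapunov_sub_floor_le (χ : Fin N → AddChar (Fin d → ℤ) ℂ) :
    ∃ c, 0 ≤ c ∧ ∀ (t : Fin d → ℝ) (i : Fin N),
      |lyapunov χ t i - lyapunov χ (fun k => ((⌊t k⌋ : ℤ) : ℝ)) i| ≤ c := by
  obtain ⟨c, hc, hcχ⟩ := exists_norm_linearMap_le (lyapunov χ)
  refine ⟨c, hc, fun t i => ?_⟩
  have hfract : ‖t - fun k => ((⌊t k⌋ : ℤ) : ℝ)‖ ≤ 1 :=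
    (pi_norm_le_iff_of_nonneg zero_le_one).mpr fun k => by
      rw [Pi.sub_apply, Int.self_sub_floor, Real.norm_of_nonneg (Int.fract_nonneg _)]
      exact (Int.fract_lt_one _).le
  calc |lyapunov χ t i - lyapunov χ (fun k => ((⌊t k⌋ : ℤ) : ℝ)) i|
      = ‖lyapunov χ (t - fun k => ((⌊t k⌋ : ℤ) : ℝ)) i‖ := by
        rw [map_sub, Pi.sub_apply, Real.norm_eq_abs]
    _ ≤ c * ‖t - fun k => ((⌊t k⌋ : ℤ) : ℝ)‖ := (norm_le_pi_norm _ i).trans (hcχ _)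
    _ ≤ c := mul_le_of_le_one_right hc hfract

end Lyapunov

end EigenCoordinates

section DyadicCells

/-- The square of side `2⁻ᵏ` containing `z`, in the dyadic subdivision of the complex plane. -/
noncomputable def dyadicCell (k : ℕ) (z : ℂ) : ℤ × ℤ :=
  (⌊2 ^ k * z.re⌋, ⌊2 ^ k * z.im⌋)

/-- The dyadic square of side `2ᶜ` times larger containing a given dyadic square. -/
def coarsen (c : ℕ) (p : ℤ × ℤ) : ℤ × ℤ :=
  (p.1 / 2 ^ c, p.2 / 2 ^ c)

theorem coarsen_dyadicCell (k c : ℕ) (z : ℂ) :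
    coarsen c (dyadicCell (k + c) z) = dyadicCell k z := by
  have hfloor : ∀ r : ℝ, ⌊2 ^ (k + c) * r⌋ / (2 : ℤ) ^ c = ⌊2 ^ k * r⌋ := by
    intro r
    have := Int.floor_div_natCast (2 ^ (k + c) * r) (2 ^ c)
    push_cast at this
    rw [← this, pow_add]
    congr 1
    field_simp
  simp only [coarsen, dyadicCell, hfloor]

theorem norm_sub_le_of_dyadicCell_eq {k : ℕ} {z w : ℂ} (h : dyadicCell k z = dyadicCell k w) :
    ‖z - w‖ ≤ 2 / 2 ^ k := by
  have hreal : ∀ r s : ℝ, ⌊2 ^ k * r⌋ = ⌊2 ^ k * s⌋ → |r - s| ≤ 1 / 2 ^ k := by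
    intro r s hrs
    have := (Int.abs_sub_lt_one_of_floor_eq_floor hrs).le
    rw [← mul_sub, abs_mul, abs_of_pos (by positivity)] at this
    rw [le_div_iff₀ (by positivity)]
    linarith
  obtain ⟨hre, him⟩ := Prod.mk.inj h
  calc ‖z - w‖ ≤ |(z - w).re| + |(z - w).im| := Complex.norm_le_abs_re_add_abs_im _
    _ ≤ 1 / 2 ^ k + 1 / 2 ^ k := add_le_add (hreal _ _ hre) (hreal _ _ him)
    _ = 2 / 2 ^ k := by ring

theorem abs_floor_sub_floor_le {a b : ℝ} {B : ℕ} (h : |a - b| ≤ B) : |⌊a⌋ - ⌊b⌋| ≤ (B : ℤ) + 1 := by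
  obtain ⟨h₁, h₂⟩ := abs_le.mp h
  have hlt : |((⌊a⌋ - ⌊b⌋ : ℤ) : ℝ)| < ((B + 2 : ℤ) : ℝ) := by
    push_cast
    rw [abs_lt]
    constructor <;>
      linarith [Int.floor_le a, Int.lt_floor_add_one a, Int.floor_le b, Int.lt_floor_add_one b]
  have : |⌊a⌋ - ⌊b⌋| < (B : ℤ) + 2 := by exact_mod_cast hlt
  lia

theorem dyadicCell_sub_mem_Icc {k B : ℕ} {z w : ℂ} (h : ‖z - w‖ * 2 ^ k ≤ B) :
    dyadicCell k z - dyadicCell k w ∈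
      Set.Icc ((-(B + 1), -(B + 1)) : ℤ × ℤ) ((B + 1, B + 1) : ℤ × ℤ) := by
  have hreal : ∀ r s : ℝ, |r - s| ≤ ‖z - w‖ → |⌊2 ^ k * r⌋ - ⌊2 ^ k * s⌋| ≤ (B : ℤ) + 1 := by
    intro r s hrs
    refine abs_floor_sub_floor_le (le_trans ?_ h)
    rw [← mul_sub, abs_mul, abs_of_pos (by positivity), mul_comm]
    gcongr
  have hre := abs_le.mp (hreal z.re w.re (Complex.abs_re_le_norm (z - w)))
  have him := abs_le.mp (hreal z.im w.im (Complex.abs_im_le_norm (z - w)))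
  exact ⟨⟨hre.1, him.1⟩, ⟨hre.2, him.2⟩⟩

theorem exists_finset_setOf_coarsen_eq_subset {ι : Type*} [Fintype ι] (c : ℕ) (p : ι → ℤ × ℤ) :
    ∃ S : Finset (ι → ℤ × ℤ), S.card = (2 ^ c * 2 ^ c) ^ Fintype.card ι ∧
      {q : ι → ℤ × ℤ | ∀ i, coarsen c (q i) = p i} ⊆ S := by
  classical
  have hcard : ((2 : ℤ) ^ c).toNat = 2 ^ c := by
    rw [← Int.toNat_natCast (2 ^ c)]
    push_cast
    rfl
  have hmem : ∀ a : ℤ, a ∈ Finset.Ico (a / 2 ^ c * 2 ^ c) (a / 2 ^ c * 2 ^ c + 2 ^ c) := by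
    intro a
    have hpos : (0 : ℤ) < 2 ^ c := by positivity
    rw [Finset.mem_Ico]
    constructor <;>
      linarith [Int.emod_add_mul_ediv a (2 ^ c), Int.emod_nonneg a hpos.ne',
        Int.emod_lt_of_pos a hpos]
  refine ⟨Fintype.piFinset fun i =>
    Finset.Ico ((p i).1 * 2 ^ c) ((p i).1 * 2 ^ c + 2 ^ c) ×ˢ
      Finset.Ico ((p i).2 * 2 ^ c) ((p i).2 * 2 ^ c + 2 ^ c),
    by simp [Fintype.card_piFinset, hcard], fun q hq => ?_⟩
  simp only [Finset.mem_coe, Fintype.mem_piFinset, Finset.mem_product]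
  intro i
  rw [← hq i]
  exact ⟨hmem _, hmem _⟩

theorem ncard_le_of_forall_sub_mem {A ι : Type*} [AddCommGroup A] {S : Set A} {Z : Finset ι}
    {F : ι → A} {B : Finset A} (h : ∀ s ∈ S, ∃ z ∈ Z, s - F z ∈ B) :
    S.ncard ≤ Z.card * B.card := by
  classical
  have hS : S ⊆ ((Z ×ˢ B).image fun p => F p.1 + p.2 : Finset A) := by
    intro s hs
    obtain ⟨z, hz, hsz⟩ := h s hs
    rw [Finset.coe_image]
    exact ⟨(z, s - F z), Finset.mem_product.mpr ⟨hz, hsz⟩, add_sub_cancel _ _⟩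
  calc S.ncard ≤ ((Z ×ˢ B).image fun p => F p.1 + p.2).card := by
        rw [← Set.ncard_coe_finset]
        exact Set.ncard_le_ncard hS (Finset.finite_toSet _)
    _ ≤ (Z ×ˢ B).card := Finset.card_image_le
    _ = Z.card * B.card := Finset.card_product ..

end DyadicCells

section EigenGrid

open Matrix

variable {d N : ℕ}

/-- The vectors of dyadic squares with all coordinates between `-B` and `B`. -/
noncomputable def cellBox (N B : ℕ) : Finset (Fin N → ℤ × ℤ) :=
  Finset.Icc (fun _ => (-B, -B)) (fun _ => (B, B))

theorem dyadicCell_sub_mem_cellBox {B : ℕ} {k : Fin N → ℕ} {z w : Fin N → ℂ}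
    (h : ∀ i, ‖z i - w i‖ * 2 ^ k i ≤ B) :
    (fun i => dyadicCell (k i) (z i)) - (fun i => dyadicCell (k i) (w i)) ∈ cellBox N (B + 1) := by
  rw [cellBox, Finset.mem_Icc, Pi.le_def, Pi.le_def]
  exact ⟨fun i => by exact_mod_cast (dyadicCell_sub_mem_Icc (h i)).1,
    fun i => by exact_mod_cast (dyadicCell_sub_mem_Icc (h i)).2⟩

theorem measurable_dyadicCell (k : ℕ) : Measurable (dyadicCell k) :=
  (Int.measurable_floor.comp (Complex.measurable_re.const_mul _)).prodMk
    (Int.measurable_floor.comp (Complex.measurable_im.const_mul _))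

theorem measurable_dyadicCell_eigenCoord (E : Matrix (Fin N) (Fin N) ℂ) (k : Fin N → ℕ) :
    Measurable fun (x : Fin N → UnitAddCircle) i =>
      dyadicCell (k i) (eigenCoord E (toralLift x) i) := by
  have hE : Measurable fun x : Fin N → UnitAddCircle => eigenCoord E (toralLift x) :=
    (eigenCoord E).continuous_of_finiteDimensional.measurable.comp measurable_toralLift
  exact measurable_pi_lambda _ fun i =>
    (measurable_dyadicCell (k i)).comp ((measurable_pi_apply i).comp hE)

theorem finite_range_dyadicCell_eigenCoord (E : Matrix (Fin N) (Fin N) ℂ) (k : Fin N → ℕ) :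
    (Set.range fun (x : Fin N → UnitAddCircle) i =>
      dyadicCell (k i) (eigenCoord E (toralLift x) i)).Finite := by
  obtain ⟨c, hc, hcE⟩ := exists_norm_linearMap_le (eigenCoord E)
  let B : ℕ := ∑ i, ⌈c * 2 ^ k i⌉₊
  have hB : ∀ i (x : Fin N → UnitAddCircle), ‖eigenCoord E (toralLift x) i - 0‖ * 2 ^ k i ≤ B := by
    intro i x
    have hx : ‖eigenCoord E (toralLift x) i‖ ≤ c := (norm_le_pi_norm _ i).trans
      ((hcE _).trans (mul_le_of_le_one_right hc (norm_toralLift_le_one x)))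
    calc ‖eigenCoord E (toralLift x) i - 0‖ * 2 ^ k i ≤ c * 2 ^ k i := by
          rw [sub_zero]
          gcongr
      _ ≤ ⌈c * 2 ^ k i⌉₊ := Nat.le_ceil _
      _ ≤ B := Nat.cast_le.mpr
          (Finset.single_le_sum (f := fun i => ⌈c * 2 ^ k i⌉₊) (by simp) (Finset.mem_univ i))
  refine ((cellBox N (B + 1)).finite_toSet.image
    fun p => p + fun i => dyadicCell (k i) 0).subset ?_
  rintro _ ⟨x, rfl⟩
  exact ⟨_, dyadicCell_sub_mem_cellBox (w := fun _ => 0) fun i => hB i x, sub_add_cancel _ _⟩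

/-- The partition of the torus, cut open to `[0, 1)^N`, into cells whose projection to the `i`-th
eigenline is a square of side `2^{-k i}`. -/
noncomputable def eigenGrid (E : Matrix (Fin N) (Fin N) ℂ) (k : Fin N → ℕ) :
    SimpleFunc (Fin N → UnitAddCircle) (Fin N → ℤ × ℤ) where
  toFun x i := dyadicCell (k i) (eigenCoord E (toralLift x) i)
  measurableSet_fiber' p := measurable_dyadicCell_eigenCoord E k (measurableSet_singleton p)
  finite_range' := finite_range_dyadicCell_eigenCoord E k

theorem eigenGrid_apply (E : Matrix (Fin N) (Fin N) ℂ) (k : Fin N → ℕ)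
    (x : Fin N → UnitAddCircle) (i : Fin N) :
    eigenGrid E k x i = dyadicCell (k i) (eigenCoord E (toralLift x) i) :=
  rfl

theorem norm_eigenCoord_sub_le {E : Matrix (Fin N) (Fin N) ℂ} {k : Fin N → ℕ}
    {x y : Fin N → UnitAddCircle} (h : eigenGrid E k x = eigenGrid E k y) (i : Fin N) :
    ‖eigenCoord E (toralLift x) i - eigenCoord E (toralLift y) i‖ ≤ 2 / 2 ^ k i :=
  norm_sub_le_of_dyadicCell_eq (congrFun h i)

theorem map_coarsen_eigenGrid (E : Matrix (Fin N) (Fin N) ℂ) {k k' : Fin N → ℕ} (hk : k ≤ k') :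
    (eigenGrid E k').map (fun p i => coarsen (k' i - k i) (p i)) = eigenGrid E k := by
  ext x i : 2
  have := coarsen_dyadicCell (k i) (k' i - k i) (eigenCoord E (toralLift x) i)
  rwa [Nat.add_sub_cancel' (hk i)] at this

theorem ncard_image_eigenGrid_preimage_le (E : Matrix (Fin N) (Fin N) ℂ) {k k' : Fin N → ℕ}
    {c : ℕ} (hk : ∀ i, k' i ≤ k i + c) (p : Fin N → ℤ × ℤ) :
    (eigenGrid E k' '' (eigenGrid E k ⁻¹' {p})).ncard ≤ (2 ^ c * 2 ^ c) ^ N := by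
  obtain ⟨S, hS, hsub⟩ := exists_finset_setOf_coarsen_eq_subset c p
  have himage : eigenGrid E (fun i => k i + c) '' (eigenGrid E k ⁻¹' {p}) ⊆ S := by
    refine subset_trans ?_ hsub
    rintro _ ⟨x, hx, rfl⟩ i
    rw [eigenGrid_apply, coarsen_dyadicCell, ← eigenGrid_apply]
    exact congrFun hx i
  rw [Fintype.card_fin, ← Set.ncard_coe_finset S] at hS
  rw [← map_coarsen_eigenGrid E hk, SimpleFunc.coe_map, Set.image_comp, ← hS]
  exact (Set.ncard_image_le (S.finite_toSet.subset himage)).trans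
    (Set.ncard_le_ncard himage S.finite_toSet)

section Entropy

variable (μ : Measure (Fin N → UnitAddCircle)) [IsProbabilityMeasure μ]
  (E : Matrix (Fin N) (Fin N) ℂ)

theorem entropy_eigenGrid_mono : Monotone fun k => entropy μ (eigenGrid E k) := by
  intro k k' hk
  dsimp only
  rw [← map_coarsen_eigenGrid E hk]
  exact entropy_map_le _ _

theorem entropy_eigenGrid_sup_add_inf_le (k k' : Fin N → ℕ) :
    entropy μ (eigenGrid E (k ⊔ k')) + entropy μ (eigenGrid E (k ⊓ k')) ≤
      entropy μ (eigenGrid E k) + entropy μ (eigenGrid E k') := by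
  have hsup : eigenGrid E (k ⊔ k') = ((eigenGrid E k).pair (eigenGrid E k')).map
      fun p i => if k i ≤ k' i then p.2 i else p.1 i := by
    ext x i : 2
    simp only [SimpleFunc.map_apply, SimpleFunc.pair_apply, eigenGrid_apply, Pi.sup_apply]
    split_ifs with hi
    · rw [sup_eq_right.mpr hi]
    · rw [sup_eq_left.mpr (not_le.mp hi).le]
  have hleft := map_coarsen_eigenGrid E (inf_le_left : k ⊓ k' ≤ k)
  have hright := map_coarsen_eigenGrid E (inf_le_right : k ⊓ k' ≤ k')
  have hpair := entropy_pair_add_entropy_map_le (μ := μ) (eigenGrid E k) (eigenGrid E k')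
    (fun p i => coarsen (k i - (k ⊓ k') i) (p i)) (fun p i => coarsen (k' i - (k ⊓ k') i) (p i))
    (DFunLike.congr_fun (hleft.trans hright.symm))
  rw [hleft] at hpair
  rw [hsup]
  exact le_trans (by gcongr; exact entropy_map_le _ _) hpair

theorem entropy_eigenGrid_add_const_le (k : Fin N → ℕ) (c : ℕ) :
    entropy μ (eigenGrid E fun i => k i + c) ≤
      entropy μ (eigenGrid E k) + 2 * N * Real.log 2 * c := by
  refine (entropy_le_add_condEntropy _ (eigenGrid E k)).trans ?_
  gcongr
  refine (condEntropy_le_log_of_ncard_le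
    (ncard_image_eigenGrid_preimage_le E (c := c) fun i => le_rfl)).trans_eq ?_
  push_cast
  rw [Real.log_pow, Real.log_mul (by positivity) (by positivity), Real.log_pow]
  ring

end Entropy

end EigenGrid

section GridEntropy

open Matrix

variable {d N : ℕ} {α : AddChar (Fin d → ℤ) (Matrix (Fin N) (Fin N) ℤ)}
  {E : Matrix (Fin N) (Fin N) ℂ} {χ : Fin N → AddChar (Fin d → ℤ) ℂ}

theorem IsEigenbasis.norm_eigenCoord_mulVec_sub_mul_le (h : IsEigenbasis α E χ)
    {R : ℕ} {v : Fin d → ℤ} {k k' : Fin N → ℕ}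
    (hk : ∀ i, ‖χ i v‖ * 2 ^ k i ≤ 2 ^ R * 2 ^ k' i) {x x₀ : Fin N → UnitAddCircle}
    (hx : eigenGrid E k' x = eigenGrid E k' x₀) (i : Fin N) :
    ‖eigenCoord E ((α v).map (↑) *ᵥ (toralLift x - toralLift x₀)) i‖ * 2 ^ k i ≤ 2 ^ (R + 1) := by
  rw [h.eigenCoord_mulVec, norm_mul, map_sub, Pi.sub_apply]
  calc _ ≤ ‖χ i v‖ * (2 / 2 ^ k' i) * 2 ^ k i := by
        gcongr
        exact norm_eigenCoord_sub_le hx i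
    _ = ‖χ i v‖ * 2 ^ k i * (2 / 2 ^ k' i) := by ring
    _ ≤ 2 ^ R * 2 ^ k' i * (2 / 2 ^ k' i) := by
        exact mul_le_mul_of_nonneg_right (hk i) (by positivity)
    _ = 2 ^ (R + 1) := by
        rw [pow_succ]
        field_simp

theorem IsEigenbasis.exists_ncard_image_comp_toralMap_le (h : IsEigenbasis α E χ) (R : ℕ) :
    ∃ C : ℕ, ∀ (v : Fin d → ℤ) (k k' : Fin N → ℕ),
      (∀ i, ‖χ i v‖ * 2 ^ k i ≤ 2 ^ R * 2 ^ k' i) → ∀ p,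
        ((fun x => eigenGrid E k (toralMap (α v) x)) '' (eigenGrid E k' ⁻¹' {p})).ncard ≤ C := by
  obtain ⟨c, hc, hcE⟩ := exists_norm_le_eigenCoord h.det_ne_zero
  let B : ℤ := ⌈c * 2 ^ (R + 1) + 2⌉
  let Z : Finset (Fin N → ℤ) := Finset.Icc (fun _ => -B) (fun _ => B)
  refine ⟨Z.card * (cellBox N (2 ^ (R + 1) + 1)).card, fun v k k' hk p => ?_⟩
  rcases (eigenGrid E k' ⁻¹' {p}).eq_empty_or_nonempty with hempty | ⟨x₀, hx₀⟩
  · simp [hempty]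
  obtain ⟨z₀, hz₀⟩ := exists_toralLift_toralMap_eq (α v) x₀
  refine ncard_le_of_forall_sub_mem (F := fun z i => dyadicCell (k i)
    (eigenCoord E (toralLift (toralMap (α v) x₀) + (↑) ∘ z) i)) ?_
  rintro _ ⟨x, hx, rfl⟩
  obtain ⟨z, hz⟩ := exists_toralLift_toralMap_eq (α v) x
  have hnear := h.norm_eigenCoord_mulVec_sub_mul_le hk (hx.trans hx₀.symm)
  set y := (α v).map (↑) *ᵥ (toralLift x - toralLift x₀) with hy
  have hlift : toralLift (toralMap (α v) x) =
      toralLift (toralMap (α v) x₀) + (↑) ∘ (z - z₀) + y := by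
    rw [hz, hz₀, hy, mulVec_sub]
    ext j
    simp only [Pi.add_apply, Pi.sub_apply, Function.comp_apply, Int.cast_sub]
    ring
  have hynorm : ‖y‖ ≤ c * 2 ^ (R + 1) := (hcE y).trans <| by
    gcongr
    refine (pi_norm_le_iff_of_nonneg (by positivity)).mpr fun i => le_trans ?_ (hnear i)
    exact le_mul_of_one_le_right (norm_nonneg _) (one_le_pow₀ one_le_two)
  refine ⟨z - z₀, ?_, dyadicCell_sub_mem_cellBox fun i => ?_⟩
  · suffices ∀ j, |(z - z₀) j| ≤ B from
      Finset.mem_Icc.mpr ⟨fun j => (abs_le.mp (this j)).1, fun j => (abs_le.mp (this j)).2⟩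
    intro j
    have hsub := congrFun hlift j
    simp only [Pi.add_apply, Function.comp_apply] at hsub
    have hreal : |((z - z₀) j : ℝ)| ≤ c * 2 ^ (R + 1) + 2 := by
      have hx := toralLift_mem_Ico (toralMap (α v) x) j
      have hx₀ := toralLift_mem_Ico (toralMap (α v) x₀) j
      have hyj := abs_le.mp ((norm_le_pi_norm y j).trans hynorm)
      rw [Set.mem_Ico] at hx hx₀
      rw [abs_le]
      constructor <;> linarith
    rw [← Int.cast_abs] at hreal
    exact Int.cast_le.mp (hreal.trans (Int.le_ceil _))
  · rw [hlift, map_add _ _ y, Pi.add_apply, add_sub_cancel_left]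
    exact_mod_cast hnear i

theorem IsEigenbasis.exists_condEntropy_comp_toralMap_le (h : IsEigenbasis α E χ)
    (μ : Measure (Fin N → UnitAddCircle)) [IsProbabilityMeasure μ] (R : ℕ) :
    ∃ C, ∀ (v : Fin d → ℤ) (k k' : Fin N → ℕ), (∀ i, ‖χ i v‖ * 2 ^ k i ≤ 2 ^ R * 2 ^ k' i) →
      condEntropy μ ((eigenGrid E k).comp (toralMap (α v)) (continuous_toralMap _).measurable)
        (eigenGrid E k') ≤ C := by
  obtain ⟨C, hC⟩ := h.exists_ncard_image_comp_toralMap_le R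
  exact ⟨Real.log C, fun v k k' hk => condEntropy_le_log_of_ncard_le (hC v k k' hk)⟩

/-- The entropy of the eigengrid as a function of real resolutions `ρ`, rounded up and cut off at
`0`. -/
noncomputable def gridEntropy (μ : Measure (Fin N → UnitAddCircle)) (E : Matrix (Fin N) (Fin N) ℂ)
    (ρ : Fin N → ℝ) : ℝ :=
  entropy μ (eigenGrid E fun i => ⌈ρ i⌉₊)

theorem gridEntropy_sup_zero (μ : Measure (Fin N → UnitAddCircle)) (E : Matrix (Fin N) (Fin N) ℂ)
    (ρ : Fin N → ℝ) : gridEntropy μ E (ρ ⊔ 0) = gridEntropy μ E ρ := by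
  have hceil : (fun i => ⌈(ρ ⊔ 0) i⌉₊) = fun i => ⌈ρ i⌉₊ := by
    ext i
    rw [Pi.sup_apply, Nat.ceil_mono.map_sup, Pi.zero_apply, Nat.ceil_zero]
    exact max_eq_left (Nat.zero_le _)
  rw [gridEntropy, hceil, gridEntropy]

section

variable (μ : Measure (Fin N → UnitAddCircle)) [IsProbabilityMeasure μ]
  (E : Matrix (Fin N) (Fin N) ℂ)

theorem gridEntropy_mono : Monotone (gridEntropy μ E) :=
  fun _ _ hab => entropy_eigenGrid_mono μ E fun i => Nat.ceil_mono (hab i)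

theorem gridEntropy_sup_add_inf_le (a b : Fin N → ℝ) :
    gridEntropy μ E (a ⊔ b) + gridEntropy μ E (a ⊓ b) ≤ gridEntropy μ E a + gridEntropy μ E b := by
  have hsup : (fun i => ⌈(a ⊔ b) i⌉₊) = (fun i => ⌈a i⌉₊) ⊔ fun i => ⌈b i⌉₊ :=
    funext fun _ => Nat.ceil_mono.map_sup _ _
  have hinf : (fun i => ⌈(a ⊓ b) i⌉₊) = (fun i => ⌈a i⌉₊) ⊓ fun i => ⌈b i⌉₊ :=
    funext fun _ => Nat.ceil_mono.map_inf _ _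
  simp only [gridEntropy, hsup, hinf]
  exact entropy_eigenGrid_sup_add_inf_le μ E _ _

theorem gridEntropy_add_const_le (a : Fin N → ℝ) {c : ℝ} (hc : 0 ≤ c) :
    gridEntropy μ E (a + Function.const (Fin N) c) ≤
      gridEntropy μ E a + 2 * N * Real.log 2 * (c + 1) :=
  calc gridEntropy μ E (a + Function.const (Fin N) c)
      ≤ entropy μ (eigenGrid E fun i => ⌈a i⌉₊ + ⌈c⌉₊) :=
        entropy_eigenGrid_mono μ E fun i => Nat.ceil_add_le _ _
    _ ≤ gridEntropy μ E a + 2 * N * Real.log 2 * ⌈c⌉₊ := entropy_eigenGrid_add_const_le μ E _ _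
    _ ≤ gridEntropy μ E a + 2 * N * Real.log 2 * (c + 1) := by
        gcongr
        exact (Nat.ceil_lt_add_one hc).le

end

theorem IsEigenbasis.exists_gridEntropy_le_add (h : IsEigenbasis α E χ)
    (μ : Measure (Fin N → UnitAddCircle)) [IsProbabilityMeasure μ]
    (hμ : ∀ v, MeasurePreserving (toralMap (α v)) μ μ) :
    ∃ C, ∀ t a b, 0 ≤ a → a + lyapunov χ t ≤ b → gridEntropy μ E a ≤ gridEntropy μ E b + C := by
  obtain ⟨c, -, hc⟩ := exists_abs_lyapunov_sub_floor_le χ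
  obtain ⟨C, hC⟩ := h.exists_condEntropy_comp_toralMap_le μ (⌈c⌉₊ + 1)
  refine ⟨C, fun t a b ha hab => ?_⟩
  let v : Fin d → ℤ := fun k => ⌊t k⌋
  have hscale : ∀ i, ‖χ i v‖ * 2 ^ ⌈a i⌉₊ ≤ 2 ^ (⌈c⌉₊ + 1) * 2 ^ ⌈b i⌉₊ := by
    intro i
    rw [norm_char_eq_two_rpow, ← pow_add, ← Real.rpow_natCast, ← Real.rpow_natCast,
      ← Real.rpow_add two_pos]
    refine Real.rpow_le_rpow_of_exponent_le one_le_two ?_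
    have hround : -c ≤ lyapunov χ t i - lyapunov χ ((↑) ∘ v) i := (abs_le.mp (hc t i)).1
    have habi : a i + lyapunov χ t i ≤ b i := hab i
    push_cast
    linarith [(Nat.ceil_lt_add_one (ha i)).le, Nat.le_ceil (b i), Nat.le_ceil c]
  rw [gridEntropy, ← entropy_comp_measurePreserving (hμ v)]
  exact (entropy_le_add_condEntropy _ _).trans (add_le_add le_rfl (hC v _ _ hscale))

theorem IsEigenbasis.exists_isScaleEntropy_gridEntropy (h : IsEigenbasis α E χ)
    (μ : Measure (Fin N → UnitAddCircle)) [IsProbabilityMeasure μ]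
    (hμ : ∀ v, MeasurePreserving (toralMap (α v)) μ μ)
    (hcheap : ∀ w u, w ≠ 0 → ∀ ε > 0, ∀ κ₀ : ℝ, ∃ κ ≥ κ₀, ∃ k, 0 ≤ k ∧
      gridEntropy μ E (k + (neutralUnstable (lyapunov χ) w u).indicator (Function.const _ κ)) ≤
        gridEntropy μ E k + ε * κ) :
    ∃ C, IsScaleEntropy (lyapunov χ) (gridEntropy μ E) C := by
  obtain ⟨C, hC⟩ := h.exists_gridEntropy_le_add μ hμ
  refine ⟨max C (2 * N * Real.log 2), fun r => entropy_nonneg _, gridEntropy_mono μ E,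
    gridEntropy_sup_zero μ E, gridEntropy_sup_add_inf_le μ E, fun t a b ha _ hab => ?_,
    fun a c hc => ?_, hcheap⟩
  · exact (hC t a b ha hab).trans (by gcongr; exact le_max_left _ _)
  · exact (gridEntropy_add_const_le μ E a hc).trans (by gcongr; exact le_max_right _ _)

end GridEntropy

section GenericFrequencies

open Module
open scoped Pointwise

theorem exists_pow_notMem {K κ : Type*} [Field K] [Finite κ] {β : κ → K} (hβ : ∀ i, β i ≠ 0)
    (hinj : ∀ n, 0 < n → Function.Injective (β ^ n)) {S : Set (Submodule K (κ → K))}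
    (hS : S.Finite) (htop : ∀ V ∈ S, V ≠ ⊤) : ∃ n, ∀ V ∈ S, β ^ n ∉ V := by
  classical
  have := Fintype.ofFinite κ
  have := hS.to_subtype
  by_contra! hcover
  choose V hVS hV using hcover
  obtain ⟨a, ha, b, c, hc⟩ := Combinatorics.exists_mono_homothetic_copy
    (Finset.range (Fintype.card κ)) fun n => (⟨V n, hVS n⟩ : S)
  obtain ⟨φ, hφ, hker⟩ := Submodule.exists_le_ker_of_lt_top c.1 (lt_top_iff_ne_top.mpr (htop c c.2))
  let e := Fintype.equivFin κ
  have hvandermonde := Matrix.eq_zero_of_forall_pow_sum_mul_pow_eq_zero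
    (f := (β ^ a) ∘ e.symm) (v := fun s => φ (Pi.single (e.symm s) 1) * β (e.symm s) ^ b)
    ((hinj a ha).comp e.symm.injective) fun t => by
      have hmem : β ^ (a • (t : ℕ) + b) ∈ c.1 := by
        rw [← congrArg Subtype.val (hc t (Finset.mem_range.mpr t.2))]
        exact hV _
      have hzero := hker hmem
      rw [LinearMap.mem_ker, ← Finset.univ_sum_single (β ^ _), map_sum] at hzero
      rw [← hzero, ← e.symm.sum_comp]
      refine Finset.sum_congr rfl fun s _ => ?_
      rw [← mul_one ((β ^ _) (e.symm s)), ← smul_eq_mul _ (1 : K), Pi.single_smul', map_smul,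
        smul_eq_mul]
      simp only [Pi.pow_apply, Function.comp_apply, smul_eq_mul, pow_add, pow_mul]
      ring
  refine hφ (LinearMap.pi_ext' fun i => LinearMap.ext_ring ?_)
  have hi := congrFun hvandermonde (e i)
  rw [e.symm_apply_apply] at hi
  exact (mul_eq_zero.mp hi).resolve_right (pow_ne_zero b (hβ i))

theorem exists_seq_forall_min_card_le_finrank_span {K V ι : Type*} [DivisionRing K]
    [AddCommGroup V] [Module K V] [FiniteDimensional K V] {r : ι → V}
    (hr : ∀ S : Set (Submodule K V), S.Finite → (∀ W ∈ S, W ≠ ⊤) → ∃ i, ∀ W ∈ S, r i ∉ W) :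
    ∃ f : ℕ → ι, ∀ J : Finset ℕ,
      min J.card (finrank K V) ≤ finrank K (Submodule.span K (r ∘ f '' J)) := by
  classical
  have hnext : ∀ s : Finset ι, ∃ i, ∀ J ⊆ s, Submodule.span K (r '' J) ≠ ⊤ →
      r i ∉ Submodule.span K (r '' J) := by
    intro s
    obtain ⟨i, hi⟩ := hr ((fun J : Finset ι => Submodule.span K (r '' J)) '' s.powerset \ {⊤})
      ((s.powerset.finite_toSet.image _).sdiff) fun W hW => hW.2
    exact ⟨i, fun J hJ hne => hi _ ⟨⟨J, by simpa using hJ, rfl⟩, hne⟩⟩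
  choose next hnext using hnext
  let T : ℕ → Finset ι := fun n => n.rec ∅ fun _ s => insert (next s) s
  have hT : Monotone T := monotone_nat_of_le_succ fun n => Finset.subset_insert _ _
  refine ⟨fun n => next (T n), fun J => ?_⟩
  induction J using Finset.induction_on_max with
  | empty => simp
  | insert a J hlt ih =>
    set f : ℕ → ι := fun n => next (T n)
    have himage : J.image f ⊆ T a := Finset.image_subset_iff.mpr fun k hk =>
      hT (hlt k hk) (Finset.mem_insert_self _ _)
    have hle : Submodule.span K (r ∘ f '' J) ≤
        Submodule.span K (r ∘ f '' (insert a J : Finset ℕ)) :=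
      Submodule.span_mono (Set.image_mono (Finset.coe_subset.mpr (Finset.subset_insert a J)))
    rw [Finset.card_insert_of_notMem fun ha => (hlt a ha).false]
    by_cases htop : Submodule.span K (r ∘ f '' J) = ⊤
    · rw [htop, top_le_iff] at hle
      rw [hle, finrank_top]
      exact min_le_right _ _
    · have hnot : r (f a) ∉ Submodule.span K (r ∘ f '' J) := by
        have := hnext (T a) _ himage
        rw [Finset.coe_image, ← Set.image_comp] at this
        exact this htop
      have hlt := Submodule.finrank_lt_finrank_of_lt (hle.lt_of_ne fun heq => hnot
        (heq ▸ Submodule.subset_span ⟨a, Finset.mem_insert_self a J, rfl⟩))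
      omega

theorem exists_forall_norm_le_mul_of_span_eq_top {𝕜 ι κ : Type*} [RCLike 𝕜] [Finite ι] [Fintype κ]
    {r : ι → κ → 𝕜} (hr : Submodule.span 𝕜 (Set.range r) = ⊤) :
    ∃ B, 0 ≤ B ∧ ∀ (y : κ → 𝕜) (s : ℝ), 0 ≤ s → (∀ j, ‖r j ⬝ᵥ y‖ ≤ s) → ∀ i, ‖y i‖ ≤ B * s := by
  classical
  have := Fintype.ofFinite ι
  let L : (κ → 𝕜) →ₗ[𝕜] (ι → 𝕜) := Matrix.mulVecLin (Matrix.of r)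
  have hker : LinearMap.ker L = ⊥ := by
    refine LinearMap.ker_eq_bot'.mpr fun y hy => ?_
    have hle : (⊤ : Submodule 𝕜 (κ → 𝕜)) ≤ LinearMap.ker (Fintype.linearCombination 𝕜 y) := by
      rw [← hr, Submodule.span_le]
      rintro _ ⟨j, rfl⟩
      exact congrFun hy j
    ext i
    simpa [Fintype.linearCombination_apply_single] using
      hle (Submodule.mem_top (x := Pi.single i (1 : 𝕜)))
  obtain ⟨B, -, hB⟩ := L.exists_antilipschitzWith hker
  refine ⟨B, B.2, fun y s hs hy i => (norm_le_pi_norm y i).trans ?_⟩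
  have hLy : ‖L y‖ ≤ s := (pi_norm_le_iff_of_nonneg hs).mpr hy
  have hanti := hB.le_mul_dist y 0
  rw [map_zero, dist_zero_right, dist_zero_right] at hanti
  exact hanti.trans (by gcongr)

theorem exists_forall_injective_pow {A F ι : Type*} [AddCommGroup A] [AddGroup.FG A] [Field F]
    [Finite ι] {χ : ι → AddChar A F} (hχ : ∀ i j, i ≠ j → ∀ n, 0 < n → ∃ v, χ i v ^ n ≠ χ j v ^ n) :
    ∃ a, ∀ n, 0 < n → Function.Injective fun i => χ i a ^ n := by
  classical
  have := Fintype.ofFinite ι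
  let ψ : ι × ι → Multiplicative A →* Fˣ := fun p => (χ p.1 * (χ p.2)⁻¹).toMonoidHom.toHomUnits
  have hψ : ∀ p v n, ψ p (.ofAdd v) ^ n = 1 ↔ χ p.1 v ^ n = χ p.2 v ^ n := by
    intro p v n
    have hne : χ p.2 v ≠ 0 := (AddChar.val_isUnit (χ p.2) v).ne_zero
    rw [Units.ext_iff]
    simp [ψ, AddChar.map_neg_eq_inv, mul_pow, mul_inv_eq_one₀ (pow_ne_zero n hne)]
  let H : ι × ι → Subgroup (Multiplicative A) := fun p => (CommGroup.torsion Fˣ).comap (ψ p)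
  by_contra! hcover
  have hunion : ⋃ p ∈ (Finset.univ : Finset (ι × ι)).filter (fun p => p.1 ≠ p.2),
      (1 : Multiplicative A) • (H p : Set (Multiplicative A)) = Set.univ := by
    refine Set.eq_univ_of_forall fun v => ?_
    obtain ⟨n, hn, hninj⟩ := hcover v.toAdd
    rw [Function.not_injective_iff] at hninj
    obtain ⟨i, j, hij, hne⟩ := hninj
    simp only [Set.mem_iUnion]
    refine ⟨(i, j), by simpa using hne, ?_⟩
    rw [one_smul]
    exact isOfFinOrder_iff_pow_eq_one.mpr ⟨n, hn, (hψ (i, j) v.toAdd n).mpr hij⟩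
  obtain ⟨p, hp, hfin⟩ := Subgroup.exists_finiteIndex_of_leftCoset_cover hunion
  have htorsion : IsMulTorsion (ψ p).range := by
    rintro ⟨_, v, rfl⟩
    have hv : IsOfFinOrder (ψ p v ^ (H p).index) := by
      rw [← map_pow]
      exact (H p).pow_index_mem v
    exact Submonoid.isOfFinOrder_coe.mp (hv.of_pow hfin.index_ne_zero)
  have := CommGroup.finite_of_fg_isMulTorsion (ψ p).range htorsion
  obtain ⟨v, hv⟩ := hχ p.1 p.2 (by simpa using hp) (Nat.card (ψ p).range) Nat.card_pos
  let x : (ψ p).range := ⟨_, .ofAdd v, rfl⟩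
  exact hv ((hψ p v _).mp (congrArg Subtype.val (pow_card_eq_one' (x := x))))

theorem exists_fin_forall_norm_le_mul {A ι : Type*} [AddCommGroup A] [AddGroup.FG A] [Finite ι]
    {χ : ι → AddChar A ℂ} (hχ : ∀ i j, i ≠ j → ∀ n, 0 < n → ∃ v, χ i v ^ n ≠ χ j v ^ n)
    (W : Finset ι) (M : ℕ) :
    ∃ (g : Fin M → A) (B : ℝ), 0 ≤ B ∧ ∀ J : Finset (Fin M), W.card ≤ J.card →
      ∀ (y : ι → ℂ) (s : ℝ), 0 ≤ s → (∀ j ∈ J, ‖∑ i ∈ W, χ i (g j) * y i‖ ≤ s) →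
      ∀ i ∈ W, ‖y i‖ ≤ B * s := by
  obtain ⟨a, ha⟩ := exists_forall_injective_pow hχ
  let β : W → ℂ := fun i => χ i a
  have hβ : ∀ i, β i ≠ 0 := fun i => char_ne_zero (χ i) a
  obtain ⟨f, hf⟩ := exists_seq_forall_min_card_le_finrank_span (r := fun n : ℕ => β ^ n)
    fun S hS htop => exists_pow_notMem hβ
      (fun n hn _ _ heq => Subtype.ext (ha n hn heq)) hS htop
  have hbound : ∀ J : Finset ℕ, ∃ B, 0 ≤ B ∧ (W.card ≤ J.card →
      ∀ (y : ι → ℂ) (s : ℝ), 0 ≤ s → (∀ j ∈ J, ‖∑ i ∈ W, χ i (f j • a) * y i‖ ≤ s) →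
      ∀ i ∈ W, ‖y i‖ ≤ B * s) := by
    intro J
    by_cases hJ : W.card ≤ J.card
    · have hspan : Submodule.span ℂ (Set.range fun j : J => β ^ f j) = ⊤ := by
        refine Submodule.eq_top_of_finrank_eq (le_antisymm (Submodule.finrank_le _) ?_)
        have hle := hf J
        rw [finrank_fintype_fun_eq_card, Fintype.card_coe, min_eq_right hJ, Set.image_eq_range]
          at hle
        rwa [finrank_fintype_fun_eq_card, Fintype.card_coe]
      obtain ⟨B, hB, hle⟩ := exists_forall_norm_le_mul_of_span_eq_top hspan
      refine ⟨B, hB, fun _ y s hs hy i hi => hle (fun i => y i) s hs (fun j => ?_) ⟨i, hi⟩⟩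
      have hj := hy j j.2
      simp only [AddChar.map_nsmul_eq_pow] at hj
      rwa [← Finset.sum_coe_sort] at hj
    · exact ⟨0, le_rfl, fun h => absurd h hJ⟩
  choose B hB hle using hbound
  refine ⟨fun j => f j • a, ∑ J : Finset (Fin M), B (J.map Fin.valEmbedding),
    Finset.sum_nonneg fun J _ => hB _, fun J hJ y s hs hy i hi => ?_⟩
  refine (hle (J.map Fin.valEmbedding) (by rwa [Finset.card_map]) y s hs
    (Finset.forall_mem_map.mpr hy) i hi).trans (mul_le_mul_of_nonneg_right ?_ hs)
  exact Finset.single_le_sum (f := fun J : Finset (Fin M) => B (J.map Fin.valEmbedding))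
    (fun J _ => hB _) (Finset.mem_univ J)

end GenericFrequencies

section CharacterSizes

variable {d N : ℕ} (χ : Fin N → AddChar (Fin d → ℤ) ℂ) {W : Finset (Fin N)}

theorem exists_forall_le_norm_char {u : Fin d → ℝ} (hu : ∀ i ∈ W, 0 < lyapunov χ u i) (S : ℝ) :
    ∃ g, ∀ i ∈ W, S ≤ ‖χ i g‖ := by
  obtain ⟨c, -, hfloor⟩ := exists_abs_lyapunov_sub_floor_le χ
  have hlarge : ∀ i ∈ W, ∀ᶠ s : ℝ in Filter.atTop, S ≤ (2 : ℝ) ^ (s * lyapunov χ u i - c) := by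
    intro i hi
    have htendsto : Filter.Tendsto (fun s : ℝ => (2 : ℝ) ^ (s * lyapunov χ u i - c))
        Filter.atTop Filter.atTop :=
      (tendsto_rpow_atTop_of_base_gt_one 2 one_lt_two).comp
        (Filter.tendsto_atTop_add_const_right _ _ (Filter.tendsto_id.atTop_mul_const (hu i hi)))
    exact htendsto.eventually_ge_atTop S
  obtain ⟨s, hs⟩ := ((Filter.eventually_all_finset W).mpr hlarge).exists
  refine ⟨fun k => ⌊(s • u) k⌋, fun i hi => (hs i hi).trans ?_⟩
  rw [norm_char_eq_two_rpow]
  refine Real.rpow_le_rpow_of_exponent_le one_le_two ?_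
  have hsu := (abs_le.mp (hfloor (s • u) i)).2
  rw [map_smul, Pi.smul_apply, smul_eq_mul] at hsu
  exact sub_le_comm.mp hsu

theorem exists_lt_dist_lt_of_isBounded_range {X : Type*} [PseudoMetricSpace X] [ProperSpace X]
    {x : ℕ → X} (hx : Bornology.IsBounded (Set.range x)) {ε : ℝ} (hε : 0 < ε) :
    ∃ m n, m < n ∧ dist (x n) (x m) < ε := by
  obtain ⟨_, -, φ, hφ, hlim⟩ := tendsto_subseq_of_bounded hx fun n => Set.mem_range_self n
  obtain ⟨k, hk⟩ := Metric.cauchySeq_iff'.mp hlim.cauchySeq ε hε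
  exact ⟨φ k, φ (k + 1), hφ k.lt_succ_self, hk (k + 1) k.le_succ⟩

theorem exists_ne_zero_forall_norm_char_sub_one_le {w : Fin d → ℝ} (hw : w ≠ 0)
    (hW : ∀ i ∈ W, lyapunov χ w i = 0) {τ : ℝ} (hτ : 0 < τ) :
    ∃ γ, γ ≠ 0 ∧ ∀ i ∈ W, ‖χ i γ - 1‖ ≤ τ := by
  obtain ⟨c, -, hfloor⟩ := exists_abs_lyapunov_sub_floor_le χ
  obtain ⟨k, hk⟩ := Function.ne_iff.mp hw
  have hk0 : 0 < |w k| := abs_pos.mpr hk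
  obtain ⟨L, hL⟩ := exists_nat_gt (1 / |w k|)
  rw [div_lt_iff₀ hk0] at hL
  let b : ℕ → Fin d → ℤ := fun n k => ⌊(((n * L : ℕ) : ℝ) • w) k⌋
  have hexponent : ∀ n, ∀ i ∈ W, |lyapunov χ ((↑) ∘ b n) i| ≤ c := fun n i hi => by
    have h := hfloor (((n * L : ℕ) : ℝ) • w) i
    rwa [map_smul, Pi.smul_apply, hW i hi, smul_zero, zero_sub, abs_neg] at h
  have hbounded : Bornology.IsBounded (Set.range fun n (i : W) => χ i (b n)) := by
    refine isBounded_iff_forall_norm_le.mpr ⟨2 ^ c, Set.forall_mem_range.mpr fun n => ?_⟩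
    refine (pi_norm_le_iff_of_nonneg (by positivity)).mpr fun i => ?_
    rw [norm_char_eq_two_rpow]
    exact Real.rpow_le_rpow_of_exponent_le one_le_two (abs_le.mp (hexponent n i i.2)).2
  obtain ⟨m, n, hmn, hdist⟩ :=
    exists_lt_dist_lt_of_isBounded_range hbounded (ε := τ * 2 ^ (-c)) (by positivity)
  refine ⟨b n - b m, fun h0 => ?_, fun i hi => ?_⟩
  · have hclose := Int.abs_sub_lt_one_of_floor_eq_floor (congrFun (sub_eq_zero.mp h0) k)
    rw [Pi.smul_apply, Pi.smul_apply, smul_eq_mul, smul_eq_mul, ← sub_mul, Nat.cast_mul,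
      Nat.cast_mul, ← sub_mul, mul_assoc, abs_mul, abs_mul, Nat.abs_cast] at hclose
    have hgap : (1 : ℝ) ≤ |(n : ℝ) - m| := by
      have : (m : ℝ) + 1 ≤ n := by exact_mod_cast hmn
      exact le_abs.mpr (.inl (by linarith))
    nlinarith
  · have hpos : 0 < ‖χ i (b m)‖ := norm_pos_iff.mpr (char_ne_zero _ _)
    have hlower : (2 : ℝ) ^ (-c) ≤ ‖χ i (b m)‖ := by
      rw [norm_char_eq_two_rpow]
      exact Real.rpow_le_rpow_of_exponent_le one_le_two (abs_le.mp (hexponent m i hi)).1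
    have hi_dist := (dist_le_pi_dist _ _ (⟨i, hi⟩ : W)).trans hdist.le
    rw [dist_eq_norm] at hi_dist
    rw [AddChar.map_sub_eq_div, div_sub_one (char_ne_zero _ _), norm_div, div_le_iff₀ hpos]
    exact hi_dist.trans (by gcongr)

end CharacterSizes

section LargeSieve

open scoped FourierTransform NNReal

theorem fourierChar_natCast_mul (k : ℕ) (t : ℝ) : (𝐞 (k * t) : ℂ) = (𝐞 t : ℂ) ^ k := by
  rw [← nsmul_eq_mul, AddChar.map_nsmul_eq_pow, Circle.coe_pow]

theorem norm_fourierChar_sub_le (s t : ℝ) : ‖(𝐞 s : ℂ) - 𝐞 t‖ ≤ 2 * Real.pi * |s - t| := by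
  have hfactor : (𝐞 s : ℂ) - 𝐞 t = 𝐞 t * (𝐞 (s - t) - 1) := by
    rw [mul_sub_one, ← Circle.coe_mul, ← AddChar.map_add_eq_mul, add_sub_cancel]
  rw [hfactor, norm_mul, Circle.norm_coe, one_mul, Real.fourierChar_apply, mul_comm _ Complex.I]
  refine Real.norm_exp_I_mul_ofReal_sub_one_le.trans_eq ?_
  rw [Real.norm_eq_abs, abs_mul, abs_of_pos Real.two_pi_pos]

theorem four_mul_abs_le_norm_fourierChar_sub_one {t : ℝ} (ht : |t| ≤ 1 / 2) :
    4 * |t| ≤ ‖(𝐞 t : ℂ) - 1‖ := by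
  have hpi := Real.pi_pos
  have hsin := Real.mul_abs_le_abs_sin (x := Real.pi * t)
    (by rw [abs_mul, abs_of_pos hpi]; nlinarith)
  rw [abs_mul, abs_of_pos hpi, ← mul_assoc, div_mul_cancel₀ _ hpi.ne'] at hsin
  rw [Real.fourierChar_apply, mul_comm _ Complex.I, Complex.norm_exp_I_mul_ofReal_sub_one,
    mul_assoc, mul_div_cancel_left₀ _ two_ne_zero, norm_mul, Real.norm_two, Real.norm_eq_abs]
  linarith

theorem norm_sum_fourierChar_le (K : ℕ) {t : ℝ} (ht : |t| ≤ 1 / 2) (ht0 : t ≠ 0) :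
    ‖∑ k ∈ Finset.range K, (𝐞 (k * t) : ℂ)‖ ≤ 1 / (2 * |t|) := by
  have hlower := four_mul_abs_le_norm_fourierChar_sub_one ht
  have hpos : 0 < |t| := abs_pos.mpr ht0
  have hne : (𝐞 t : ℂ) ≠ 1 := fun h => by
    rw [h, sub_self, norm_zero] at hlower
    linarith
  have hupper : ‖(𝐞 t : ℂ) ^ K - 1‖ ≤ 2 := by
    refine (norm_sub_le _ _).trans_eq ?_
    rw [norm_pow, Circle.norm_coe, one_pow, norm_one, one_add_one_eq_two]
  simp only [fourierChar_natCast_mul]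
  rw [geom_sum_eq hne, norm_div, div_le_div_iff₀ (by linarith) (by positivity)]
  nlinarith

theorem sum_norm_sq_sum_fourierChar_eq (K : ℕ) (S : Finset ℝ) (v : ℝ → ℂ) :
    ((∑ k ∈ Finset.range K, ‖∑ θ ∈ S, v θ * 𝐞 (k * θ)‖ ^ 2 : ℝ) : ℂ) =
      ∑ θ ∈ S, ∑ θ' ∈ S, v θ * starRingEnd ℂ (v θ') *
        ∑ k ∈ Finset.range K, (𝐞 (k * (θ - θ')) : ℂ) := by
  push_cast
  simp only [← Complex.mul_conj', map_sum, map_mul, Finset.sum_mul_sum]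
  rw [Finset.sum_comm]
  refine Finset.sum_congr rfl fun θ _ => ?_
  rw [Finset.sum_comm]
  refine Finset.sum_congr rfl fun θ' _ => ?_
  rw [Finset.mul_sum]
  refine Finset.sum_congr rfl fun k _ => ?_
  rw [mul_sub, AddChar.map_sub_eq_div, Circle.coe_div, div_eq_mul_inv, ← Circle.coe_inv,
    Circle.coe_inv_eq_conj]
  ring

theorem sum_norm_sq_sum_fourierChar_le (K : ℕ) {S : Finset ℝ} (hS : ∀ θ ∈ S, |θ| ≤ 1 / 4) {δ : ℝ}
    (hδ : 0 < δ) (hsep : (S : Set ℝ).Pairwise fun θ θ' => δ ≤ |θ - θ'|) {v : ℝ → ℂ}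
    (hv : ∀ θ, ‖v θ‖ ≤ 1) :
    ∑ k ∈ Finset.range K, ‖∑ θ ∈ S, v θ * 𝐞 (k * θ)‖ ^ 2 ≤
      S.card * K + S.card ^ 2 * (1 / (2 * δ)) := by
  have hnonneg : 0 ≤ ∑ k ∈ Finset.range K, ‖∑ θ ∈ S, v θ * 𝐞 (k * θ)‖ ^ 2 :=
    Finset.sum_nonneg fun _ _ => by positivity
  have hkernel : ∀ θ ∈ S, ∀ θ' ∈ S, ‖∑ k ∈ Finset.range K, (𝐞 (k * (θ - θ')) : ℂ)‖ ≤
      (if θ = θ' then (K : ℝ) else 0) + 1 / (2 * δ) := by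
    intro θ hθ θ' hθ'
    split_ifs with heq
    · refine (norm_sum_le _ _).trans ?_
      simp only [Circle.norm_coe, Finset.sum_const, Finset.card_range, nsmul_eq_mul, mul_one]
      exact le_add_of_nonneg_right (by positivity)
    · have habs : |θ - θ'| ≤ 1 / 2 :=
        (abs_sub _ _).trans ((add_le_add (hS θ hθ) (hS θ' hθ')).trans_eq (by norm_num))
      have hle := hsep hθ hθ' heq
      rw [zero_add]
      exact (norm_sum_fourierChar_le K habs (sub_ne_zero.mpr heq)).trans (by gcongr)
  rw [← Real.norm_of_nonneg hnonneg, ← Complex.norm_real, sum_norm_sq_sum_fourierChar_eq]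
  calc _ ≤ ∑ θ ∈ S, ∑ θ' ∈ S, ((if θ = θ' then (K : ℝ) else 0) + 1 / (2 * δ)) := by
        refine norm_sum_le_of_le _ fun θ hθ => norm_sum_le_of_le _ fun θ' hθ' => ?_
        rw [norm_mul, norm_mul, RCLike.norm_conj]
        refine (mul_le_of_le_one_left (norm_nonneg _) ?_).trans (hkernel θ hθ θ' hθ')
        exact mul_le_one₀ (hv θ) (norm_nonneg _) (hv θ')
    _ = _ := by
        simp only [Finset.sum_add_distrib, Finset.sum_ite_eq, Finset.sum_ite_mem, Finset.inter_self,
          Finset.sum_const, nsmul_eq_mul]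
        ring

/-- The large sieve, in dual form. -/
theorem card_le_of_separated_of_le_norm_sum {K : ℕ} (hK : 0 < K) {a : ℕ → ℂ}
    (ha : ∀ k, ‖a k‖ ≤ 1) {c : ℝ} (hc : 0 < c) {S : Finset ℝ} (hS : ∀ θ ∈ S, |θ| ≤ 1 / 4)
    (hlarge : ∀ θ ∈ S, c * K ≤ ‖∑ k ∈ Finset.range K, a k * 𝐞 (k * θ)‖)
    (hsep : (S : Set ℝ).Pairwise fun θ θ' => 1 / (K * c ^ 2) ≤ |θ - θ'|) :
    (S.card : ℝ) ≤ 2 / c ^ 2 := by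
  have : (0 : ℝ) < K := by exact_mod_cast hK
  choose u hu hphase using fun θ =>
    RCLike.exists_norm_eq_mul_self (∑ k ∈ Finset.range K, a k * (𝐞 (k * θ) : ℂ))
  set b : ℕ → ℂ := fun k => ∑ θ ∈ S, u θ * 𝐞 (k * θ)
  have hdual : S.card * (c * K) ≤ ∑ k ∈ Finset.range K, ‖b k‖ := by
    calc S.card * (c * K) ≤ ∑ θ ∈ S, ‖∑ k ∈ Finset.range K, a k * (𝐞 (k * θ) : ℂ)‖ := by
          rw [← nsmul_eq_mul, ← Finset.sum_const]
          exact Finset.sum_le_sum hlarge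
      _ = ‖∑ θ ∈ S, u θ * ∑ k ∈ Finset.range K, a k * (𝐞 (k * θ) : ℂ)‖ := by
          simp only [← hphase]
          rw [← RCLike.ofReal_sum, RCLike.norm_ofReal,
            abs_of_nonneg (Finset.sum_nonneg fun _ _ => norm_nonneg _)]
      _ = ‖∑ k ∈ Finset.range K, a k * b k‖ := by
          simp only [b, Finset.mul_sum]
          rw [Finset.sum_comm]
          simp only [mul_left_comm]
      _ ≤ ∑ k ∈ Finset.range K, ‖b k‖ := norm_sum_le_of_le _ fun k _ => by
          rw [norm_mul]
          exact mul_le_of_le_one_left (norm_nonneg _) (ha k)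
  have hcauchy : (∑ k ∈ Finset.range K, ‖b k‖) ^ 2 ≤ K * ∑ k ∈ Finset.range K, ‖b k‖ ^ 2 := by
    simpa using sq_sum_le_card_mul_sum_sq (s := Finset.range K) (f := fun k => ‖b k‖)
  have hsquares := sum_norm_sq_sum_fourierChar_le K hS (by positivity) hsep fun θ => (hu θ).le
  have hquad : (S.card * (c * K)) ^ 2 ≤
      K * (S.card * K + S.card ^ 2 * (1 / (2 * (1 / (K * c ^ 2))))) :=
    (pow_le_pow_left₀ (by positivity) hdual 2).trans (hcauchy.trans (by gcongr))
  have hδ : 1 / (2 * (1 / (K * c ^ 2))) = K * c ^ 2 / 2 := by field_simp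
  rw [hδ] at hquad
  rw [le_div_iff₀ (by positivity)]
  rcases (Nat.cast_nonneg (α := ℝ) S.card).eq_or_lt with h0 | hpos
  · rw [← h0]
    norm_num
  · refine le_of_mul_le_mul_left ?_ (show 0 < S.card * (K : ℝ) ^ 2 by positivity)
    linarith

theorem packingNumber_setOf_le_norm_sum_le {K : ℕ} (hK : 0 < K) {a : ℕ → ℂ}
    (ha : ∀ k, ‖a k‖ ≤ 1) {c : ℝ} (hc : 0 < c) :
    Metric.packingNumber (1 / (K * c ^ 2)).toNNReal
      {θ : ℝ | |θ| ≤ 1 / 4 ∧ c * K ≤ ‖∑ k ∈ Finset.range K, a k * 𝐞 (k * θ)‖} ≤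
      ⌈2 / c ^ 2⌉₊ := by
  refine iSup₂_le fun T hT => iSup_le fun hsep => ?_
  by_contra! hlt
  obtain ⟨S, hST, hcard⟩ := Set.exists_subset_encard_eq (Order.add_one_le_of_lt hlt)
  have hfin : S.Finite := Set.finite_of_encard_eq_coe hcard
  lift S to Finset ℝ using hfin
  have hle := card_le_of_separated_of_le_norm_sum hK ha hc (fun θ hθ => (hT (hST hθ)).1)
    (fun θ hθ => (hT (hST hθ)).2) fun θ hθ θ' hθ' hne => by
      have hdist : ENNReal.ofReal (1 / (K * c ^ 2)) < edist θ θ' := hsep (hST hθ) (hST hθ') hne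
      rw [edist_dist] at hdist
      exact ((ENNReal.ofReal_lt_ofReal_iff_of_nonneg (by positivity)).mp hdist).le
  rw [Set.encard_coe_eq_coe_finsetCard] at hcard
  have hcard' : S.card = ⌈2 / c ^ 2⌉₊ + 1 := by exact_mod_cast hcard
  rw [hcard'] at hle
  have := Nat.le_ceil (2 / c ^ 2)
  push_cast at hle
  linarith

theorem exists_map_fin_of_packingNumber_le {X : Type*} [PseudoMetricSpace X] {ε : ℝ≥0} {A : Set X}
    {n : ℕ} (hA : Metric.packingNumber ε A ≤ n) :
    ∃ f : X → Fin (n + 1), ∀ x ∈ A, ∀ y ∈ A, f x = f y → dist x y ≤ 2 * ε := by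
  have htop : Metric.packingNumber ε A ≠ ⊤ := (hA.trans_lt (ENat.natCast_lt_top n)).ne
  set Z := Metric.maximalSeparatedSet ε A
  have hZ : Z.encard ≤ n := (Metric.encard_maximalSeparatedSet htop).trans_le hA
  have hZfin : Finite Z := Set.finite_of_encard_le_coe hZ
  have hcard : Nat.card Z ≤ n + 1 := by
    rw [Nat.card_coe_set_eq]
    exact (Set.encard_le_coe_iff_finite_ncard_le.mp hZ).2.trans n.le_succ
  have hcover := Metric.isCover_maximalSeparatedSet htop
  have hnear : ∀ x, ∃ s : Fin (n + 1), x ∈ A → ∃ z : Z,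
      Fin.castLE hcard (Finite.equivFin Z z) = s ∧ dist x z ≤ ε := by
    intro x
    by_cases hx : x ∈ A
    · obtain ⟨z, hz, hxz⟩ := hcover hx
      exact ⟨_, fun _ => ⟨⟨z, hz⟩, rfl, by simpa [edist_dist] using hxz⟩⟩
    · exact ⟨0, fun h => absurd h hx⟩
  choose f hf using hnear
  refine ⟨f, fun x hx y hy hxy => ?_⟩
  obtain ⟨z, hz, hxz⟩ := hf x hx
  obtain ⟨z', hz', hyz⟩ := hf y hy
  have heq : z = z' := (Finite.equivFin Z).injective (Fin.castLE_injective hcard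
    (hz.trans (hxy.trans hz'.symm)))
  rw [← heq] at hyz
  rw [two_mul]
  exact (dist_triangle_right x y z).trans (add_le_add hxz hyz)

end LargeSieve

section MeanErgodic

open Filter

theorem ae_eq_const_of_forall_comp_ae_eq {G Ω β : Type*} [AddGroup G] [Countable G]
    [MeasurableSpace Ω] {μ : Measure Ω} [IsProbabilityMeasure μ] {T : G → Ω → Ω}
    (hT : ∀ v, Measurable (T v)) (hzero : T 0 = id) (hadd : ∀ v w, T (v + w) = T v ∘ T w)
    (herg : ∀ A : Set Ω, MeasurableSet A → (∀ v, T v ⁻¹' A = A) → μ A = 0 ∨ μ A = 1)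
    [MeasurableSpace β] [MeasurableSpace.CountablySeparated β] [Nonempty β] {g : Ω → β}
    (hg : Measurable g) (hinv : ∀ v, g ∘ T v =ᵐ[μ] g) : ∃ c, g =ᵐ[μ] Function.const Ω c := by
  refine exists_eventuallyEq_const_of_forall_separating MeasurableSet fun U hU => ?_
  set A := ⋂ v, T v ⁻¹' (g ⁻¹' U) with hA
  have hAmeas : MeasurableSet A := MeasurableSet.iInter fun v => hT v (hg hU)
  have hAinv : ∀ v, T v ⁻¹' A = A := by
    intro v
    ext x
    simp only [hA, Set.mem_preimage, Set.mem_iInter, ← Function.comp_apply (f := T _), ← hadd]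
    exact ⟨fun h w => by simpa using h (w - v), fun h w => h (w + v)⟩
  have hmem : ∀ᵐ x ∂μ, x ∈ A ↔ g x ∈ U := by
    filter_upwards [ae_all_iff.mpr hinv] with x hx
    simp only [hA, Set.mem_preimage, Set.mem_iInter]
    exact ⟨fun h => by simpa [hzero] using h 0, fun h v => by rwa [← hx v] at h⟩
  rcases herg A hAmeas hAinv with h | h
  · right
    filter_upwards [hmem, measure_eq_zero_iff_ae_notMem.mp h] with x hx hxA
    rwa [← hx]
  · left
    filter_upwards [hmem, (mem_ae_iff_prob_eq_one hAmeas).mpr h] with x hx hxA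
    exact hx.mp hxA

/- The fixed point is the element of minimal norm. -/
theorem exists_mem_forall_map_eq_self {ι H : Type*} [NormedAddCommGroup H] [InnerProductSpace ℝ H]
    [CompleteSpace H] {S : Set H} (hne : S.Nonempty) (hclosed : IsClosed S) (hconv : Convex ℝ S)
    {U : ι → H → H} (hnorm : ∀ i g, ‖U i g‖ = ‖g‖) (hU : ∀ i, Set.MapsTo (U i) S S) :
    ∃ g ∈ S, ∀ i, U i g = g := by
  obtain ⟨g, hgS, hg⟩ := exists_norm_eq_iInf_of_complete_convex hne hclosed.isComplete hconv 0
  have hmin : ∀ f ∈ S, ‖g‖ ≤ ‖f‖ := by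
    intro f hf
    rw [zero_sub, norm_neg] at hg
    rw [hg]
    refine (ciInf_le ⟨0, ?_⟩ (⟨f, hf⟩ : S)).trans_eq (by rw [zero_sub, norm_neg])
    rintro _ ⟨_, rfl⟩
    exact norm_nonneg _
  refine ⟨g, hgS, fun i => by_contra fun hne => ?_⟩
  have hlt := (norm_midpoint_lt_iff (hnorm i g)).mpr hne
  have hmem : (1 / 2 : ℝ) • (U i g + g) ∈ S := by
    rw [smul_add]
    exact hconv (hU i hgS) hgS (by norm_num) (by norm_num) (by norm_num)
  exact (hmin _ hmem).not_gt (hlt.trans_eq (hnorm i g))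

variable {Ω : Type*} [MeasurableSpace Ω] {μ : Measure Ω} [IsProbabilityMeasure μ]

theorem integral_eq_of_mem_closure_convexHull {s : Set (Lp ℂ 2 μ)} {a : ℂ}
    (hs : ∀ g ∈ s, ∫ x, g x ∂μ = a) {g : Lp ℂ 2 μ} (hg : g ∈ closure (convexHull ℝ s)) :
    ∫ x, g x ∂μ = a := by
  set ℓ : Lp ℂ 2 μ →L[ℝ] ℂ := (innerSL ℂ (indicatorConstLp 2 MeasurableSet.univ
    (measure_ne_top μ _) (1 : ℂ))).restrictScalars ℝ
  have hℓ : ∀ f : Lp ℂ 2 μ, ∫ x, f x ∂μ = ℓ f := fun f => by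
    rw [← setIntegral_univ, ← L2.inner_indicatorConstLp_one MeasurableSet.univ (measure_ne_top μ _)]
    rfl
  simp only [hℓ] at hs ⊢
  exact closure_minimal
    (convexHull_min hs ((convex_singleton a).linear_preimage ℓ.toLinearMap))
    (isClosed_singleton.preimage ℓ.continuous) hg

theorem integral_norm_le_norm_Lp_two (f : Lp ℂ 2 μ) : ∫ x, ‖f x‖ ∂μ ≤ ‖f‖ := by
  have hf := Lp.memLp f
  rw [integral_norm_eq_lintegral_enorm hf.1, ← eLpNorm_one_eq_lintegral_enorm, Lp.norm_def]
  exact ENNReal.toReal_mono hf.eLpNorm_ne_top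
    (eLpNorm_le_eLpNorm_of_exponent_le one_le_two hf.1)

variable {G : Type*} [AddMonoid G] {T : G → Ω → Ω}

theorem const_integral_mem_closure_convexHull_range (hT : ∀ v, MeasurePreserving (T v) μ μ)
    (hadd : ∀ v w, T (v + w) = T v ∘ T w)
    (herg : ∀ g : Ω → ℂ, Measurable g → (∀ v, g ∘ T v =ᵐ[μ] g) → ∃ c, g =ᵐ[μ] Function.const Ω c)
    (F : Lp ℂ 2 μ) : Lp.const 2 μ (∫ x, F x ∂μ) ∈
      closure (convexHull ℝ (Set.range fun v => Lp.compMeasurePreserving (T v) (hT v) F)) := by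
  set U : G → Lp ℂ 2 μ →ₗᵢ[ℝ] Lp ℂ 2 μ := fun v => Lp.compMeasurePreservingₗᵢ ℝ _ (hT v)
  have hU : ∀ v g, U v g =ᵐ[μ] g ∘ T v := fun v g => Lp.coeFn_compMeasurePreserving g (hT v)
  have hcomp : ∀ v w, U v (U w F) = U (w + v) F := fun v w => Lp.ext <|
    ((hU v _).trans ((hT v).quasiMeasurePreserving.ae_eq_comp (hU w F))).trans <| by
      rw [Function.comp_assoc, ← hadd]
      exact (hU (w + v) F).symm
  have hmaps : ∀ v, Set.MapsTo (U v) (closure (convexHull ℝ (Set.range fun v => U v F)))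
      (closure (convexHull ℝ (Set.range fun v => U v F))) := by
    refine fun v => Set.MapsTo.closure (Set.mapsTo_iff_image_subset.mpr ?_) (U v).continuous
    refine ((U v).toLinearMap.image_convexHull _).subset.trans (convexHull_mono ?_)
    rintro _ ⟨_, ⟨w, rfl⟩, rfl⟩
    exact ⟨w + v, (hcomp v w).symm⟩
  obtain ⟨g, hgS, hg⟩ := exists_mem_forall_map_eq_self (U := fun v => U v)
    ⟨U 0 F, subset_closure (subset_convexHull ℝ _ (Set.mem_range_self 0))⟩ isClosed_closure
    (convex_convexHull ℝ _).closure (fun v => (U v).norm_map) hmaps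
  obtain ⟨c, hgc⟩ := herg g (Lp.stronglyMeasurable g).measurable fun v => by
    simpa only [hg v] using (hU v g).symm
  have hint : ∫ x, g x ∂μ = ∫ x, F x ∂μ := by
    refine integral_eq_of_mem_closure_convexHull (Set.forall_mem_range.mpr fun v => ?_) hgS
    rw [integral_congr_ae (hU v F)]
    exact (hT v).hasLaw.integral_comp (Lp.aestronglyMeasurable F)
  have hc : c = ∫ x, F x ∂μ := by
    rw [← hint, integral_congr_ae hgc]
    simp only [Function.const_apply, integral_const, probReal_univ, one_smul]
  rw [← hc, ← Lp.ext (hgc.trans (Lp.coeFn_const 2 μ c).symm)]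
  exact hgS

/- The mean ergodic theorem in `L¹`, with convex combinations of translates as averages. -/
theorem exists_convexCombination_integral_norm_sub_le (hT : ∀ v, MeasurePreserving (T v) μ μ)
    (hadd : ∀ v w, T (v + w) = T v ∘ T w)
    (herg : ∀ g : Ω → ℂ, Measurable g → (∀ v, g ∘ T v =ᵐ[μ] g) → ∃ c, g =ᵐ[μ] Function.const Ω c)
    {f : Ω → ℂ} (hf : MemLp f 2 μ) {δ : ℝ} (hδ : 0 < δ) :
    ∃ (ι : Type) (_ : Fintype ι) (p : ι → ℝ) (q : ι → G), (∀ i, 0 ≤ p i) ∧ ∑ i, p i = 1 ∧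
      ∫ x, ‖∑ i, (p i : ℂ) * f (T (q i) x) - ∫ y, f y ∂μ‖ ∂μ ≤ δ := by
  obtain ⟨F', hF', hdist⟩ := Metric.mem_closure_iff.mp
    (const_integral_mem_closure_convexHull_range hT hadd herg (hf.toLp f)) δ hδ
  obtain ⟨ι, _, p, z, hp, hp1, hz, rfl⟩ := mem_convexHull_iff_exists_fintype.mp hF'
  choose q hq using hz
  refine ⟨ι, inferInstance, p, q, hp, hp1, ?_⟩
  have hzq : ∀ i, z i =ᵐ[μ] f ∘ T (q i) := fun i => hq i ▸
    (Lp.coeFn_compMeasurePreserving _ (hT (q i))).trans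
      ((hT (q i)).quasiMeasurePreserving.ae_eq_comp hf.coeFn_toLp)
  rw [integral_congr_ae hf.coeFn_toLp] at hdist
  set C := Lp.const 2 μ (∫ y, f y ∂μ)
  have hC : C =ᵐ[μ] Function.const Ω (∫ y, f y ∂μ) := Lp.coeFn_const 2 μ _
  have hae : (fun x => ∑ i, (p i : ℂ) * f (T (q i) x) - ∫ y, f y ∂μ) =ᵐ[μ]
      (∑ i, p i • z i - C : Lp ℂ 2 μ) := by
    filter_upwards [ae_all_iff.mpr hzq, ae_all_iff.mpr fun i => Lp.coeFn_smul (p i) (z i),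
      Lp.coeFn_finsetSum Finset.univ fun i => p i • z i, Lp.coeFn_sub (∑ i, p i • z i) C, hC]
      with x hzx hsmul hsum hsub hconst
    simp only [hsub, Pi.sub_apply, hsum, hconst, Finset.sum_apply, hsmul, Pi.smul_apply, hzx,
      Complex.real_smul, Function.const_apply, Function.comp_apply]
  refine (integral_congr_ae (hae.fun_comp norm)).trans_le
    ((integral_norm_le_norm_Lp_two _).trans ?_)
  rw [← dist_eq_norm, dist_comm]
  exact hdist.le

end MeanErgodic

section Phase

open Matrix UnitAddTorus Finset

open scoped FourierTransform

variable {d N : ℕ}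

section ToralMap

theorem toralMap_one : toralMap (1 : Matrix (Fin N) (Fin N) ℤ) = id := by
  funext x i
  simp [toralMap, one_apply, ite_smul]

theorem toralMap_mul (A B : Matrix (Fin N) (Fin N) ℤ) :
    toralMap (A * B) = toralMap A ∘ toralMap B := by
  funext x i
  exact (sum_zsmul_toralMap B (A i) x).symm

theorem toralMap_addChar_nsmul (α : AddChar (Fin d → ℤ) (Matrix (Fin N) (Fin N) ℤ))
    (v : Fin d → ℤ) (n : ℕ) : toralMap (α (n • v)) = (toralMap (α v))^[n] := by
  induction n with
  | zero => rw [zero_nsmul, AddChar.map_zero_eq_one, toralMap_one, Function.iterate_zero]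
  | succ n ih =>
    rw [succ_nsmul, AddChar.map_add_eq_mul, toralMap_mul, ih, Function.iterate_succ]

end ToralMap

theorem norm_mFourier_apply (ξ : Fin N → ℤ) (x : Fin N → UnitAddCircle) : ‖mFourier ξ x‖ = 1 := by
  simp only [mFourier, ContinuousMap.coe_mk, norm_prod, fourier_apply, Circle.norm_coe,
    prod_const_one]

theorem mFourier_coe (ξ : Fin N → ℤ) (y : Fin N → ℝ) :
    mFourier ξ (fun j => (y j : UnitAddCircle)) = 𝐞 ((↑) ∘ ξ ⬝ᵥ y) := by
  simp only [mFourier, ContinuousMap.coe_mk, fourier_coe_apply, ← Complex.exp_sum,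
    Real.fourierChar_apply, dotProduct, Function.comp_apply]
  congr 1
  push_cast
  simp only [mul_sum, sum_mul]
  refine sum_congr rfl fun j _ => ?_
  ring

theorem mFourier_toralMap (ξ : Fin N → ℤ) (A : Matrix (Fin N) (Fin N) ℤ)
    (x : Fin N → UnitAddCircle) :
    mFourier ξ (toralMap A x) = 𝐞 ((↑) ∘ (ξ ᵥ* A) ⬝ᵥ toralLift x) := by
  have hx : toralMap A x = fun i => (((A.map (↑) *ᵥ toralLift x) i : ℝ) : UnitAddCircle) := by
    funext i
    simp only [coe_mulVec, coe_toralLift]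
  have hξ : ((↑) ∘ (ξ ᵥ* A) : Fin N → ℝ) = (↑) ∘ ξ ᵥ* A.map (↑) :=
    funext ((Int.castRingHom ℝ).map_vecMul A ξ)
  rw [hx, mFourier_coe, dotProduct_mulVec, hξ]

variable {α : AddChar (Fin d → ℤ) (Matrix (Fin N) (Fin N) ℤ)} {E : Matrix (Fin N) (Fin N) ℂ}
  {χ : Fin N → AddChar (Fin d → ℤ) ℂ}

theorem IsEigenbasis.ofReal_vecMul_dotProduct_eq (h : IsEigenbasis α E χ) (ξ : Fin N → ℤ)
    (v : Fin d → ℤ) (y : Fin N → ℝ) :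
    (((↑) ∘ (ξ ᵥ* α v) ⬝ᵥ y : ℝ) : ℂ) =
      ∑ i, ((↑) ∘ ξ ᵥ* E) i * χ i v * eigenCoord E y i := by
  have hξ : ((↑) ∘ (ξ ᵥ* α v) : Fin N → ℂ) = (↑) ∘ ξ ᵥ* (α v).map (↑) :=
    funext ((Int.castRingHom ℂ).map_vecMul (α v) ξ)
  rw [h.ofReal_dotProduct_eq, hξ, vecMul_vecMul, h.map_mul_eq, ← vecMul_vecMul]
  simp only [dotProduct, vecMul_diagonal]

/-- The change of the phase of the character `ξ` at the displacement `y` when the action moves on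
from time `b` to time `b + γ`. Along an orbit `b, b + γ, b + 2γ, …` with `γ` close to neutral the
phase drifts at an almost constant rate. -/
def phaseDrift (α : AddChar (Fin d → ℤ) (Matrix (Fin N) (Fin N) ℤ)) (ξ : Fin N → ℤ)
    (b γ : Fin d → ℤ) (y : Fin N → ℝ) : ℝ :=
  (↑) ∘ (ξ ᵥ* α (b + γ)) ⬝ᵥ y - (↑) ∘ (ξ ᵥ* α b) ⬝ᵥ y

theorem phaseDrift_sub (ξ : Fin N → ℤ) (b γ : Fin d → ℤ) (y z : Fin N → ℝ) :
    phaseDrift α ξ b γ (y - z) = phaseDrift α ξ b γ y - phaseDrift α ξ b γ z := by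
  simp only [phaseDrift, dotProduct_sub]
  ring

theorem IsEigenbasis.ofReal_phaseDrift (h : IsEigenbasis α E χ) (ξ : Fin N → ℤ)
    (b γ : Fin d → ℤ) (y : Fin N → ℝ) :
    (phaseDrift α ξ b γ y : ℂ) =
      ∑ i, ((↑) ∘ ξ ᵥ* E) i * χ i b * (χ i γ - 1) * eigenCoord E y i := by
  rw [phaseDrift, Complex.ofReal_sub, h.ofReal_vecMul_dotProduct_eq,
    h.ofReal_vecMul_dotProduct_eq, ← sum_sub_distrib]
  refine sum_congr rfl fun i _ => ?_
  rw [AddChar.map_add_eq_mul]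
  ring

theorem IsEigenbasis.abs_phaseDrift_nsmul_sub_le (h : IsEigenbasis α E χ) (ξ : Fin N → ℤ)
    (b γ : Fin d → ℤ) (k : ℕ) (y : Fin N → ℝ) :
    |phaseDrift α ξ b (k • γ) y - k * phaseDrift α ξ b γ y| ≤
      ∑ i, ‖((↑) ∘ ξ ᵥ* E) i * χ i b * (χ i γ ^ k - 1 - k * (χ i γ - 1)) * eigenCoord E y i‖ := by
  rw [← Real.norm_eq_abs, ← Complex.norm_real]
  push_cast
  rw [h.ofReal_phaseDrift, h.ofReal_phaseDrift, mul_sum, ← sum_sub_distrib]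
  refine (norm_sum_le _ _).trans (sum_le_sum fun i _ => le_of_eq (congrArg _ ?_))
  rw [AddChar.map_nsmul_eq_pow]
  ring

theorem mFourier_toralMap_add (α : AddChar (Fin d → ℤ) (Matrix (Fin N) (Fin N) ℤ))
    (ξ : Fin N → ℤ) (b γ : Fin d → ℤ) (x x₀ : Fin N → UnitAddCircle) :
    mFourier ξ (toralMap (α (b + γ)) x) =
      𝐞 ((↑) ∘ (ξ ᵥ* α b) ⬝ᵥ (toralLift x - toralLift x₀)) *
        (mFourier ξ (toralMap (α (b + γ)) x₀) *
          𝐞 (phaseDrift α ξ b γ (toralLift x - toralLift x₀))) := by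
  simp only [mFourier_toralMap, ← Circle.coe_mul, ← AddChar.map_add_eq_mul, phaseDrift,
    dotProduct_sub]
  ring_nf

/-- The sum of the character `ξ` along the orbit segment `b, b + γ, …, b + (K - 1)γ` of `x`. -/
noncomputable def orbitCharSum (α : AddChar (Fin d → ℤ) (Matrix (Fin N) (Fin N) ℤ))
    (ξ : Fin N → ℤ) (b γ : Fin d → ℤ) (K : ℕ) (x : Fin N → UnitAddCircle) : ℂ :=
  ∑ k ∈ range K, mFourier ξ (toralMap (α (b + k • γ)) x)

theorem norm_orbitCharSum_le_card (α : AddChar (Fin d → ℤ) (Matrix (Fin N) (Fin N) ℤ))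
    (ξ : Fin N → ℤ) (b γ : Fin d → ℤ) (K : ℕ) (x : Fin N → UnitAddCircle) :
    ‖orbitCharSum α ξ b γ K x‖ ≤ K := by
  refine (norm_sum_le_of_le _ fun k _ => (norm_mFourier_apply ξ _).le).trans_eq ?_
  rw [sum_const, card_range, nsmul_eq_mul, mul_one]

theorem norm_orbitCharSum_le {ξ : Fin N → ℤ} {b γ : Fin d → ℤ} {x x₀ : Fin N → UnitAddCircle}
    {K : ℕ} {e : ℝ}
    (he : ∀ k < K, |phaseDrift α ξ b (k • γ) (toralLift x - toralLift x₀) -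
      k * phaseDrift α ξ b γ (toralLift x - toralLift x₀)| ≤ e) :
    ‖orbitCharSum α ξ b γ K x‖ ≤
      ‖∑ k ∈ range K, mFourier ξ (toralMap (α (b + k • γ)) x₀) *
        𝐞 (k * phaseDrift α ξ b γ (toralLift x - toralLift x₀))‖ + 2 * Real.pi * e * K := by
  set y := toralLift x - toralLift x₀ with hy
  set m : ℕ → ℂ := fun k => mFourier ξ (toralMap (α (b + k • γ)) x₀) with hm
  have hterm : ∀ k ∈ range K, ‖m k * 𝐞 (phaseDrift α ξ b (k • γ) y) -
      m k * 𝐞 (k * phaseDrift α ξ b γ y)‖ ≤ 2 * Real.pi * e := by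
    intro k hk
    rw [← mul_sub, norm_mul, hm, norm_mFourier_apply, one_mul]
    refine (norm_fourierChar_sub_le _ _).trans ?_
    gcongr
    exact he k (mem_range.mp hk)
  calc ‖orbitCharSum α ξ b γ K x‖
      = ‖∑ k ∈ range K, m k * 𝐞 (phaseDrift α ξ b (k • γ) y)‖ := by
        simp_rw [orbitCharSum, mFourier_toralMap_add α ξ b _ x x₀, ← mul_sum, norm_mul,
          Circle.norm_coe, one_mul, hm, hy]
    _ ≤ ‖∑ k ∈ range K, m k * 𝐞 (k * phaseDrift α ξ b γ y)‖ +
          ‖∑ k ∈ range K, (m k * 𝐞 (phaseDrift α ξ b (k • γ) y) -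
            m k * 𝐞 (k * phaseDrift α ξ b γ y))‖ := by
        rw [sum_sub_distrib]
        exact norm_le_norm_add_norm_sub' _ _
    _ ≤ _ := by
        gcongr
        refine (norm_sum_le_of_le _ hterm).trans_eq ?_
        rw [sum_const, card_range, nsmul_eq_mul]
        ring

theorem norm_pow_sub_one_sub_mul_le {R : Type*} [NormedCommRing R] [NormOneClass R] {z : R}
    (hz : ‖z - 1‖ ≤ 1) (k : ℕ) : ‖z ^ k - 1 - k * (z - 1)‖ ≤ 4 ^ k * ‖z - 1‖ ^ 2 := by
  induction k with
  | zero => simp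
  | succ k ih =>
    have hz2 : ‖z‖ ≤ 2 := by
      calc ‖z‖ ≤ ‖(1 : R)‖ + ‖z - 1‖ := norm_le_norm_add_norm_sub' _ _
        _ ≤ 2 := by rw [norm_one]; linarith
    have hk : ‖(k : R)‖ ≤ 4 ^ k :=
      (Nat.norm_cast_le k).trans (by
        rw [norm_one, mul_one]
        exact_mod_cast (Nat.lt_pow_self (by norm_num : 1 < 4)).le)
    calc ‖z ^ (k + 1) - 1 - (k + 1 : ℕ) * (z - 1)‖
        = ‖(z ^ k - 1 - k * (z - 1)) * z + k * (z - 1) ^ 2‖ := by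
          congr 1
          push_cast
          ring
      _ ≤ 4 ^ k * ‖z - 1‖ ^ 2 * 2 + 4 ^ k * ‖z - 1‖ ^ 2 := by
          refine (norm_add_le _ _).trans (add_le_add ?_ ?_)
          · exact (norm_mul_le _ _).trans (by gcongr)
          · refine (norm_mul_le _ _).trans ?_
            gcongr
            exact norm_pow_le _ 2
      _ ≤ 4 ^ (k + 1) * ‖z - 1‖ ^ 2 := by
          rw [pow_succ (4 : ℝ)]
          nlinarith [show 0 ≤ (4 : ℝ) ^ k * ‖z - 1‖ ^ 2 by positivity]

end Phase

section ScaleChoice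

open Finset Filter

variable {d N : ℕ} {χ : Fin N → AddChar (Fin d → ℤ) ℂ} {W : Finset (Fin N)}

theorem sum_norm_mul_le_sum_norm_mul {ι : Type*} {S : Finset ι} {y : ι → ℂ} {r : ℝ}
    (hy : ∀ i ∈ S, ‖y i‖ ≤ r) (c : ι → ℂ) : ∑ i ∈ S, ‖c i * y i‖ ≤ (∑ i ∈ S, ‖c i‖) * r := by
  rw [sum_mul]
  refine sum_le_sum fun i hi => ?_
  rw [norm_mul]
  exact mul_le_mul_of_nonneg_left (hy i hi) (norm_nonneg _)

theorem eventually_forall_sum_norm_mul_le {β ι : Type*} [Finite β] (S : Finset ι) (c : β → ι → ℂ)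
    {ρ : ℝ} (hρ : 0 < ρ) :
    ∀ᶠ k : ℕ in atTop, ∀ (s : β) (Δ : ι → ℂ), (∀ i ∈ S, ‖Δ i‖ ≤ 2 / 2 ^ k) →
      ∑ i ∈ S, ‖c s i * Δ i‖ ≤ ρ := by
  refine eventually_all.mpr fun s => ?_
  have hlim : Tendsto (fun k : ℕ => (∑ i ∈ S, ‖c s i‖) * (2 / 2 ^ k)) atTop (nhds 0) := by
    simpa using (tendsto_const_nhds.div_atTop
      (tendsto_pow_atTop_atTop_of_one_lt (one_lt_two (α := ℝ)))).const_mul _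
  filter_upwards [hlim.eventually_le_const hρ] with k hk Δ hΔ
  exact (sum_norm_mul_le_sum_norm_mul hΔ _).trans hk

theorem exists_forall_exists_two_pow_le {r : ℝ} (hr : 0 < r) (hr2 : r ≤ 2) :
    ∃ A : ℝ, 0 < A ∧ ∀ D : ℝ, 1 ≤ D → ∃ n : ℕ, 2 ^ n ≤ A * D ∧ D * (2 / 2 ^ n) ≤ r := by
  refine ⟨4 / r, by positivity, fun D hD => ?_⟩
  have h1 : 1 ≤ 2 / r * D := one_le_mul_of_one_le_of_one_le ((one_le_div hr).mpr hr2) hD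
  obtain ⟨n, hn, hn'⟩ := exists_nat_pow_near h1 one_lt_two
  refine ⟨n + 1, ?_, ?_⟩
  · calc (2 : ℝ) ^ (n + 1) = 2 * 2 ^ n := pow_succ' _ _
      _ ≤ 2 * (2 / r * D) := by gcongr
      _ = 4 / r * D := by ring
  · rw [← mul_div_assoc, div_le_iff₀ (by positivity)]
    rw [div_mul_eq_mul_div, div_lt_iff₀ hr] at hn'
    linarith

theorem exists_forall_one_le_norm_char_mul {u : Fin d → ℝ} (hu : ∀ i ∈ W, 0 < lyapunov χ u i)
    {z : Fin N → ℂ} (hz : ∀ i ∈ W, z i ≠ 0) : ∃ g, ∀ i ∈ W, 1 ≤ ‖χ i g * z i‖ := by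
  obtain ⟨g, hg⟩ := exists_forall_le_norm_char χ hu (∑ i ∈ W, ‖z i‖⁻¹)
  refine ⟨g, fun i hi => ?_⟩
  have hzi : 0 < ‖z i‖ := norm_pos_iff.mpr (hz i hi)
  rw [norm_mul, ← inv_le_iff_one_le_mul₀ hzi]
  exact (single_le_sum (f := fun i => ‖z i‖⁻¹) (fun _ _ => by positivity) hi).trans (hg i hi)

theorem sum_norm_mul_pow_sub_one_sub_mul_le {ι : Type*} {S : Finset ι} {z : ι → ℂ} {K : ℕ} {ρ : ℝ}
    (hz : ∀ i ∈ S, ‖z i - 1‖ ≤ min 1 (ρ / 4 ^ K)) (c y : ι → ℂ) {n : ℕ} (hn : n < K) :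
    ∑ i ∈ S, ‖c i * (z i ^ n - 1 - n * (z i - 1)) * y i‖ ≤
      ρ * ∑ i ∈ S, ‖c i * (z i - 1) * y i‖ := by
  rw [mul_sum]
  refine sum_le_sum fun i hi => ?_
  obtain ⟨h1, hρ⟩ := le_min_iff.mp (hz i hi)
  have hpow : ‖z i ^ n - 1 - n * (z i - 1)‖ ≤ ρ * ‖z i - 1‖ :=
    calc ‖z i ^ n - 1 - n * (z i - 1)‖ ≤ 4 ^ n * ‖z i - 1‖ ^ 2 := norm_pow_sub_one_sub_mul_le h1 n
      _ ≤ 4 ^ K * ‖z i - 1‖ ^ 2 := by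
        gcongr
        norm_num
      _ = 4 ^ K * ‖z i - 1‖ * ‖z i - 1‖ := by ring
      _ ≤ ρ * ‖z i - 1‖ := by
        gcongr
        exact (le_div_iff₀' (by positivity)).mp hρ
  calc ‖c i * (z i ^ n - 1 - n * (z i - 1)) * y i‖
      = ‖c i‖ * ‖z i ^ n - 1 - n * (z i - 1)‖ * ‖y i‖ := by rw [norm_mul, norm_mul]
    _ ≤ ‖c i‖ * (ρ * ‖z i - 1‖) * ‖y i‖ := by gcongr
    _ = ρ * (‖c i‖ * ‖z i - 1‖ * ‖y i‖) := by ring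
    _ = ρ * ‖c i * (z i - 1) * y i‖ := by rw [norm_mul, norm_mul]

/-- A choice of scales `k`, of a nearly neutral step `γ` and of an expanding time `b` at which, for
displacements in a cell of the grid of scale `k`, the drift rates weighted by `a` stay small, come
almost entirely from the coordinates in `W`, and are almost constant along `K` steps. The constant
`A` controls how much finer than necessary the scale is. -/
structure IsDriftScale (χ : Fin N → AddChar (Fin d → ℤ) ℂ) (W : Finset (Fin N)) {β : Type*}
    (a : β → Fin N → ℂ) (A ρ : ℝ) (K : ℕ) (k : Fin N → ℕ) (γ b : Fin d → ℤ) : Prop where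
  two_pow_le {i : Fin N} (hi : i ∈ W) : 2 ^ k i ≤ A * ‖χ i b * (χ i γ - 1)‖
  sum_mem_le {Δ : Fin N → ℂ} (hΔ : ∀ i, ‖Δ i‖ ≤ 2 / 2 ^ k i) (s : β) :
    ∑ i ∈ W, ‖a s i * χ i b * (χ i γ - 1) * Δ i‖ ≤ 1 / 8
  sum_notMem_le {Δ : Fin N → ℂ} (hΔ : ∀ i, ‖Δ i‖ ≤ 2 / 2 ^ k i) (s : β) :
    ∑ i ∈ Wᶜ, ‖a s i * χ i b * (χ i γ - 1) * Δ i‖ ≤ ρ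
  sum_pow_le {Δ : Fin N → ℂ} (hΔ : ∀ i, ‖Δ i‖ ≤ 2 / 2 ^ k i) (s : β) {n : ℕ} (hn : n < K) :
    ∑ i, ‖a s i * χ i b * (χ i γ ^ n - 1 - n * (χ i γ - 1)) * Δ i‖ ≤ ρ

theorem exists_isDriftScale (hχ : ∀ i, ∀ v ≠ 0, χ i v ≠ 1) {w u : Fin d → ℝ} (hw : w ≠ 0)
    (hW : ∀ i ∈ W, lyapunov χ w i = 0) (hu : ∀ i ∈ W, 0 < lyapunov χ u i) {β : Type*} [Finite β]
    (a : β → Fin N → ℂ) :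
    ∃ A : ℝ, 0 < A ∧ ∀ (K : ℕ) (ρ : ℝ), 0 < ρ → ∃ k γ b, IsDriftScale χ W a A ρ K k γ b := by
  obtain ⟨H, hH, haH⟩ := exists_pos_forall_abs_le fun s => ∑ i ∈ W, ‖a s i‖
  obtain ⟨A, hA, hscale⟩ := exists_forall_exists_two_pow_le
    (r := min 2 (1 / 8 / H)) (by positivity) (min_le_left _ _)
  refine ⟨A, hA, fun K ρ hρ => ?_⟩
  obtain ⟨γ, hγ, hγW⟩ := exists_ne_zero_forall_norm_char_sub_one_le χ hw hW
    (τ := min 1 (ρ / 4 ^ K)) (by positivity)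
  obtain ⟨b, hb⟩ := exists_forall_one_le_norm_char_mul hu
    (z := fun i => χ i γ - 1) fun i _ => sub_ne_zero.mpr (hχ i γ hγ)
  choose! kW hkW hkWr using fun i hi => hscale _ (hb i hi)
  obtain ⟨k₁, hk₁, hk₁pow⟩ := ((eventually_forall_sum_norm_mul_le Wᶜ
      (fun s i => a s i * χ i b * (χ i γ - 1)) hρ).and
    (eventually_forall_sum_norm_mul_le Wᶜ (fun (p : β × Fin K) i =>
      a p.1 i * χ i b * (χ i γ ^ (p.2 : ℕ) - 1 - (p.2 : ℕ) * (χ i γ - 1))) (half_pos hρ))).exists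
  have hoff : ∀ {Δ : Fin N → ℂ}, (∀ i, ‖Δ i‖ ≤ 2 / 2 ^ (if i ∈ W then kW i else k₁)) →
      ∀ i ∈ Wᶜ, ‖Δ i‖ ≤ 2 / 2 ^ k₁ := fun hΔ i hi => by
    simpa [mem_compl.mp hi] using hΔ i
  have hon : ∀ {Δ : Fin N → ℂ}, (∀ i, ‖Δ i‖ ≤ 2 / 2 ^ (if i ∈ W then kW i else k₁)) → ∀ s,
      ∑ i ∈ W, ‖a s i * χ i b * (χ i γ - 1) * Δ i‖ ≤ 1 / 8 := by
    intro Δ hΔ s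
    have hy : ∀ i ∈ W, ‖χ i b * (χ i γ - 1) * Δ i‖ ≤ 1 / 8 / H := fun i hi => by
      have hi' := hΔ i
      rw [if_pos hi] at hi'
      rw [norm_mul]
      exact ((mul_le_mul_of_nonneg_left hi' (norm_nonneg _)).trans (hkWr i hi)).trans
        (min_le_right _ _)
    have hsum := sum_norm_mul_le_sum_norm_mul hy (a s)
    simp only [← mul_assoc] at hsum
    refine hsum.trans ?_
    calc (∑ i ∈ W, ‖a s i‖) * (1 / 8 / H) ≤ H * (1 / 8 / H) := by
          gcongr
          exact (le_abs_self _).trans (haH s)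
      _ = 1 / 8 := mul_div_cancel₀ _ hH.ne'
  refine ⟨fun i => if i ∈ W then kW i else k₁, γ, b, ⟨fun hi => ?_, hon, fun hΔ s =>
    hk₁ s _ (hoff hΔ), fun {Δ} hΔ s n hn => ?_⟩⟩
  · simpa only [if_pos hi] using hkW _ hi
  · have hpow := sum_norm_mul_pow_sub_one_sub_mul_le hγW (fun i => a s i * χ i b) Δ hn
    rw [← sum_add_sum_compl W]
    nlinarith [hk₁pow (s, ⟨n, hn⟩) Δ (hoff hΔ), hon hΔ s]

end ScaleChoice

section Determination

open Finset Matrix UnitAddTorus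

open scoped FourierTransform NNReal

variable {d N : ℕ}

theorem le_card_filter_of_le_sum {ι : Type*} [Fintype ι] {f : ι → ℝ} {K c : ℝ} (hK : 0 < K)
    (hf : ∀ j, f j ≤ K) (hc : 0 ≤ c) (hsum : 2 * c * (Fintype.card ι * K) ≤ ∑ j, f j) :
    c * Fintype.card ι ≤ #{j | c * K ≤ f j} := by
  have hlarge : ∑ j with c * K ≤ f j, f j ≤ #{j | c * K ≤ f j} * K := by
    rw [← nsmul_eq_mul]
    exact sum_le_card_nsmul _ _ _ fun j _ => hf j
  have hsmall : ∑ j with ¬ c * K ≤ f j, f j ≤ Fintype.card ι * (c * K) := by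
    refine (sum_le_card_nsmul _ _ (c * K) fun j hj => (not_le.mp (mem_filter.mp hj).2).le).trans ?_
    rw [nsmul_eq_mul]
    gcongr
    exact card_le_univ _
  rw [← sum_filter_add_sum_filter_not univ fun j => c * K ≤ f j] at hsum
  refine le_of_mul_le_mul_right ?_ hK
  linarith

/-- The label records for which `p` the sum is large, which summands are responsible, and the tags
of all summands. -/
theorem exists_label_forall_eq_imp {X ι τ : Type*} {M : ℕ} {c K : ℝ} (hK : 0 < K) (hc : 0 ≤ c)
    {f : ι → Fin M → X → ℝ} (hf : ∀ p j x, f p j x ≤ K) (tag : ι → Fin M → X → τ) (S : Set X)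
    (hS : ∀ x ∈ S, ∃ p, 2 * c * (M * K) ≤ ∑ j, f p j x) :
    ∃ label : S → ι × Finset (Fin M) × (Fin M → τ), ∀ x y, label x = label y →
      ∃ (p : ι) (J : Finset (Fin M)), c * M ≤ #J ∧
        ∀ j ∈ J, c * K ≤ f p j x ∧ c * K ≤ f p j y ∧ tag p j x = tag p j y := by
  choose p hp using fun x : S => hS x x.2
  refine ⟨fun x => (p x, ({j | c * K ≤ f (p x) j x} : Finset _), fun j => tag (p x) j x),
    fun x y hxy => ?_⟩
  simp only [Prod.mk.injEq] at hxy
  obtain ⟨hpxy, hJ, htag⟩ := hxy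
  refine ⟨p x, ({j | c * K ≤ f (p x) j x} : Finset _), ?_, fun j hj => ?_⟩
  · simpa using le_card_filter_of_le_sum hK (fun j => hf (p x) j x) hc (by simpa using hp x)
  · have hj' := hj
    rw [hJ, ← hpxy] at hj'
    refine ⟨(mem_filter.mp hj).2, (mem_filter.mp hj').2, ?_⟩
    rw [congrFun htag j, hpxy]

theorem ncard_image_eigenGrid_le (E : Matrix (Fin N) (Fin N) ℂ) (k : Fin N → ℕ)
    {S : Set (Fin N → UnitAddCircle)} {β : Type*} [Finite β] (label : S → β) {B : ℕ}
    (h : ∀ x y, label x = label y → ∀ i,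
      ‖eigenCoord E (toralLift x) i - eigenCoord E (toralLift y) i‖ * 2 ^ k i ≤ B) :
    (eigenGrid E k '' S).ncard ≤ Nat.card β * #(cellBox N (B + 1)) := by
  have := Fintype.ofFinite β
  rcases S.eq_empty_or_nonempty with rfl | hne
  · simp
  have := hne.to_subtype
  rw [Nat.card_eq_fintype_card, ← card_univ]
  refine ncard_le_of_forall_sub_mem
    (F := fun b => eigenGrid E k (Function.invFun label b : S)) ?_
  rintro _ ⟨x, hx, rfl⟩
  exact ⟨label ⟨x, hx⟩, mem_univ _, dyadicCell_sub_mem_cellBox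
    (h ⟨x, hx⟩ _ (Function.apply_invFun_apply (f := label)).symm)⟩

variable {α : AddChar (Fin d → ℤ) (Matrix (Fin N) (Fin N) ℤ)} {E : Matrix (Fin N) (Fin N) ℂ}
  {χ : Fin N → AddChar (Fin d → ℤ) ℂ} {ξ : Fin N → ℤ} {W : Finset (Fin N)}

theorem exists_tag_abs_phaseDrift_sub_le {b γ : Fin d → ℤ} {K : ℕ} (hK : 0 < K) {c e : ℝ}
    (hc : 0 < c) (hec : 2 * Real.pi * e ≤ c) {S : Set (Fin N → UnitAddCircle)}
    {x₀ : Fin N → UnitAddCircle}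
    (hS : ∀ x ∈ S, |phaseDrift α ξ b γ (toralLift x - toralLift x₀)| ≤ 1 / 4)
    (he : ∀ x ∈ S, ∀ k < K, |phaseDrift α ξ b (k • γ) (toralLift x - toralLift x₀) -
      k * phaseDrift α ξ b γ (toralLift x - toralLift x₀)| ≤ e) :
    ∃ tag : (Fin N → UnitAddCircle) → Fin (⌈2 / c ^ 2⌉₊ + 1), ∀ x ∈ S, ∀ y ∈ S,
      2 * c * K ≤ ‖orbitCharSum α ξ b γ K x‖ → 2 * c * K ≤ ‖orbitCharSum α ξ b γ K y‖ →
      tag x = tag y →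
        |phaseDrift α ξ b γ (toralLift x - toralLift y)| ≤ 2 * (1 / (K * c ^ 2)) := by
  obtain ⟨f, hf⟩ := exists_map_fin_of_packingNumber_le
    (packingNumber_setOf_le_norm_sum_le hK
      (fun k => (norm_mFourier_apply ξ (toralMap (α (b + k • γ)) x₀)).le) hc)
  have hmem : ∀ x ∈ S, 2 * c * K ≤ ‖orbitCharSum α ξ b γ K x‖ →
      phaseDrift α ξ b γ (toralLift x - toralLift x₀) ∈ {θ : ℝ | |θ| ≤ 1 / 4 ∧ c * K ≤
        ‖∑ k ∈ range K, mFourier ξ (toralMap (α (b + k • γ)) x₀) * 𝐞 (k * θ)‖} := by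
    refine fun x hx hsum => ⟨hS x hx, ?_⟩
    have hle := hsum.trans (norm_orbitCharSum_le (he x hx))
    have hcK : 2 * Real.pi * e * K ≤ c * K := by gcongr
    linarith
  refine ⟨fun x => f (phaseDrift α ξ b γ (toralLift x - toralLift x₀)),
    fun x hx y hy hxsum hysum htag => ?_⟩
  have hdist := hf _ (hmem x hx hxsum) _ (hmem y hy hysum) htag
  rwa [Real.coe_toNNReal _ (by positivity), Real.dist_eq, ← phaseDrift_sub,
    sub_sub_sub_cancel_right] at hdist

theorem IsEigenbasis.exists_norm_eigenCoord_le_of_abs_phaseDrift_le (h : IsEigenbasis α E χ)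
    (hξ : ξ ≠ 0) (W : Finset (Fin N)) {ι : Type*} [Finite ι] (q : ι → Fin d → ℤ) (M : ℕ) :
    ∃ (g : Fin M → Fin d → ℤ) (B : ℝ), 0 ≤ B ∧ ∀ (p : ι) (J : Finset (Fin M)), #W ≤ #J →
      ∀ (b γ : Fin d → ℤ) (y : Fin N → ℝ) (δ : ℝ), 0 ≤ δ →
      (∀ j ∈ J, |phaseDrift α ξ (q p + g j + b) γ y| ≤ 2 * δ ∧ ∑ i ∈ Wᶜ,
        ‖((↑) ∘ ξ ᵥ* E) i * χ i (q p + g j) * χ i b * (χ i γ - 1) * eigenCoord E y i‖ ≤ δ) →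
      ∀ i ∈ W, ‖χ i b * (χ i γ - 1) * eigenCoord E y i‖ ≤ B * δ := by
  obtain ⟨g, B, hB, hg⟩ := exists_fin_forall_norm_le_mul
    (fun i j hij n hn => h.exists_char_pow_ne hij hn) W M
  set η : Fin N → ℂ := (↑) ∘ ξ ᵥ* E
  obtain ⟨H, hH, hηH⟩ := exists_pos_forall_abs_le fun s : ι × Fin N => ‖η s.2 * χ s.2 (q s.1)‖⁻¹
  refine ⟨g, H * (B * 3), by positivity, fun p J hJ b γ y δ hδ hdrift i hi => ?_⟩
  set Y : Fin N → ℂ := fun i => χ i b * (χ i γ - 1) * eigenCoord E y i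
  have hsum : ∀ j ∈ J, ‖∑ i ∈ W, χ i (g j) * (η i * χ i (q p) * Y i)‖ ≤ 3 * δ := by
    intro j hj
    obtain ⟨hj, hjoff⟩ := hdrift j hj
    have hsplit := h.ofReal_phaseDrift ξ (q p + g j + b) γ y
    rw [← sum_add_sum_compl W] at hsplit
    have hW : ∑ i ∈ W, χ i (g j) * (η i * χ i (q p) * Y i) =
        phaseDrift α ξ (q p + g j + b) γ y -
          ∑ i ∈ Wᶜ, η i * χ i (q p + g j) * χ i b * (χ i γ - 1) * eigenCoord E y i := by
      rw [hsplit]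
      simp only [AddChar.map_add_eq_mul, Y, ← mul_assoc]
      rw [add_sub_cancel_right]
      exact sum_congr rfl fun i _ => by ring
    rw [← Real.norm_eq_abs, ← Complex.norm_real] at hj
    rw [hW]
    linarith [norm_sub_le_of_le hj ((norm_sum_le _ _).trans hjoff)]
  have hne : η i * χ i (q p) ≠ 0 :=
    mul_ne_zero (h.vecMul_apply_ne_zero hξ i) (char_ne_zero _ _)
  calc ‖Y i‖ = ‖η i * χ i (q p)‖⁻¹ * ‖η i * χ i (q p) * Y i‖ := by
        rw [norm_mul _ (Y i), inv_mul_cancel_left₀ (norm_ne_zero_iff.mpr hne)]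
    _ ≤ H * (B * (3 * δ)) := by
        gcongr
        · exact (le_abs_self _).trans (hηH (p, i))
        · exact hg J hJ _ _ (by positivity) hsum i hi
    _ = H * (B * 3) * δ := by ring

theorem IsDriftScale.abs_phaseDrift_le {β : Type*} {v : β → Fin d → ℤ} {A ρ : ℝ} {K : ℕ}
    {k : Fin N → ℕ} {γ b : Fin d → ℤ} (hs : IsDriftScale χ W
      (fun s i => ((↑) ∘ ξ ᵥ* E) i * χ i (v s)) A ρ K k γ b) (h : IsEigenbasis α E χ)
    {x y : Fin N → UnitAddCircle} (hxy : eigenGrid E k x = eigenGrid E k y) (s : β) :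
    |phaseDrift α ξ (v s + b) γ (toralLift x - toralLift y)| ≤ 1 / 8 + ρ := by
  have hΔ : ∀ i, ‖eigenCoord E (toralLift x - toralLift y) i‖ ≤ 2 / 2 ^ k i := fun i => by
    simpa using norm_eigenCoord_sub_le hxy i
  rw [← Real.norm_eq_abs, ← Complex.norm_real, h.ofReal_phaseDrift, ← sum_add_sum_compl W]
  simp only [AddChar.map_add_eq_mul, ← mul_assoc]
  exact norm_add_le_of_le ((norm_sum_le _ _).trans (hs.sum_mem_le hΔ s))
    ((norm_sum_le _ _).trans (hs.sum_notMem_le hΔ s))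

theorem IsDriftScale.abs_phaseDrift_nsmul_sub_le {β : Type*} {v : β → Fin d → ℤ} {A ρ : ℝ} {K : ℕ}
    {k : Fin N → ℕ} {γ b : Fin d → ℤ} (hs : IsDriftScale χ W
      (fun s i => ((↑) ∘ ξ ᵥ* E) i * χ i (v s)) A ρ K k γ b) (h : IsEigenbasis α E χ)
    {x y : Fin N → UnitAddCircle} (hxy : eigenGrid E k x = eigenGrid E k y) (s : β) {n : ℕ}
    (hn : n < K) :
    |phaseDrift α ξ (v s + b) (n • γ) (toralLift x - toralLift y) -
      n * phaseDrift α ξ (v s + b) γ (toralLift x - toralLift y)| ≤ ρ := by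
  refine (h.abs_phaseDrift_nsmul_sub_le ξ _ γ n _).trans ?_
  simp only [AddChar.map_add_eq_mul, ← mul_assoc]
  exact hs.sum_pow_le (fun i => by simpa using norm_eigenCoord_sub_le hxy i) s hn

/-- The points at which, for some `p`, the character sums started at the times `q p + g j + b` have
total absolute value at least `t`. -/
def largeOrbitCharSum (α : AddChar (Fin d → ℤ) (Matrix (Fin N) (Fin N) ℤ)) (ξ : Fin N → ℤ)
    {ι : Type*} (q : ι → Fin d → ℤ) {M : ℕ} (g : Fin M → Fin d → ℤ) (b γ : Fin d → ℤ) (K : ℕ)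
    (t : ℝ) : Set (Fin N → UnitAddCircle) :=
  {x | ∃ p, t ≤ ∑ j, ‖orbitCharSum α ξ (q p + g j + b) γ K x‖}

theorem IsDriftScale.exists_label {ι : Type*} {q : ι → Fin d → ℤ} {M : ℕ}
    {g : Fin M → Fin d → ℤ} {A ρ : ℝ} {K : ℕ} {k : Fin N → ℕ} {γ b : Fin d → ℤ}
    (hs : IsDriftScale χ W (fun (s : ι × Fin M) i => ((↑) ∘ ξ ᵥ* E) i * χ i (q s.1 + g s.2))
      A ρ K k γ b) (h : IsEigenbasis α E χ) (hK : 0 < K) {c : ℝ} (hc : 0 < c) (hρ : ρ ≤ 1 / 8)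
    (hρc : 2 * Real.pi * ρ ≤ c) {z : Fin N → ℤ × ℤ} {S : Set (Fin N → UnitAddCircle)}
    (hSz : ∀ x ∈ S, eigenGrid E k x = z)
    (hSlarge : S ⊆ largeOrbitCharSum α ξ q g b γ K (4 * c * (M * K))) :
    ∃ label : S → ι × Finset (Fin M) × (Fin M → Fin (⌈2 / c ^ 2⌉₊ + 1)), ∀ x y,
      label x = label y → ∃ (p : ι) (J : Finset (Fin M)), 2 * c * M ≤ #J ∧ ∀ j ∈ J,
        |phaseDrift α ξ (q p + g j + b) γ (toralLift x - toralLift y)| ≤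
          2 * (1 / (K * c ^ 2)) := by
  rcases S.eq_empty_or_nonempty with rfl | ⟨x₀, hx₀⟩
  · exact ⟨fun x => x.2.elim, fun x => x.2.elim⟩
  have hx₀S : ∀ x ∈ S, eigenGrid E k x = eigenGrid E k x₀ := fun x hx =>
    (hSz x hx).trans (hSz x₀ hx₀).symm
  choose tag htag using fun p j => exists_tag_abs_phaseDrift_sub_le (α := α) (ξ := ξ) hK hc hρc
    (fun x hx => (hs.abs_phaseDrift_le h (hx₀S x hx) (p, j)).trans (by linarith))
    (fun x hx n hn => hs.abs_phaseDrift_nsmul_sub_le h (hx₀S x hx) (p, j) hn)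
  obtain ⟨label, hlabel⟩ := exists_label_forall_eq_imp (K := K) (c := 2 * c) (by positivity)
    (by positivity) (fun p j x => norm_orbitCharSum_le_card α ξ (q p + g j + b) γ K x) tag S
    fun x hx => (hSlarge hx).imp fun p hp => by linarith
  refine ⟨label, fun x y hxy => ?_⟩
  obtain ⟨p, J, hJ, hJtag⟩ := hlabel x y hxy
  exact ⟨p, J, hJ, fun j hj => htag p j x x.2 y y.2 (hJtag j hj).1 (hJtag j hj).2.1
    (hJtag j hj).2.2⟩

theorem norm_mul_le_of_norm_mul_le {R : Type*} [NormedDivisionRing R] {y z : R} {A r t : ℝ}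
    (hA : 0 ≤ A) (ht : t ≤ A * ‖z‖) (hzy : ‖z * y‖ ≤ r) : ‖y‖ * t ≤ A * r :=
  calc ‖y‖ * t ≤ ‖y‖ * (A * ‖z‖) := by gcongr
    _ = A * ‖z * y‖ := by
        rw [norm_mul]
        ring
    _ ≤ A * r := by gcongr

theorem IsDriftScale.norm_mul_two_pow_add_le {β : Type*} {a : β → Fin N → ℂ} {A ρ : ℝ} {κ : ℕ}
    {k : Fin N → ℕ} {γ b : Fin d → ℤ} (hs : IsDriftScale χ W a A ρ (2 ^ κ) k γ b) (hA : 0 ≤ A)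
    {Δ : Fin N → ℂ} (hΔ : ∀ i, ‖Δ i‖ ≤ 2 / 2 ^ k i) {r : ℝ} (hr : 0 ≤ r)
    (hW : ∀ i ∈ W, ‖χ i b * (χ i γ - 1) * Δ i‖ * 2 ^ κ ≤ r) (i : Fin N) :
    ‖Δ i‖ * 2 ^ (k i + if i ∈ W then κ else 0) ≤ A * r + 2 := by
  by_cases hi : i ∈ W
  · have hle := norm_mul_le_of_norm_mul_le hA (hs.two_pow_le hi)
      ((le_div_iff₀ (by positivity)).mpr (hW i hi))
    rw [if_pos hi, pow_add, ← mul_assoc]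
    rw [← mul_div_assoc, le_div_iff₀ (by positivity)] at hle
    linarith
  · rw [if_neg hi, add_zero]
    have := mul_nonneg hA hr
    linarith [(le_div_iff₀ (by positivity)).mp (hΔ i)]

theorem IsEigenbasis.exists_ncard_image_largeOrbitCharSum_le (h : IsEigenbasis α E χ) (hξ : ξ ≠ 0)
    {w u : Fin d → ℝ} (hw : w ≠ 0) (hW : ∀ i ∈ W, lyapunov χ w i = 0)
    (hu : ∀ i ∈ W, 0 < lyapunov χ u i) {c : ℝ} (hc : 0 < c) {ι : Type*} [Finite ι]
    (q : ι → Fin d → ℤ) {M : ℕ} (hM : #W ≤ 2 * c * M) :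
    ∃ (C : ℕ) (g : Fin M → Fin d → ℤ), ∀ κ : ℕ, ∃ (k : Fin N → ℕ) (γ b : Fin d → ℤ), ∀ z,
      (eigenGrid E (fun i => k i + if i ∈ W then κ else 0) ''
        (largeOrbitCharSum α ξ q g b γ (2 ^ κ) (4 * c * (M * (2 ^ κ : ℕ))) ∩
          eigenGrid E k ⁻¹' {z})).ncard ≤ C := by
  obtain ⟨g, B, hB, hg⟩ := h.exists_norm_eigenCoord_le_of_abs_phaseDrift_le hξ W q M
  obtain ⟨A, hA, hscale⟩ := exists_isDriftScale (fun i _ hv => h.char_ne_one i hv) hw hW hu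
    fun (s : ι × Fin M) i => ((↑) ∘ ξ ᵥ* E) i * χ i (q s.1 + g s.2)
  refine ⟨Nat.card (ι × Finset (Fin M) × (Fin M → Fin (⌈2 / c ^ 2⌉₊ + 1))) *
    #(cellBox N (⌈A * (B * (1 / c ^ 2)) + 2⌉₊ + 1)), g, fun κ => ?_⟩
  have hK : 0 < 2 ^ κ := by positivity
  let δ : ℝ := 1 / ((2 ^ κ : ℕ) * c ^ 2)
  have hδ : 0 < δ := by positivity
  have hδκ : δ * 2 ^ κ = 1 / c ^ 2 := by
    push_cast [δ]
    field_simp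
  obtain ⟨k, γ, b, hs⟩ := hscale (2 ^ κ) (min (1 / 8) (min (c / (2 * Real.pi)) δ)) (by positivity)
  refine ⟨k, γ, b, fun z => ?_⟩
  obtain ⟨label, hlabel⟩ := hs.exists_label h hK hc (min_le_left _ _)
    ((le_div_iff₀' (by positivity)).mp ((min_le_right _ _).trans (min_le_left _ _)))
    (fun x hx => hx.2) Set.inter_subset_left (z := z)
  refine ncard_image_eigenGrid_le E _ label fun x y hxy i => ?_
  obtain ⟨p, J, hJ, hdrift⟩ := hlabel x y hxy
  have hΔ : ∀ i, ‖eigenCoord E (toralLift x - toralLift y) i‖ ≤ 2 / 2 ^ k i := fun i => by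
    simpa using norm_eigenCoord_sub_le (x.2.2.trans y.2.2.symm) i
  have hWΔ := hg p J (by exact_mod_cast hM.trans hJ) b γ _ δ hδ.le fun j hj => ⟨hdrift j hj,
    (hs.sum_notMem_le hΔ (p, j)).trans ((min_le_right _ _).trans (min_le_right _ _))⟩
  rw [← Pi.sub_apply, ← map_sub]
  refine (hs.norm_mul_two_pow_add_le hA.le hΔ (by positivity) (fun i hi => ?_) i).trans
    (Nat.le_ceil _)
  exact (mul_le_mul_of_nonneg_right (hWΔ i hi) (by positivity)).trans_eq
    (by rw [mul_assoc, hδκ])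

end Determination

section LargeCharSum

open Finset Matrix UnitAddTorus

variable {d N : ℕ}

/-- Markov's inequality for the average of `‖f - c‖` along the maps `T s`. -/
theorem exists_measurableSet_forall_le_norm_sum {Ω ι : Type*} {mΩ : MeasurableSpace Ω}
    {μ : Measure Ω} [IsFiniteMeasure μ] [Fintype ι] [Nonempty ι] {T : ι → Ω → Ω}
    (hT : ∀ s, MeasurePreserving (T s) μ μ) {f : Ω → ℂ} (hf : Measurable f) (hfi : Integrable f μ)
    {c : ℂ} (hc : c ≠ 0) {ε : ℝ} (hmean : ∫ x, ‖f x - c‖ ∂μ ≤ ε * (‖c‖ / 2)) :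
    ∃ Q, MeasurableSet Q ∧ μ.real Qᶜ ≤ ε ∧
      ∀ x ∈ Q, ‖c‖ / 2 * Fintype.card ι ≤ ‖∑ s, f (T s x)‖ := by
  let D : Ω → ℝ := fun x => ∑ s, ‖f (T s x) - c‖
  have hDm : Measurable D := measurable_sum _ fun s _ =>
    ((hf.comp (hT s).measurable).sub_const c).norm
  have hsi : ∀ s, Integrable (fun x => ‖f (T s x) - c‖) μ := fun s =>
    (((hT s).integrable_comp_of_integrable hfi).sub (integrable_const c)).norm
  have hD : ∫ x, D x ∂μ ≤ Fintype.card ι * (ε * (‖c‖ / 2)) := by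
    rw [integral_finsetSum _ fun s _ => hsi s, ← nsmul_eq_mul]
    refine sum_le_card_nsmul _ _ _ fun s _ => le_trans (le_of_eq ?_) hmean
    exact (hT s).hasLaw.integral_comp (f := fun x => ‖f x - c‖)
      (hf.sub_const c).norm.aestronglyMeasurable
  refine ⟨{x | D x ≤ ‖c‖ / 2 * Fintype.card ι}, measurableSet_le hDm measurable_const, ?_,
    fun x hx => ?_⟩
  · have hmarkov := mul_meas_ge_le_integral_of_nonneg (μ := μ) (f := D)
      (.of_forall fun x => sum_nonneg fun s _ => norm_nonneg _)
      (integrable_finsetSum _ fun s _ => hsi s) (‖c‖ / 2 * Fintype.card ι)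
    have hmono : μ.real {x | D x ≤ ‖c‖ / 2 * Fintype.card ι}ᶜ ≤
        μ.real {x | ‖c‖ / 2 * Fintype.card ι ≤ D x} :=
      measureReal_mono fun x hx => (not_le.mp (Set.notMem_ofPred_iff.mp hx)).le
    have hpos : 0 < ‖c‖ / 2 * Fintype.card ι :=
      mul_pos (half_pos (norm_pos_iff.mpr hc)) (Nat.cast_pos.mpr Fintype.card_pos)
    refine hmono.trans (le_of_mul_le_mul_left (hmarkov.trans (hD.trans_eq ?_)) hpos)
    ring
  · have hsum : ∑ s, f (T s x) = Fintype.card ι * c + ∑ s, (f (T s x) - c) := by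
      rw [sum_sub_distrib, sum_const, nsmul_eq_mul, card_univ]
      ring
    have hnorm : ‖(Fintype.card ι * c : ℂ)‖ = Fintype.card ι * ‖c‖ := by simp
    have htri := norm_sub_norm_le (Fintype.card ι * c : ℂ) (-∑ s, (f (T s x) - c))
    rw [sub_neg_eq_add, ← hsum, norm_neg, hnorm] at htri
    have hx' : ‖∑ s, (f (T s x) - c)‖ ≤ ‖c‖ / 2 * Fintype.card ι := (norm_sum_le _ _).trans hx
    linarith

theorem exists_le_of_norm_sum_mul_ge {ι : Type*} [Fintype ι] {p : ι → ℝ} (hp : ∀ i, 0 ≤ p i)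
    (hp1 : ∑ i, p i = 1) {z : ι → ℂ} {S : ι → ℝ} (hzS : ∀ i, ‖z i‖ ≤ S i) {t : ℝ}
    (ht : t ≤ ‖∑ i, (p i : ℂ) * z i‖) : ∃ i, t ≤ S i := by
  obtain ⟨i, -, hi⟩ := (convexOn_id convex_univ).exists_ge_of_centerMass (t := univ) (w := p)
    (p := S) (fun i _ => hp i) (by rw [hp1]; exact one_pos) fun i _ => Set.mem_univ _
  rw [centerMass_eq_of_sum_1 _ _ hp1] at hi
  refine ⟨i, ht.trans (le_trans ((norm_sum_le _ _).trans (sum_le_sum fun i _ => ?_)) hi)⟩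
  rw [norm_mul, Complex.norm_real, Real.norm_of_nonneg (hp i), smul_eq_mul]
  exact mul_le_mul_of_nonneg_left (hzS i) (hp i)

variable {α : AddChar (Fin d → ℤ) (Matrix (Fin N) (Fin N) ℤ)}
  {μ : Measure (Fin N → UnitAddCircle)} [IsProbabilityMeasure μ] {ξ : Fin N → ℤ}

theorem sum_mul_sum_orbitCharSum {ι : Type*} [Fintype ι] (p : ι → ℝ) (q : ι → Fin d → ℤ) {M : ℕ}
    (g : Fin M → Fin d → ℤ) (b γ : Fin d → ℤ) (K : ℕ) (x : Fin N → UnitAddCircle) :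
    ∑ i, (p i : ℂ) * ∑ j, orbitCharSum α ξ (q i + g j + b) γ K x =
      ∑ s : Fin M × Fin K, ∑ i, (p i : ℂ) * mFourier ξ
        (toralMap (α (q i)) (toralMap (α (g s.1 + b + (s.2 : ℕ) • γ)) x)) := by
  rw [sum_comm]
  refine sum_congr rfl fun i _ => ?_
  rw [← mul_sum, Fintype.sum_prod_type]
  refine congrArg _ (sum_congr rfl fun j _ => ?_)
  rw [orbitCharSum, sum_range]
  refine sum_congr rfl fun k _ => ?_
  rw [← Function.comp_apply (f := toralMap _), ← toralMap_mul, ← AddChar.map_add_eq_mul]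
  rw [add_assoc, add_assoc, add_assoc]

theorem exists_measurableSet_subset_largeOrbitCharSum
    (hμ : ∀ v, MeasurePreserving (toralMap (α v)) μ μ) {ι : Type*} [Fintype ι] {p : ι → ℝ}
    (hp : ∀ i, 0 ≤ p i) (hp1 : ∑ i, p i = 1) {q : ι → Fin d → ℤ} {c : ℂ} (hc : c ≠ 0) {ε : ℝ}
    (hmean : ∫ x, ‖∑ i, (p i : ℂ) * mFourier ξ (toralMap (α (q i)) x) - c‖ ∂μ ≤ ε * (‖c‖ / 2))
    {M K : ℕ} (hM : 0 < M) (hK : 0 < K) (g : Fin M → Fin d → ℤ) (b γ : Fin d → ℤ) :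
    ∃ Q, MeasurableSet Q ∧ μ.real Qᶜ ≤ ε ∧
      Q ⊆ largeOrbitCharSum α ξ q g b γ K (‖c‖ / 2 * (M * K)) := by
  have : NeZero M := ⟨hM.ne'⟩
  have : NeZero K := ⟨hK.ne'⟩
  have hcont : Continuous fun x => ∑ i, (p i : ℂ) * mFourier ξ (toralMap (α (q i)) x) := by
    have := fun i => continuous_toralMap (α (q i))
    fun_prop
  obtain ⟨Q, hQ, hQε, hQlarge⟩ := exists_measurableSet_forall_le_norm_sum (μ := μ)
    (fun s : Fin M × Fin K => hμ (g s.1 + b + (s.2 : ℕ) • γ)) hcont.measurable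
    (hcont.integrable_of_hasCompactSupport (HasCompactSupport.of_compactSpace _)) hc hmean
  refine ⟨Q, hQ, hQε, fun x hx => ?_⟩
  have hlarge := hQlarge x hx
  rw [← sum_mul_sum_orbitCharSum, Fintype.card_prod, Fintype.card_fin, Fintype.card_fin,
    Nat.cast_mul] at hlarge
  exact exists_le_of_norm_sum_mul_ge hp hp1 (fun i => norm_sum_le _ _) hlarge

variable {E : Matrix (Fin N) (Fin N) ℂ} {χ : Fin N → AddChar (Fin d → ℤ) ℂ}

theorem gridEntropy_natCast_add_indicator (μ : Measure (Fin N → UnitAddCircle))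
    (E : Matrix (Fin N) (Fin N) ℂ) (k : Fin N → ℕ) (W : Finset (Fin N)) (κ : ℕ) :
    gridEntropy μ E ((fun i => (k i : ℝ)) + (W : Set (Fin N)).indicator (Function.const _ (κ : ℝ)))
      = entropy μ (eigenGrid E fun i => k i + if i ∈ W then κ else 0) := by
  rw [gridEntropy]
  congr with i
  by_cases hi : i ∈ W
  · simp [hi, ← Nat.cast_add]
  · simp [hi]

theorem condEntropy_eigenGrid_add_le {W : Finset (Fin N)} {k : Fin N → ℕ} {κ : ℕ}
    {Q : Set (Fin N → UnitAddCircle)} (hQ : MeasurableSet Q) {C : ℕ}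
    (hC : ∀ z, (eigenGrid E (fun i => k i + if i ∈ W then κ else 0) ''
      (Q ∩ eigenGrid E k ⁻¹' {z})).ncard ≤ C) :
    condEntropy μ (eigenGrid E fun i => k i + if i ∈ W then κ else 0) (eigenGrid E k) ≤
      Real.log 2 + Real.log C + μ.real Qᶜ * (2 * N * Real.log 2 * κ) := by
  have hle := condEntropy_le_of_ncard_inter_le (μ := μ) hQ hC
    (ncard_image_eigenGrid_preimage_le E (c := κ) fun i => by split_ifs <;> lia)
  have hlog : Real.log (((2 ^ κ * 2 ^ κ) ^ N : ℕ) : ℝ) = 2 * N * Real.log 2 * κ := by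
    push_cast
    rw [Real.log_pow, Real.log_mul (by positivity) (by positivity), Real.log_pow]
    ring
  rwa [hlog, ← add_assoc] at hle

/-- The exceptional set comes from the mean ergodic theorem: averages of the character `ξ` along the
action are close to the nonzero constant `∫ x, mFourier ξ x ∂μ` off a set of small measure. -/
theorem IsEigenbasis.exists_measurableSet_ncard_image_le (h : IsEigenbasis α E χ)
    (hμ : ∀ v, MeasurePreserving (toralMap (α v)) μ μ)
    (herg : ∀ A, MeasurableSet A → (∀ v, toralMap (α v) ⁻¹' A = A) → μ A = 0 ∨ μ A = 1)
    (hξ : ξ ≠ 0) (hc : ∫ x, mFourier ξ x ∂μ ≠ 0) {w u : Fin d → ℝ} (hw : w ≠ 0)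
    {W : Finset (Fin N)} (hW : ∀ i ∈ W, lyapunov χ w i = 0) (hu : ∀ i ∈ W, 0 < lyapunov χ u i)
    {ε : ℝ} (hε : 0 < ε) :
    ∃ C : ℕ, ∀ κ : ℕ, ∃ (k : Fin N → ℕ) (Q : Set (Fin N → UnitAddCircle)), MeasurableSet Q ∧
      μ.real Qᶜ ≤ ε ∧ ∀ z, (eigenGrid E (fun i => k i + if i ∈ W then κ else 0) ''
        (Q ∩ eigenGrid E k ⁻¹' {z})).ncard ≤ C := by
  set c := ∫ x, mFourier ξ x ∂μ
  have hcpos : 0 < ‖c‖ := norm_pos_iff.mpr hc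
  have hadd : ∀ v w, toralMap (α (v + w)) = toralMap (α v) ∘ toralMap (α w) := fun v w => by
    rw [AddChar.map_add_eq_mul, toralMap_mul]
  have hzero : toralMap (α 0) = id := by rw [AddChar.map_zero_eq_one, toralMap_one]
  obtain ⟨ι, _, p, q, hp, hp1, hmean⟩ := exists_convexCombination_integral_norm_sub_le
    (f := mFourier ξ) hμ hadd (fun f hf hinv => ae_eq_const_of_forall_comp_ae_eq
      (fun v => (hμ v).measurable) hzero hadd herg hf hinv)
    (.of_bound (by fun_prop) 1 (.of_forall fun x => (norm_mFourier_apply ξ x).le))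
    (δ := ε * (‖c‖ / 2)) (mul_pos hε (half_pos hcpos))
  obtain ⟨M, hM⟩ := exists_nat_ge (max 1 (#W / (‖c‖ / 4)))
  have hWM := (div_le_iff₀' (by linarith)).mp ((le_max_right _ _).trans hM)
  obtain ⟨C, g, hC⟩ := h.exists_ncard_image_largeOrbitCharSum_le hξ hw hW hu
    (c := ‖c‖ / 8) (by linarith) q (M := M) (hWM.trans_eq (by ring))
  refine ⟨C, fun κ => ?_⟩
  obtain ⟨k, γ, b, hk⟩ := hC κ
  obtain ⟨Q, hQ, hQε, hQlarge⟩ := exists_measurableSet_subset_largeOrbitCharSum (K := 2 ^ κ) hμ hp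
    hp1 hc hmean (by exact_mod_cast (le_max_left _ _).trans hM) (by positivity) g b γ
  rw [show ‖c‖ / 2 = 4 * (‖c‖ / 8) by ring] at hQlarge
  exact ⟨k, Q, hQ, hQε, fun z => (Set.ncard_le_ncard (Set.image_mono
    (Set.inter_subset_inter_left _ hQlarge))
    ((eigenGrid E _).finite_range.subset (Set.image_subset_range _ _))).trans (hk z)⟩

theorem IsEigenbasis.exists_gridEntropy_add_indicator_le (h : IsEigenbasis α E χ)
    (hμ : ∀ v, MeasurePreserving (toralMap (α v)) μ μ)
    (herg : ∀ A, MeasurableSet A → (∀ v, toralMap (α v) ⁻¹' A = A) → μ A = 0 ∨ μ A = 1)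
    (hξ : ξ ≠ 0) (hc : ∫ x, mFourier ξ x ∂μ ≠ 0) {w : Fin d → ℝ} (u : Fin d → ℝ) (hw : w ≠ 0)
    {ε : ℝ} (hε : 0 < ε) (κ₀ : ℝ) :
    ∃ κ ≥ κ₀, ∃ k, 0 ≤ k ∧ gridEntropy μ E
      (k + (neutralUnstable (lyapunov χ) w u).indicator (Function.const _ κ)) ≤
        gridEntropy μ E k + ε * κ := by
  classical
  let W : Finset (Fin N) := {i | i ∈ neutralUnstable (lyapunov χ) w u}
  let ε₁ := ε / (4 * N * Real.log 2 + 1)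
  have hε₁ : ε₁ * (2 * N * Real.log 2) ≤ ε / 2 := by
    rw [div_mul_eq_mul_div, div_le_iff₀ (by positivity)]
    linarith
  obtain ⟨C, hC⟩ := h.exists_measurableSet_ncard_image_le hμ herg hξ hc hw (W := W) (u := u)
    (fun i hi => (mem_filter.mp hi).2.1) (fun i hi => (mem_filter.mp hi).2.2) (ε := ε₁)
    (by positivity)
  obtain ⟨κ, hκ⟩ := exists_nat_ge (max κ₀ ((Real.log 2 + Real.log C) / (ε / 2)))
  have hκC := (div_le_iff₀ (half_pos hε)).mp ((le_max_right _ _).trans hκ)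
  obtain ⟨k, Q, hQ, hQε, hk⟩ := hC κ
  refine ⟨κ, (le_max_left _ _).trans hκ, fun i => k i, fun i => by positivity, ?_⟩
  rw [show neutralUnstable (lyapunov χ) w u = (W : Set (Fin N)) by simp [W],
    gridEntropy_natCast_add_indicator]
  simp only [gridEntropy, Nat.ceil_natCast]
  have hQκ : μ.real Qᶜ * (2 * N * Real.log 2 * κ) ≤ ε / 2 * κ := by
    calc μ.real Qᶜ * (2 * N * Real.log 2 * κ) ≤ ε₁ * (2 * N * Real.log 2 * κ) := by gcongr
      _ = ε₁ * (2 * N * Real.log 2) * κ := by ring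
      _ ≤ ε / 2 * κ := by gcongr
  linarith [condEntropy_eigenGrid_add_le (μ := μ) hQ hk, entropy_le_add_condEntropy (μ := μ)
    (eigenGrid E fun i => k i + if i ∈ W then κ else 0) (eigenGrid E k)]

end LargeCharSum

section Approximation

open Filter Topology

variable {Ω γ : Type*}

theorem eventually_forall_ne_of_disjoint [PseudoMetricSpace Ω] {Y : ℕ → Ω → γ} {r : ℕ → ℝ}
    (hr : Tendsto r atTop (𝓝 0)) (hY : ∀ n x y, Y n x = Y n y → dist x y ≤ r n) {A B : Set Ω}
    (hA : IsCompact A) (hB : IsClosed B) (hAB : Disjoint A B) :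
    ∀ᶠ n in atTop, ∀ x ∈ A, ∀ y ∈ B, Y n x ≠ Y n y := by
  obtain ⟨δ, hδ, hsep⟩ := Metric.exists_pos_forall_lt_edist hA hB hAB
  filter_upwards [hr.eventually (gt_mem_nhds (NNReal.coe_pos.mpr hδ))] with n hn x hx y hy hxy
  have hlt := hsep x hx y hy
  rw [edist_nndist, ENNReal.coe_lt_coe, ← NNReal.coe_lt_coe, coe_nndist] at hlt
  exact absurd (hlt.trans_le (hY n x y hxy)) hn.not_gt

variable [MetricSpace Ω] [MeasurableSpace Ω] [BorelSpace Ω] {μ : Measure Ω}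

theorem exists_isCompact_family_subset_fibers [IsFiniteMeasure μ] [μ.InnerRegularCompactLTTop]
    {β : Type*} (X : SimpleFunc Ω β) {η : ℝ} (hη : 0 < η) :
    ∃ K : β → Set Ω, (∀ b, IsCompact (K b)) ∧ (∀ b, K b ⊆ X ⁻¹' {b}) ∧
      μ.real (⋃ b ∈ X.range, K b)ᶜ ≤ η := by
  have hpos : 0 < η / (X.range.card + 1) := by positivity
  have hreg (b) : ∃ K ⊆ X ⁻¹' {b}, IsCompact K ∧
      μ (X ⁻¹' {b} \ K) < ENNReal.ofReal (η / (X.range.card + 1)) :=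
    (X.measurableSet_fiber b).exists_isCompact_sdiff_lt (measure_ne_top _ _)
      (ENNReal.ofReal_pos.mpr hpos).ne'
  choose K hKsub hKcompact hKmeas using hreg
  refine ⟨K, hKcompact, hKsub, ?_⟩
  have hcompl : (⋃ b ∈ X.range, K b)ᶜ ⊆ ⋃ b ∈ X.range, X ⁻¹' {b} \ K b := by
    intro x hx
    simp only [Set.mem_compl_iff, Set.mem_iUnion, not_exists] at hx
    exact Set.mem_biUnion (X.mem_range_self x) ⟨rfl, hx _ (X.mem_range_self x)⟩
  calc μ.real (⋃ b ∈ X.range, K b)ᶜ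
      ≤ ∑ b ∈ X.range, μ.real (X ⁻¹' {b} \ K b) :=
        (measureReal_mono hcompl (measure_ne_top _ _)).trans (measureReal_biUnion_finset_le _ _)
    _ ≤ X.range.card * (η / (X.range.card + 1)) := by
        rw [← nsmul_eq_mul]
        exact Finset.sum_le_card_nsmul _ _ _ fun b _ =>
          ENNReal.toReal_le_of_le_ofReal hpos.le (hKmeas b).le
    _ ≤ η := by
        rw [mul_div_left_comm]
        exact mul_le_of_le_one_right hη.le (div_le_one_of_le₀ (by linarith) (by positivity))

theorem exists_condEntropy_le_of_dist_le [IsProbabilityMeasure μ] [μ.InnerRegularCompactLTTop]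
    {Y : ℕ → SimpleFunc Ω γ} {r : ℕ → ℝ} (hr : Tendsto r atTop (𝓝 0))
    (hY : ∀ n x y, Y n x = Y n y → dist x y ≤ r n) {β : Type*} (X : SimpleFunc Ω β) :
    ∃ n, condEntropy μ X (Y n) ≤ Real.log 2 + 1 := by
  have hpos : 0 < Real.log X.range.card + 1 := by linarith [Real.log_natCast_nonneg X.range.card]
  obtain ⟨K, hKcompact, hKsub, hKmeas⟩ := exists_isCompact_family_subset_fibers (μ := μ) X
    (one_div_pos.mpr hpos)
  have hsep : ∀ᶠ n in atTop, ∀ b ∈ X.range, ∀ c ∈ X.range, b ≠ c →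
      ∀ x ∈ K b, ∀ y ∈ K c, Y n x ≠ Y n y := by
    simp only [Filter.eventually_all_finset, Filter.eventually_imp_distrib_left]
    exact fun b _ c _ hbc => eventually_forall_ne_of_disjoint hr hY (hKcompact b)
      (hKcompact c).isClosed (Set.disjoint_of_subset (hKsub b) (hKsub c)
        (Disjoint.preimage _ (Set.disjoint_singleton.mpr hbc)))
  obtain ⟨n, hn⟩ := hsep.exists
  refine ⟨n, (condEntropy_le_of_determined_on (Q := ⋃ b ∈ X.range, K b)
    (Finset.measurableSet_biUnion _ fun b _ => (hKcompact b).measurableSet)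
    fun x hx y hy hxy => ?_).trans ?_⟩
  · obtain ⟨b, hb, hxb⟩ := Set.mem_iUnion₂.mp hx
    obtain ⟨c, hc, hyc⟩ := Set.mem_iUnion₂.mp hy
    rw [show X x = b from hKsub b hxb, show X y = c from hKsub c hyc]
    by_contra hbc
    exact hn b hb c hc hbc x hxb y hyc hxy
  · gcongr
    refine (mul_le_mul_of_nonneg_right hKmeas (Real.log_natCast_nonneg _)).trans ?_
    rw [one_div_mul_eq_div]
    exact div_le_one_of_le₀ (by linarith) hpos.le

variable {N : ℕ} {E : Matrix (Fin N) (Fin N) ℂ}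

theorem exists_dist_le_of_eigenGrid_eq (hE : E.det ≠ 0) :
    ∃ c, 0 ≤ c ∧ ∀ (n : ℕ) (x y : Fin N → UnitAddCircle),
      eigenGrid E (fun _ => n) x = eigenGrid E (fun _ => n) y → dist x y ≤ c * (2 / 2 ^ n) := by
  obtain ⟨c, hc, hcE⟩ := exists_norm_le_eigenCoord hE
  refine ⟨c, hc, fun n x y hxy => (dist_pi_le_iff (by positivity)).mpr fun j => ?_⟩
  have hcoord : ‖eigenCoord E (toralLift x - toralLift y)‖ ≤ 2 / 2 ^ n := by
    rw [map_sub]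
    exact (pi_norm_le_iff_of_nonneg (by positivity)).mpr (norm_eigenCoord_sub_le hxy)
  calc dist (x j) (y j) = ‖((toralLift x j - toralLift y j : ℝ) : UnitAddCircle)‖ := by
        rw [dist_eq_norm, AddCircle.coe_sub, coe_toralLift, coe_toralLift]
    _ ≤ ‖toralLift x j - toralLift y j‖ := QuotientAddGroup.norm_mk_le_norm
    _ ≤ ‖toralLift x - toralLift y‖ := norm_le_pi_norm (toralLift x - toralLift y) j
    _ ≤ c * (2 / 2 ^ n) := (hcE _).trans (by gcongr)

theorem exists_condEntropy_eigenGrid_le (hE : E.det ≠ 0)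
    (μ : Measure (Fin N → UnitAddCircle)) [IsProbabilityMeasure μ] {β : Type*}
    (X : SimpleFunc (Fin N → UnitAddCircle) β) :
    ∃ m : ℕ, condEntropy μ X (eigenGrid E fun _ => m) ≤ Real.log 2 + 1 := by
  obtain ⟨c, -, hc⟩ := exists_dist_le_of_eigenGrid_eq hE
  have hlim : Tendsto (fun n : ℕ => c * (2 / 2 ^ n)) atTop (𝓝 0) := by
    have hpow := tendsto_pow_atTop_atTop_of_one_lt (one_lt_two (α := ℝ))
    simpa using (hpow.const_div_atTop 2).const_mul c
  exact exists_condEntropy_le_of_dist_le hlim hc X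

end Approximation

section ZeroEntropy

open Filter Topology

section

variable {Ω β γ : Type*} [MeasurableSpace Ω] {μ : Measure Ω} [IsProbabilityMeasure μ] {T : Ω → Ω}

theorem entropy_itinerary_le_add (hT : MeasurePreserving T μ μ) (X : SimpleFunc Ω β)
    (Y : SimpleFunc Ω γ) (n : ℕ) :
    entropy μ (itinerary hT.measurable X n) ≤
      entropy μ (itinerary hT.measurable Y n) + n * condEntropy μ X Y := by
  refine (entropy_le_add_condEntropy _ _).trans (add_le_add le_rfl ?_)
  refine (condEntropy_tuple_tuple_le _ _).trans_eq ?_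
  simp only [condEntropy_comp_measurePreserving (hT.iterate _), Finset.sum_const,
    Finset.card_univ, Fintype.card_fin, nsmul_eq_mul]

theorem itinerary_mul (hT : Measurable T) (X : SimpleFunc Ω β) (n L : ℕ) :
    itinerary hT X (n * L) =
      (itinerary (hT.iterate L) (itinerary hT X L) n).map fun f i => f i.divNat i.modNat := by
  ext x i
  change X (T^[i] x) = X (T^[i.modNat] ((T^[L])^[i.divNat] x))
  rw [← Function.iterate_mul, ← Function.iterate_add_apply, Fin.coe_modNat, Fin.coe_divNat,
    Nat.mod_add_div]

/-- In terms of the Kolmogorov–Sinai entropy `h`: `h(T) = h(T ^ L) / L ≤ c / L` for every `L`. -/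
theorem ksEntropy_eq_zero_of_iterate_entropy_le (hT : Measurable T) {c : ℝ}
    (hc : ∀ (L : ℕ) {β : Type} (X : SimpleFunc Ω β), ∃ n : ℕ, 0 < n ∧
      entropy μ (itinerary (hT.iterate L) X n) ≤ c * n) : ksEntropy T μ = 0 := by
  refine ksEntropy_eq_zero_of_entropy_itinerary_le hT fun m X ε hε => ?_
  obtain ⟨L, hL⟩ := exists_nat_ge (c / ε)
  obtain ⟨n, hn, hle⟩ := hc (L + 1) (itinerary hT X (L + 1))
  refine ⟨n * (L + 1), by positivity, ?_⟩
  rw [itinerary_mul]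
  calc _ ≤ c * n := (entropy_map_le _ _).trans hle
    _ ≤ ε * (L + 1 : ℕ) * n := by
      gcongr
      push_cast
      linarith [(div_le_iff₀' hε).mp hL]
    _ = ε * (n * (L + 1) : ℕ) := by
      push_cast
      ring

end

theorem exists_forall_add_smul_ne_zero {d : ℕ} (hd : 1 < d) (u : Fin d → ℝ) :
    ∃ t, ∀ s : ℝ, t + s • u ≠ 0 := by
  by_contra! hline
  have hrank : Module.finrank ℝ (Fin d → ℝ) ≤ 1 := finrank_le_one u fun w => by
    obtain ⟨s, hs⟩ := hline w
    exact ⟨-s, by rw [neg_smul, eq_neg_of_add_eq_zero_left hs]⟩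
  rw [Module.finrank_fin_fun] at hrank
  omega

variable {d N : ℕ} {α : AddChar (Fin d → ℤ) (Matrix (Fin N) (Fin N) ℤ)}
  {E : Matrix (Fin N) (Fin N) ℂ} {χ : Fin N → AddChar (Fin d → ℤ) ℂ}
  {μ : Measure (Fin N → UnitAddCircle)} [IsProbabilityMeasure μ]

theorem norm_char_nsmul_mul_two_pow_le (χ : Fin N → AddChar (Fin d → ℤ) ℂ) (v : Fin d → ℤ)
    (m : ℕ) {j n : ℕ} (hjn : j ≤ n) (i : Fin N) :
    ‖χ i (j • v)‖ * 2 ^ m ≤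
      2 ^ ⌈(lyapunov χ ((n : ℝ) • ((↑) ∘ v)) ⊔ 0 + Function.const (Fin N) (m : ℝ)) i⌉₊ := by
  have hjl : j * lyapunov χ ((↑) ∘ v) i ≤ (lyapunov χ ((n : ℝ) • ((↑) ∘ v)) ⊔ 0) i := by
    rw [map_smul, Pi.sup_apply, Pi.smul_apply, smul_eq_mul]
    rcases le_total 0 (lyapunov χ ((↑) ∘ v) i) with hl | hl
    · exact le_sup_of_le_left (by gcongr)
    · exact le_sup_of_le_right (mul_nonpos_of_nonneg_of_nonpos j.cast_nonneg hl)
  rw [AddChar.map_nsmul_eq_pow, norm_pow, norm_char_eq_two_rpow, ← Real.rpow_natCast,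
    ← Real.rpow_mul two_pos.le, ← Real.rpow_natCast, ← Real.rpow_natCast, ← Real.rpow_add two_pos]
  refine Real.rpow_le_rpow_of_exponent_le one_le_two (le_trans ?_ (Nat.le_ceil _))
  rw [Pi.add_apply, Function.const_apply, mul_comm]
  gcongr

theorem IsEigenbasis.exists_entropy_itinerary_eigenGrid_le (h : IsEigenbasis α E χ)
    (μ : Measure (Fin N → UnitAddCircle)) [IsProbabilityMeasure μ] :
    ∃ C, ∀ (v : Fin d → ℤ) (m n : ℕ),
      entropy μ (itinerary (continuous_toralMap (α v)).measurable (eigenGrid E fun _ => m) n) ≤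
        gridEntropy μ E (lyapunov χ ((n : ℝ) • ((↑) ∘ v)) ⊔ 0 + Function.const _ (m : ℝ)) +
          n * C := by
  obtain ⟨C, hC⟩ := h.exists_condEntropy_comp_toralMap_le μ 0
  refine ⟨C, fun v m n => (entropy_le_add_condEntropy _ _).trans (add_le_add le_rfl ?_)⟩
  refine (condEntropy_tuple_le _ _).trans
    ((Finset.sum_le_card_nsmul _ _ C fun j _ => ?_).trans_eq (by simp))
  have hj := hC ((j : ℕ) • v) (fun _ => m) _ fun i =>
    (norm_char_nsmul_mul_two_pow_le χ v m j.2.le i).trans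
      (le_mul_of_one_le_left (by positivity) (pow_zero _).ge)
  simpa only [toralMap_addChar_nsmul] using hj

theorem IsEigenbasis.exists_entropy_itinerary_le (h : IsEigenbasis α E χ) (hd : 1 < d)
    (hμ : ∀ v, MeasurePreserving (toralMap (α v)) μ μ) {C : ℝ}
    (hG : IsScaleEntropy (lyapunov χ) (gridEntropy μ E) C) :
    ∃ c, ∀ (v : Fin d → ℤ) {β : Type} (X : SimpleFunc (Fin N → UnitAddCircle) β),
      ∃ n : ℕ, 0 < n ∧
        entropy μ (itinerary (continuous_toralMap (α v)).measurable X n) ≤ c * n := by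
  obtain ⟨C₀, hC₀⟩ := h.exists_entropy_itinerary_eigenGrid_le μ
  refine ⟨1 + C₀ + (Real.log 2 + 1), fun v β X => ?_⟩
  obtain ⟨m, hm⟩ := exists_condEntropy_eigenGrid_le h.det_ne_zero μ X
  obtain ⟨t, ht⟩ := exists_forall_add_smul_ne_zero hd ((↑) ∘ v)
  have hlim := (hG.tendsto_growthRate ((↑) ∘ v)).add
    (tendsto_const_div_atTop_nhds_zero_nat (C * (m + 1)))
  rw [hG.growthRate_eq_zero ht, add_zero] at hlim
  obtain ⟨n, hn, hn0⟩ := ((hlim.eventually_le_const zero_lt_one).and (eventually_gt_atTop 0)).exists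
  rw [← add_div, div_le_one (by exact_mod_cast hn0)] at hn
  have hgrid := hG.add_const_le (lyapunov χ ((n : ℝ) • ((↑) ∘ v)) ⊔ 0) m m.cast_nonneg
  rw [hG.sup_zero] at hgrid
  refine ⟨n, hn0, ?_⟩
  calc entropy μ (itinerary _ X n)
      ≤ entropy μ (itinerary (hμ v).measurable (eigenGrid E fun _ => m) n) +
          n * (Real.log 2 + 1) :=
        (entropy_itinerary_le_add (hμ v) X _ n).trans (by gcongr)
    _ ≤ n + n * C₀ + n * (Real.log 2 + 1) := by
        gcongr
        exact (hC₀ v m n).trans (by gcongr; exact hgrid.trans hn)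
    _ = (1 + C₀ + (Real.log 2 + 1)) * n := by ring

theorem IsEigenbasis.ksEntropy_toralMap_eq_zero (h : IsEigenbasis α E χ) (hd : 1 < d)
    (hμ : ∀ v, MeasurePreserving (toralMap (α v)) μ μ) {C : ℝ}
    (hG : IsScaleEntropy (lyapunov χ) (gridEntropy μ E) C) (v : Fin d → ℤ) :
    ksEntropy (toralMap (α v)) μ = 0 := by
  obtain ⟨c, hc⟩ := h.exists_entropy_itinerary_le hd hμ hG
  refine ksEntropy_eq_zero_of_iterate_entropy_le (continuous_toralMap (α v)).measurable
    (c := c) fun L β X => ?_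
  simpa only [toralMap_addChar_nsmul] using hc (L • v) X

end ZeroEntropy

section FourierUniqueness

open UnitAddTorus

variable {ι : Type*} [Fintype ι]

theorem integral_eq_of_mem_span_mFourier {μ ν : Measure (UnitAddTorus ι)} [IsFiniteMeasure μ]
    [IsFiniteMeasure ν] (h : ∀ ξ, ∫ x, mFourier ξ x ∂μ = ∫ x, mFourier ξ x ∂ν)
    {f : C(UnitAddTorus ι, ℂ)} (hf : f ∈ Submodule.span ℂ (Set.range mFourier)) :
    ∫ x, f x ∂μ = ∫ x, f x ∂ν := by
  have hint (ρ : Measure (UnitAddTorus ι)) [IsFiniteMeasure ρ] (f : C(UnitAddTorus ι, ℂ)) :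
      Integrable f ρ :=
    f.continuous.integrable_of_hasCompactSupport (HasCompactSupport.of_compactSpace _)
  induction hf using Submodule.span_induction with
  | mem f hf =>
    obtain ⟨ξ, rfl⟩ := hf
    exact h ξ
  | zero => simp
  | add f g _ _ hf hg =>
    simp only [ContinuousMap.add_apply]
    rw [integral_add (hint μ f) (hint μ g), integral_add (hint ν f) (hint ν g), hf, hg]
  | smul a f _ hf =>
    simp only [ContinuousMap.smul_apply, integral_smul, hf]

theorem measure_eq_of_integral_mFourier_eq {μ ν : Measure (UnitAddTorus ι)} [IsFiniteMeasure μ]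
    [IsFiniteMeasure ν] (h : ∀ ξ, ∫ x, mFourier ξ x ∂μ = ∫ x, mFourier ξ x ∂ν) : μ = ν := by
  let A : StarSubalgebra ℂ (BoundedContinuousFunction (UnitAddTorus ι) ℂ) :=
    (mFourierSubalgebra ι).comap (BoundedContinuousFunction.toContinuousMapStarₐ ℂ)
  refine ext_of_forall_mem_subalgebra_integral_eq_of_polish (𝕜 := ℂ) (A := A) ?_ fun g hg => ?_
  · intro x y hxy
    obtain ⟨f, ⟨g, hg, rfl⟩, hf⟩ := mFourierSubalgebra_separatesPoints hxy
    exact ⟨g, ⟨g, ⟨BoundedContinuousFunction.mkOfCompact g, hg, rfl⟩, rfl⟩, hf⟩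
  · refine integral_eq_of_mem_span_mFourier h (f := g.toContinuousMap) ?_
    rw [← mFourierSubalgebra_coe]
    exact hg

theorem volume_eq_pi_haarAddCircle :
    (volume : Measure (UnitAddTorus ι)) = Measure.pi fun _ => AddCircle.haarAddCircle := by
  simp only [volume_pi, AddCircle.volume_eq_smul_haarAddCircle, ENNReal.ofReal_one, one_smul]

theorem integral_mFourier_volume {ξ : ι → ℤ} (hξ : ξ ≠ 0) :
    ∫ x : UnitAddTorus ι, mFourier ξ x = 0 := by
  have horth := (orthonormal_mFourier (d := ι)).2 hξ.symm
  simp only [ContinuousMap.inner_toLp, mFourier_zero, ContinuousMap.one_apply, map_one,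
    mul_one] at horth
  rwa [volume_eq_pi_haarAddCircle]

theorem eq_volume_of_integral_mFourier_eq_zero {μ : Measure (UnitAddTorus ι)}
    [IsProbabilityMeasure μ] (h : ∀ ξ, ξ ≠ 0 → ∫ x, mFourier ξ x ∂μ = 0) : μ = volume := by
  have hvol : IsProbabilityMeasure (volume : Measure (UnitAddTorus ι)) := by
    rw [volume_eq_pi_haarAddCircle]
    infer_instance
  refine measure_eq_of_integral_mFourier_eq fun ξ => ?_
  rcases eq_or_ne ξ 0 with rfl | hξ
  · simp [mFourier_zero]
  · rw [h ξ hξ, integral_mFourier_volume hξ]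

end FourierUniqueness

/-- Einsiedler–Lindenstrauss: Let `d > 1` and let `α` be a faithful,
strongly irreducible `ℤ^d`-action by automorphisms of `𝕋^N`.  Let `μ` be an
`α`-invariant and `α`-ergodic Borel probability measure on `𝕋^N` with
`h_μ(α_𝐧) > 0` for some `𝐧 ∈ ℤ^d`.  Then `μ` is Lebesgue measure on `𝕋^N`. -/
theorem einsiedler_lindenstrauss_strongly_irreducible_positive_entropy
    (d N : ℕ) (hd : 1 < d)
    (α : (Fin d → ℤ) → Matrix (Fin N) (Fin N) ℤ)
    (hα0 : α 0 = 1)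
    (hαadd : ∀ v w, α (v + w) = α v * α w)
    (hfaithful : ∀ v : Fin d → ℤ, v ≠ 0 → α v ≠ 1)
    (hstrirr : ∀ Λ : AddSubgroup (Fin d → ℤ), Λ.FiniteIndex → IsIrreducibleOn α Λ)
    (μ : Measure (Fin N → UnitAddCircle)) [IsProbabilityMeasure μ]
    (hinv : ∀ v, Measure.map (toralMap (α v)) μ = μ)
    (herg : ∀ A : Set (Fin N → UnitAddCircle), MeasurableSet A →
      (∀ v, toralMap (α v) ⁻¹' A = A) → μ A = 0 ∨ μ A = 1)
    (hent : ∃ v, 0 < ksEntropy (toralMap (α v)) μ) :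
    μ = volume := by
  let ρ : AddChar (Fin d → ℤ) (Matrix (Fin N) (Fin N) ℤ) := ⟨α, hα0, hαadd⟩
  have hμ (v) : MeasurePreserving (toralMap (ρ v)) μ μ :=
    ⟨(continuous_toralMap _).measurable, hinv v⟩
  obtain ⟨E, χ, hE⟩ := exists_isEigenbasis (α := ρ) hfaithful hstrirr
  refine eq_volume_of_integral_mFourier_eq_zero fun ξ hξ => ?_
  by_contra hcoeff
  obtain ⟨C, hG⟩ := hE.exists_isScaleEntropy_gridEntropy μ hμ fun w u hw ε hε κ₀ =>
    hE.exists_gridEntropy_add_indicator_le hμ herg hξ hcoeff u hw hε κ₀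
  obtain ⟨v, hv⟩ := hent
  exact hv.ne' (hE.ksEntropy_toralMap_eq_zero hd hμ hG v)
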